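/- Let ε > 0 be fixed and let k ≥ 2 be an even integer; set Θ_k := 2 − 1/(5k−2). There exist constants C = C(ε,k) > 0 and B = B(ε,k) > 0 such that the following holds. Let d ≥ 2 be an integer, let N ≥ 2 be real, and let N_1, …, N_40 ≥ 1/2 be reals with N_1 ⋯ N_40 ≤ N^{Θ_k−ε}. For each j = 1, …, 40, let a_j : ℕ → ℂ be one of the three functions n ↦ 1, n ↦ μ(n), or n ↦ log n, and assume that a_j is n ↦ 1 or n ↦ log n for every j with N_j > N^{1/10}. Then ∫_{−∞}^{∞} Σ*_{χ mod d} |Π_{j=1}^{40} Σ_{N_j < n ≤ 2N_j} a_j(n) χ(n) n^{−1/2−it}| dt/(t²+1) ≤ C · ((N+d)^k N^{1−(k−1)Θ_k/2}/d) · (log(dN))^B. -/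

import Mathlib

open MeasureTheory Real Complex Finset

/-- The sum of `f` over all primitive Dirichlet characters modulo `d`
(a finite sum, since there are finitely many Dirichlet characters modulo `d`). -/
noncomputable def sumPrimitive (d : ℕ) (f : DirichletCharacter ℂ d → ℝ) : ℝ :=
  ∑ᶠ χ ∈ {χ : DirichletCharacter ℂ d | χ.IsPrimitive}, f χ

/-- Orthogonality (large sieve for a fixed modulus). -/
lemma ls_bound {ι : Type*} (d : ℕ) [NeZero d] (S : Finset ι) (w : ι → ℂ) (f : ι → ℕ) :
    ∑ χ : DirichletCharacter ℂ d, ‖∑ i ∈ S, w i * χ (f i : ZMod d)‖ ^ 2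
      ≤ d * ∑ r : ZMod d, (∑ i ∈ S with ((f i : ZMod d) = r), ‖w i‖) ^ 2 := by
  classical
  set W : ZMod d → ℂ := fun r => ∑ i ∈ S with ((f i : ZMod d) = r), w i with hW
  have h1 : ∀ χ : DirichletCharacter ℂ d,
      ∑ i ∈ S, w i * χ (f i : ZMod d) = ∑ r : ZMod d, W r * χ r := by
    intro χ
    rw [← Finset.sum_fiberwise S (fun i => (f i : ZMod d))]
    refine Finset.sum_congr rfl fun r _ => ?_
    rw [hW]
    simp only
    rw [Finset.sum_mul]
    refine Finset.sum_congr rfl fun i hi => ?_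
    rw [(Finset.mem_filter.mp hi).2]
  have h2 : ∑ χ : DirichletCharacter ℂ d, ((‖∑ i ∈ S, w i * χ (f i : ZMod d)‖ ^ 2 : ℝ) : ℂ)
      = ∑ r : ZMod d, if IsUnit r then (d.totient : ℂ) * ((‖W r‖ ^ 2 : ℝ) : ℂ) else 0 := by
    have : ∀ χ : DirichletCharacter ℂ d, ((‖∑ i ∈ S, w i * χ (f i : ZMod d)‖ ^ 2 : ℝ) : ℂ)
      = ∑ a : ZMod d, ∑ b : ZMod d, (starRingEnd ℂ (W a) * W b) * (if IsUnit a then χ a⁻¹ * χ b else 0) := by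
      intro χ
      rw [h1]
      push_cast
      rw [← Complex.conj_mul', map_sum, Finset.sum_mul_sum]
      refine Finset.sum_congr rfl fun a _ => Finset.sum_congr rfl fun b _ => ?_
      split_ifs with ha
      · have : starRingEnd ℂ (χ a) = χ a⁻¹ := by
          have h3 := MulChar.star_apply' χ a
          rw [← starRingEnd_apply, MulChar.inv_apply_eq_inv'] at h3
          rw [h3]
          apply inv_eq_of_mul_eq_one_right
          rw [← map_mul, ZMod.mul_inv_of_unit a ha, map_one]
        rw [map_mul, this]; ring
      · rw [map_mul, MulChar.map_nonunit χ ha]; simp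
    simp_rw [this]
    rw [Finset.sum_comm]
    refine Finset.sum_congr rfl fun a _ => ?_
    rw [Finset.sum_comm]
    split_ifs with ha
    · simp_rw [← Finset.mul_sum, DirichletCharacter.sum_char_inv_mul_char_eq ℂ ha]
      simp
      rw [← Complex.conj_mul']; ring
    · simp
  have h3 : ∑ χ : DirichletCharacter ℂ d, ‖∑ i ∈ S, w i * χ (f i : ZMod d)‖ ^ 2
      = ∑ r : ZMod d, if IsUnit r then (d.totient : ℝ) * (‖W r‖ ^ 2) else 0 := by
    have := h2
    apply Complex.ofReal_injective
    push_cast at this ⊢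
    rw [this]
    refine Finset.sum_congr rfl fun r _ => ?_
    split_ifs <;> push_cast <;> rfl
  rw [h3, Finset.mul_sum]
  refine Finset.sum_le_sum fun r _ => ?_
  have hn : ‖W r‖ ≤ ∑ i ∈ S with ((f i : ZMod d) = r), ‖w i‖ := norm_sum_le _ _
  split_ifs
  · gcongr
    exact Nat.totient_le d
  · positivity

/-- The divisor bound. -/
lemma divisor_bound (η : ℝ) (hη : 0 < η) :
    ∃ C : ℝ, 1 ≤ C ∧ ∀ n : ℕ, 1 ≤ n → ((n.divisors.card : ℕ) : ℝ) ≤ C * (n : ℝ) ^ η := by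
  set P0 : ℕ := ⌈(2 : ℝ) ^ (1 / η)⌉₊ with hP0
  set K : ℝ := max 1 (1 / (η * Real.log 2)) with hK
  have hK1 : 1 ≤ K := le_max_left _ _
  have hl2 : 0 < Real.log 2 := Real.log_pos (by norm_num)
  have hK2 : 1 ≤ K * (η * Real.log 2) := by
    have : 1 / (η * Real.log 2) ≤ K := le_max_right _ _
    have h0 : 0 < η * Real.log 2 := by positivity
    rwa [div_le_iff₀ h0] at this
  refine ⟨K ^ P0, one_le_pow₀ hK1, fun n hn => ?_⟩
  have hn0 : n ≠ 0 := by omega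
  rw [Nat.card_divisors hn0]
  push_cast
  have key : ∀ p ∈ n.primeFactors, ((n.factorization p : ℝ) + 1) ≤
      (if p < P0 then K else 1) * ((p : ℝ) ^ (n.factorization p)) ^ η := by
    intro p hp
    have hp' := Nat.prime_of_mem_primeFactors hp
    have hp2 : (2 : ℝ) ≤ p := by exact_mod_cast hp'.two_le
    set v := n.factorization p
    have e1 : ((p : ℝ) ^ v) ^ η = ((p : ℝ) ^ η) ^ v := by
      rw [← Real.rpow_natCast, ← Real.rpow_mul (by positivity), mul_comm, Real.rpow_mul (by positivity),
        Real.rpow_natCast]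
    rw [e1]
    split_ifs with h
    · have h2 : 1 + (v : ℝ) * (η * Real.log 2) ≤ ((p : ℝ) ^ η) ^ v := by
        calc 1 + (v : ℝ) * (η * Real.log 2) ≤ Real.exp ((v : ℝ) * (η * Real.log 2)) := by
              linarith [Real.add_one_le_exp ((v : ℝ) * (η * Real.log 2))]
          _ = ((2 : ℝ) ^ η) ^ v := by
              rw [Real.rpow_def_of_pos (by norm_num), ← Real.exp_nat_mul]; ring_nf
          _ ≤ _ := by gcongr
      have hv : (0 : ℝ) ≤ v := Nat.cast_nonneg _
      calc (v : ℝ) + 1 ≤ K * (1 + (v : ℝ) * (η * Real.log 2)) := by nlinarith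
        _ ≤ _ := by gcongr
    · rw [one_mul]
      push Not at h
      have h3 : (2 : ℝ) ≤ (p : ℝ) ^ η := by
        have : (2 : ℝ) ^ (1 / η) ≤ p := (Nat.le_ceil _).trans (by exact_mod_cast h)
        calc (2 : ℝ) = ((2 : ℝ) ^ (1 / η)) ^ η := by
              rw [← Real.rpow_mul (by norm_num)]; field_simp; simp
          _ ≤ _ := by gcongr
      have h4 : (v : ℝ) + 1 ≤ 2 ^ v := by exact_mod_cast (Nat.lt_two_pow_self (n := v))
      exact h4.trans (by gcongr)
  calc ∏ p ∈ n.primeFactors, ((n.factorization p : ℝ) + 1)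
      ≤ ∏ p ∈ n.primeFactors, (if p < P0 then K else 1) * ((p : ℝ) ^ (n.factorization p)) ^ η :=
        Finset.prod_le_prod (fun _ _ => by positivity) key
    _ = (∏ p ∈ n.primeFactors, (if p < P0 then K else 1)) * (n : ℝ) ^ η := by
        rw [Finset.prod_mul_distrib]
        congr 1
        rw [Real.finset_prod_rpow _ _ (fun _ _ => by positivity)]
        congr 1
        conv_rhs => rw [← Nat.factorization_prod_pow_eq_self hn0]
        rw [Finsupp.prod]
        push_cast
        rfl
    _ ≤ _ := by
        gcongr
        rw [Finset.prod_ite]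
        simp only [Finset.prod_const, one_pow, mul_one]
        apply pow_le_pow_right₀ hK1
        calc _ ≤ (Finset.range P0).card := Finset.card_le_card (by
              intro p hp; simp at hp ⊢; exact hp.2)
          _ = P0 := by simp

lemma integrable_lorentz : Integrable (fun t : ℝ => ((t ^ 2 + 1 / 4 : ℝ))⁻¹) := by
  refine (integrable_inv_one_add_sq.const_mul 4).mono' ?_ ?_
  · exact (Measurable.aestronglyMeasurable (by fun_prop))
  · refine Filter.Eventually.of_forall fun t => ?_
    rw [Real.norm_of_nonneg (by positivity), ← one_div, ← one_div, mul_one_div]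
    rw [div_le_div_iff₀ (by positivity) (by positivity)]
    nlinarith [sq_nonneg t]

open FourierTransform in
lemma lorentz_fourier (y : ℝ) :
    ∫ t : ℝ, Complex.exp (Complex.I * t * y) * (((t ^ 2 + 1 / 4 : ℝ))⁻¹ : ℝ)
      = 2 * π * Real.exp (-|y| / 2) := by
  set f : ℝ → ℂ := fun x => (Real.exp (-π * |x|) : ℂ) with hf
  have hfc : Continuous f := by fun_prop
  have e1 : ∀ ξ : ℝ, Set.EqOn (fun x : ℝ => Complex.exp (↑(-2 * π * x * ξ) * Complex.I) • f x)
      (fun x : ℝ => Complex.exp ((-π - 2 * π * ξ * Complex.I) * x)) (Set.Ioi 0) := by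
    intro ξ x hx
    simp only [hf, smul_eq_mul]
    rw [abs_of_pos hx]
    push_cast
    rw [← Complex.exp_add]
    congr 1; ring
  have e2 : ∀ ξ : ℝ, Set.EqOn (fun x : ℝ => Complex.exp (↑(-2 * π * x * ξ) * Complex.I) • f x)
      (fun x : ℝ => Complex.exp ((π - 2 * π * ξ * Complex.I) * x)) (Set.Iic 0) := by
    intro ξ x hx
    simp only [hf, smul_eq_mul]
    rw [abs_of_nonpos hx]
    push_cast
    rw [← Complex.exp_add]
    congr 1; ring
  have r1 : ∀ ξ : ℝ, (-π - 2 * π * ξ * Complex.I : ℂ).re < 0 := by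
    intro ξ; simp; exact Real.pi_pos
  have r2 : ∀ ξ : ℝ, 0 < (π - 2 * π * ξ * Complex.I : ℂ).re := by
    intro ξ; simp; exact Real.pi_pos
  have i1 : ∀ ξ : ℝ, IntegrableOn (fun x : ℝ => Complex.exp (↑(-2 * π * x * ξ) * Complex.I) • f x) (Set.Ioi 0) :=
    fun ξ => (integrableOn_exp_mul_complex_Ioi (r1 ξ) 0).congr_fun (e1 ξ).symm measurableSet_Ioi
  have i2 : ∀ ξ : ℝ, IntegrableOn (fun x : ℝ => Complex.exp (↑(-2 * π * x * ξ) * Complex.I) • f x) (Set.Iic 0) :=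
    fun ξ => (integrableOn_exp_mul_complex_Iic (r2 ξ) 0).congr_fun (e2 ξ).symm measurableSet_Iic
  have hfi : Integrable f := by
    have := (i2 0).union (i1 0)
    rw [Set.Iic_union_Ioi, integrableOn_univ] at this
    simpa using this
  have hF : ∀ ξ : ℝ, 𝓕 f ξ = ((2 * π)⁻¹ * ((ξ ^ 2 + 1 / 4 : ℝ))⁻¹ : ℝ) := by
    intro ξ
    rw [fourier_real_eq_integral_exp_smul, ← intervalIntegral.integral_Iic_add_Ioi (i2 ξ) (i1 ξ),
      setIntegral_congr_fun measurableSet_Iic (e2 ξ), setIntegral_congr_fun measurableSet_Ioi (e1 ξ),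
      integral_exp_mul_complex_Iic (r2 ξ), integral_exp_mul_complex_Ioi (r1 ξ)]
    have h1 : (π - 2 * π * ξ * Complex.I : ℂ) ≠ 0 := fun h => by
      have := r2 ξ; rw [h] at this; simp at this
    have h2 : (-π - 2 * π * ξ * Complex.I : ℂ) ≠ 0 := fun h => by
      have := r1 ξ; rw [h] at this; simp at this
    have h3 : ((ξ : ℂ) ^ 2 + 1 / 4) ≠ 0 := by
      have : (0 : ℝ) < ξ ^ 2 + 1 / 4 := by positivity
      rw [show ((ξ : ℂ) ^ 2 + 1 / 4) = ((ξ ^ 2 + 1 / 4 : ℝ) : ℂ) by push_cast; rfl]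
      exact Complex.ofReal_ne_zero.mpr this.ne'
    have h4 : (π : ℂ) ≠ 0 := by exact_mod_cast Real.pi_ne_zero
    push_cast
    simp only [mul_zero, Complex.exp_zero]
    have h5 : (1 : ℂ) / (π - 2 * π * ξ * Complex.I) + -1 / (-π - 2 * π * ξ * Complex.I)
      = (-2 * π) / ((π - 2 * π * ξ * Complex.I) * (-π - 2 * π * ξ * Complex.I)) := by
      rw [div_add_div _ _ h1 h2]; congr 1; ring
    have h6 : ((π - 2 * π * ξ * Complex.I) * (-π - 2 * π * ξ * Complex.I) : ℂ)
      = - 4 * π ^ 2 * (ξ ^ 2 + 1 / 4) := by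
      ring_nf; rw [Complex.I_sq]; ring
    rw [h5, h6]
    field_simp
    norm_num
  have hFi : Integrable (𝓕 f) := by
    have : 𝓕 f = fun ξ : ℝ => (((2 * π)⁻¹ * ((ξ ^ 2 + 1 / 4 : ℝ))⁻¹ : ℝ) : ℂ) := funext hF
    rw [this]
    exact (integrable_lorentz.const_mul _).ofReal
  have inv := congrFun (hfc.fourierInv_fourier_eq hfi hFi) (y / (2 * π))
  rw [fourierInv_eq'] at inv
  simp only [hF] at inv
  simp only [hf] at inv
  have hpi := Real.pi_pos
  have e3 : -π * |y / (2 * π)| = -|y| / 2 := by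
    rw [abs_div, abs_of_pos (by positivity : 0 < 2 * π)]; field_simp
  rw [e3] at inv
  rw [← inv, ← integral_const_mul]
  refine integral_congr_ae (Filter.Eventually.of_forall fun t => ?_)
  simp only [smul_eq_mul]
  have h4 : (π : ℂ) ≠ 0 := by exact_mod_cast Real.pi_ne_zero
  have e4 : (↑(2 * π * (inner ℝ t (y / (2 * π)) : ℝ)) * Complex.I : ℂ) = Complex.I * t * y := by
    simp only [inner, conj_trivial]
    push_cast
    simp
    field_simp
  rw [e4]
  push_cast
  field_simp

lemma lorentz_pair (m n : ℕ) (hm : 1 ≤ m) (hn : 1 ≤ n) :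
    ∫ t : ℝ, ((m : ℂ) ^ (-(1 / 2 : ℂ) - Complex.I * t)) * (starRingEnd ℂ) ((n : ℂ) ^ (-(1 / 2 : ℂ) - Complex.I * t))
      * (((t ^ 2 + 1 / 4 : ℝ))⁻¹ : ℝ)
      = 2 * π * ((1 / (max m n : ℕ) : ℝ) : ℂ) := by
  have hm0 : (0 : ℝ) < m := by exact_mod_cast hm
  have hn0 : (0 : ℝ) < n := by exact_mod_cast hn
  have cp : ∀ (k : ℕ), 0 < (k : ℝ) → ∀ t : ℝ, (k : ℂ) ^ (-(1 / 2 : ℂ) - Complex.I * t)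
      = Real.exp (- Real.log k / 2) * Complex.exp (-Complex.I * t * Real.log k) := by
    intro k hk t
    rw [Complex.cpow_def_of_ne_zero (by exact_mod_cast hk.ne')]
    push_cast
    rw [← Complex.exp_add]
    congr 1; ring
  have e : ∀ t : ℝ, ((m : ℂ) ^ (-(1 / 2 : ℂ) - Complex.I * t)) * (starRingEnd ℂ) ((n : ℂ) ^ (-(1 / 2 : ℂ) - Complex.I * t))
      * (((t ^ 2 + 1 / 4 : ℝ))⁻¹ : ℝ)
      = ((Real.exp (- Real.log m / 2) * Real.exp (- Real.log n / 2) : ℝ) : ℂ) *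
        (Complex.exp (Complex.I * t * (Real.log n - Real.log m : ℝ)) * (((t ^ 2 + 1 / 4 : ℝ))⁻¹ : ℝ)) := by
    intro t
    rw [cp m hm0, cp n hn0, map_mul, ← Complex.exp_conj, Complex.conj_ofReal]
    simp only [map_mul, map_neg, Complex.conj_I, Complex.conj_ofReal]
    have : Complex.exp (Complex.I * t * (Real.log n - Real.log m : ℝ)) =
      Complex.exp (-Complex.I * t * Real.log m) * Complex.exp (- -Complex.I * t * Real.log n) := by
      rw [← Complex.exp_add]; congr 1; push_cast; ring
    rw [this]; push_cast; ring
  simp_rw [e]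
  rw [integral_const_mul, lorentz_fourier]
  have key : Real.exp (- Real.log m / 2) * Real.exp (- Real.log n / 2) * Real.exp (-|Real.log n - Real.log m| / 2)
      = 1 / ((max m n : ℕ) : ℝ) := by
    rw [← Real.exp_add, ← Real.exp_add]
    rcases le_total m n with h | h
    · have hl : Real.log m ≤ Real.log n := Real.log_le_log hm0 (by exact_mod_cast h)
      rw [abs_of_nonneg (by linarith), max_eq_right h]
      rw [show -Real.log m / 2 + -Real.log n / 2 + -(Real.log n - Real.log m) / 2 = - Real.log n by ring,
        Real.exp_neg, Real.exp_log hn0, one_div]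
    · have hl : Real.log n ≤ Real.log m := Real.log_le_log hn0 (by exact_mod_cast h)
      rw [abs_of_nonpos (by linarith), max_eq_left h]
      rw [show -Real.log m / 2 + -Real.log n / 2 + -(-(Real.log n - Real.log m)) / 2 = - Real.log m by ring,
        Real.exp_neg, Real.exp_log hm0, one_div]
  rw [← key]
  push_cast
  ring

/-- Generic Dirichlet polynomial on the half line, with an arbitrary index set. -/
noncomputable def genDP {ι : Type*} (S : Finset ι) (w : ι → ℂ) (f : ι → ℕ) (t : ℝ) : ℂ :=
  ∑ i ∈ S, w i * (f i : ℂ) ^ (-(1 / 2 : ℂ) - Complex.I * t)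

lemma inv_max_telescope (M K : ℕ) (hM : 1 ≤ M) (hK : M ≤ K) :
    ∑ k ∈ Finset.Ico 1 K, (if M ≤ k then (1 : ℝ) / (k * (k + 1)) else 0) + 1 / K = 1 / M := by
  induction K, hK using Nat.le_induction with
  | base =>
    rw [Finset.sum_eq_zero]
    · simp
    · intro k hk
      rw [if_neg]
      have := (Finset.mem_Ico.mp hk).2
      omega
  | succ n hn ih =>
    rw [Finset.sum_Ico_succ_top (by omega), if_pos hn, ← ih]
    have : (0 : ℝ) < n := by exact_mod_cast (by omega : 0 < n)
    push_cast
    field_simp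
    ring

lemma continuous_cpow_half (n : ℕ) (hn : 1 ≤ n) :
    Continuous (fun t : ℝ => (n : ℂ) ^ (-(1 / 2 : ℂ) - Complex.I * t)) := by
  have : (n : ℂ) ≠ 0 := by exact_mod_cast (by omega : n ≠ 0)
  refine Continuous.const_cpow (by fun_prop) (Or.inl this)

lemma norm_cpow_half_le (n : ℕ) (hn : 1 ≤ n) (t : ℝ) :
    ‖(n : ℂ) ^ (-(1 / 2 : ℂ) - Complex.I * t)‖ ≤ 1 := by
  rw [Complex.norm_natCast_cpow_of_pos (by omega)]
  apply Real.rpow_le_one_of_one_le_of_nonpos (by exact_mod_cast hn)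
  simp

lemma genDP_continuous {ι : Type*} (S : Finset ι) (w : ι → ℂ) (f : ι → ℕ)
    (hf : ∀ i ∈ S, 1 ≤ f i) : Continuous (genDP S w f) := by
  unfold genDP
  refine continuous_finsetSum _ fun i hi => ?_
  exact continuous_const.mul (continuous_cpow_half _ (hf i hi))

lemma genDP_sq_integrable {ι : Type*} (S : Finset ι) (w : ι → ℂ) (f : ι → ℕ)
    (hf : ∀ i ∈ S, 1 ≤ f i) :
    Integrable (fun t : ℝ => ‖genDP S w f t‖ ^ 2 * ((t ^ 2 + 1 / 4 : ℝ))⁻¹) := by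
  refine (integrable_lorentz.const_mul ((∑ i ∈ S, ‖w i‖) ^ 2)).mono' ?_ ?_
  · have := genDP_continuous S w f hf
    exact Measurable.aestronglyMeasurable (by fun_prop)
  · refine Filter.Eventually.of_forall fun t => ?_
    rw [Real.norm_of_nonneg (by positivity)]
    gcongr
    refine (norm_sum_le _ _).trans (Finset.sum_le_sum fun i hi => ?_)
    rw [norm_mul]
    exact mul_le_of_le_one_right (norm_nonneg _) (norm_cpow_half_le _ (hf i hi) t)

lemma genDP_sq_integral {ι : Type*} (S : Finset ι) (w : ι → ℂ) (f : ι → ℕ)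
    (hf : ∀ i ∈ S, 1 ≤ f i) (K : ℕ) (hK : ∀ i ∈ S, f i ≤ K) :
    ∫ t : ℝ, ‖genDP S w f t‖ ^ 2 * ((t ^ 2 + 1 / 4 : ℝ))⁻¹
      = 2 * π * (∑ k ∈ Finset.Ico 1 K, ‖∑ i ∈ S with f i ≤ k, w i‖ ^ 2 * (1 / (k * (k + 1)))
          + ‖∑ i ∈ S with f i ≤ K, w i‖ ^ 2 * (1 / K)) := by
  classical
  have sq : ∀ z : ℂ, ((‖z‖ ^ 2 : ℝ) : ℂ) = z * starRingEnd ℂ z := by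
    intro z; rw [Complex.mul_conj']; push_cast; rfl
  have hB : ∀ k : ℕ, ((‖∑ i ∈ S with f i ≤ k, w i‖ ^ 2 : ℝ) : ℂ)
      = ∑ i ∈ S, ∑ j ∈ S, w i * starRingEnd ℂ (w j) * (if max (f i) (f j) ≤ k then 1 else 0) := by
    intro k
    rw [sq, map_sum, Finset.sum_mul_sum, Finset.sum_filter]
    refine Finset.sum_congr rfl fun i _ => ?_
    split_ifs with h
    · rw [Finset.sum_filter]
      refine Finset.sum_congr rfl fun j _ => ?_
      simp [h]
    · rw [Finset.sum_eq_zero]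
      intro j _
      simp [h]
  apply Complex.ofReal_injective
  rw [← integral_complex_ofReal]
  have hI : ∀ i ∈ S, ∀ j ∈ S, Integrable (fun t : ℝ => w i * starRingEnd ℂ (w j) *
      (((f i : ℂ) ^ (-(1 / 2 : ℂ) - Complex.I * t)) * (starRingEnd ℂ) ((f j : ℂ) ^ (-(1 / 2 : ℂ) - Complex.I * t))
      * (((t ^ 2 + 1 / 4 : ℝ))⁻¹ : ℝ))) := by
    intro i hi j hj
    apply Integrable.const_mul
    refine integrable_lorentz.mono' ?_ ?_
    · have h1 := continuous_cpow_half _ (hf i hi)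
      have h2 := (continuous_cpow_half _ (hf j hj)).star
      exact Measurable.aestronglyMeasurable ((h1.mul h2).measurable.mul (by fun_prop))
    · refine Filter.Eventually.of_forall fun t => ?_
      rw [norm_mul, norm_mul, RCLike.norm_conj, Complex.norm_real, Real.norm_of_nonneg (by positivity)]
      have h1 := norm_cpow_half_le _ (hf i hi) t
      have h2 := norm_cpow_half_le _ (hf j hj) t
      refine mul_le_of_le_one_left (by positivity) ?_
      exact mul_le_one₀ h1 (norm_nonneg _) h2
  have e1 : ∀ t : ℝ, ((‖genDP S w f t‖ ^ 2 * ((t ^ 2 + 1 / 4 : ℝ))⁻¹ : ℝ) : ℂ)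
      = ∑ i ∈ S, ∑ j ∈ S, w i * starRingEnd ℂ (w j) *
      (((f i : ℂ) ^ (-(1 / 2 : ℂ) - Complex.I * t)) * (starRingEnd ℂ) ((f j : ℂ) ^ (-(1 / 2 : ℂ) - Complex.I * t))
      * (((t ^ 2 + 1 / 4 : ℝ))⁻¹ : ℝ)) := by
    intro t
    rw [Complex.ofReal_mul, sq, genDP, map_sum, Finset.sum_mul_sum, Finset.sum_mul]
    refine Finset.sum_congr rfl fun i _ => ?_
    rw [Finset.sum_mul]
    refine Finset.sum_congr rfl fun j _ => ?_
    rw [map_mul]; ring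
  refine (integral_congr_ae (Filter.Eventually.of_forall e1)).trans ?_
  rw [integral_finsetSum _ (fun i hi => integrable_finsetSum _ (hI i hi))]
  have e2 : ∀ i ∈ S, ∫ t : ℝ, ∑ j ∈ S, w i * starRingEnd ℂ (w j) *
      (((f i : ℂ) ^ (-(1 / 2 : ℂ) - Complex.I * t)) * (starRingEnd ℂ) ((f j : ℂ) ^ (-(1 / 2 : ℂ) - Complex.I * t))
      * (((t ^ 2 + 1 / 4 : ℝ))⁻¹ : ℝ)) = ∑ j ∈ S, w i * starRingEnd ℂ (w j) *
        (2 * π * ((∑ k ∈ Finset.Ico 1 K, (if max (f i) (f j) ≤ k then (1 : ℝ) / (k * (k + 1)) else 0) + 1 / K : ℝ) : ℂ)) := by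
    intro i hi
    rw [integral_finsetSum _ (hI i hi)]
    refine Finset.sum_congr rfl fun j hj => ?_
    rw [integral_const_mul, lorentz_pair _ _ (hf i hi) (hf j hj),
      inv_max_telescope _ _ (le_max_of_le_left (hf i hi)) (max_le (hK i hi) (hK j hj))]
  rw [Finset.sum_congr rfl e2]
  rw [Complex.ofReal_mul, Complex.ofReal_add, Complex.ofReal_sum]
  simp_rw [Complex.ofReal_mul _ (1 / _), hB]
  have hmax : ∀ i ∈ S, ∀ j ∈ S, max (f i) (f j) ≤ K := fun i hi j hj => max_le (hK i hi) (hK j hj)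
  have e4 : ∑ i ∈ S, ∑ j ∈ S, w i * starRingEnd ℂ (w j) * (if max (f i) (f j) ≤ K then (1 : ℂ) else 0) =
      ∑ i ∈ S, ∑ j ∈ S, w i * starRingEnd ℂ (w j) * 1 := by
    refine Finset.sum_congr rfl fun i hi => Finset.sum_congr rfl fun j hj => ?_
    rw [if_pos (hmax i hi j hj)]
  rw [e4]
  have e3 : ∀ i ∈ S, ∀ j ∈ S, w i * starRingEnd ℂ (w j) *
        (2 * π * ((∑ k ∈ Finset.Ico 1 K, (if max (f i) (f j) ≤ k then (1 : ℝ) / (k * (k + 1)) else 0) + 1 / K : ℝ) : ℂ))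
      = ((2 * π : ℝ) : ℂ) * (∑ k ∈ Finset.Ico 1 K, w i * starRingEnd ℂ (w j) * (if max (f i) (f j) ≤ k then 1 else 0) *
          ((1 / (k * (k + 1)) : ℝ) : ℂ) + w i * starRingEnd ℂ (w j) * 1 * ((1 / K : ℝ) : ℂ)) := by
    intro i _ j _
    push_cast
    rw [mul_add, mul_add, mul_add, Finset.mul_sum, Finset.mul_sum, Finset.mul_sum]
    congr 1
    · refine Finset.sum_congr rfl fun k _ => ?_
      split_ifs <;> push_cast <;> ring
    · ring
  rw [Finset.sum_congr rfl (fun i hi => Finset.sum_congr rfl (e3 i hi))]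
  simp_rw [← Finset.mul_sum, Finset.sum_add_distrib]
  congr 2
  · have : ∀ (F : ℕ → ι → ι → ℂ) (a : ℕ → ℂ), ∑ i ∈ S, ∑ j ∈ S, ∑ k ∈ Finset.Ico 1 K, F k i j * a k
        = ∑ k ∈ Finset.Ico 1 K, (∑ i ∈ S, ∑ j ∈ S, F k i j) * a k := by
      intro F a
      simp_rw [Finset.sum_mul]
      rw [Finset.sum_comm (s := Finset.Ico 1 K)]
      refine Finset.sum_congr rfl fun i _ => ?_
      rw [Finset.sum_comm]
    exact this _ _
  · simp_rw [← Finset.sum_mul]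

/-- Mean value of a family of Dirichlet polynomials from a uniform bound for the coefficient sums. -/
lemma genDP_mean {ι κ : Type*} (T : Finset κ) (S : Finset ι) (w : κ → ι → ℂ) (f : ι → ℕ)
    (hf : ∀ i ∈ S, 1 ≤ f i) (Z Bd : ℝ) (hZ : 0 < Z) (hfZ : ∀ i ∈ S, Z ≤ f i)
    (hB : ∀ k : ℕ, ∑ χ ∈ T, ‖∑ i ∈ S with f i ≤ k, w χ i‖ ^ 2 ≤ Bd) :
    ∫ t : ℝ, ∑ χ ∈ T, ‖genDP S (w χ) f t‖ ^ 2 * ((t ^ 2 + 1 / 4 : ℝ))⁻¹ ≤ 2 * π * (Bd / Z) := by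
  classical
  have hBd : 0 ≤ Bd := le_trans (Finset.sum_nonneg fun _ _ => by positivity) (hB 0)
  rcases S.eq_empty_or_nonempty with rfl | hS
  · simp [genDP]; positivity
  rw [integral_finsetSum _ (fun χ _ => genDP_sq_integrable S (w χ) f hf)]
  obtain ⟨i0, hi0, hmin⟩ := S.exists_min_image f hS
  set M := f i0
  set K := S.sup f
  have hK : ∀ i ∈ S, f i ≤ K := fun i hi => Finset.le_sup hi
  simp_rw [genDP_sq_integral S (w _) f hf K hK]
  rw [← Finset.mul_sum, Finset.sum_add_distrib, Finset.sum_comm]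
  have hpi := Real.pi_pos
  apply mul_le_mul_of_nonneg_left _ (by positivity)
  have hM0 : (0 : ℝ) < M := by exact_mod_cast hf i0 hi0
  calc _ ≤ ∑ k ∈ Finset.Ico 1 K, Bd * (if M ≤ k then (1 : ℝ) / (k * (k + 1)) else 0) + Bd * (1 / K) := by
        gcongr with k hk
        · split_ifs with h
          · rw [← Finset.sum_mul]
            gcongr
            exact hB k
          · rw [mul_zero, Finset.sum_eq_zero]
            intro χ _
            rw [Finset.filter_false_of_mem]
            · simp
            · intro i hi
              have := hmin i hi
              omega
        · rw [← Finset.sum_mul]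
          gcongr
          exact hB K
    _ = Bd * (1 / M) := by
        rw [← Finset.mul_sum, ← mul_add, inv_max_telescope M K (hf i0 hi0) (hK i0 hi0)]
    _ ≤ Bd / Z := by
        rw [mul_one_div]
        gcongr
        exact hfZ i0 hi0

open ZMod in
lemma gaussSum_norm_sq (d : ℕ) [NeZero d] (χ : DirichletCharacter ℂ d) (hχ : χ.IsPrimitive) :
    ‖gaussSum χ (ZMod.stdAddChar (N := d))‖ ^ 2 = d := by
  have h1 : 𝓕 (𝓕 (χ : ZMod d → ℂ)) (-1) = (d : ℂ) := by
    rw [ZMod.dft_dft]; simp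
  have h2 : (𝓕 (χ : ZMod d → ℂ)) = fun k => χ⁻¹ (-k) * gaussSum χ ZMod.stdAddChar := by
    funext k; exact hχ.fourierTransform_eq_inv_mul_gaussSum k
  have h3 : 𝓕 (𝓕 (χ : ZMod d → ℂ)) (-1) = gaussSum χ⁻¹ (ZMod.stdAddChar⁻¹) * gaussSum χ ZMod.stdAddChar := by
    rw [h2, ZMod.dft_apply]
    simp only [smul_eq_mul]
    rw [show gaussSum χ⁻¹ (ZMod.stdAddChar (N := d))⁻¹ = ∑ a, χ⁻¹ a * (ZMod.stdAddChar (N := d))⁻¹ a from rfl,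
      Finset.sum_mul, ← Equiv.sum_comp (Equiv.neg _)]
    refine Finset.sum_congr rfl fun j _ => ?_
    simp [AddChar.inv_apply]
    ring
  rw [h1, ← star_gaussSum_eq] at h3
  have h4 : ((‖gaussSum χ (ZMod.stdAddChar (N := d))‖ ^ 2 : ℝ) : ℂ) = (d : ℂ) := by
    rw [h3]
    push_cast
    rw [← Complex.conj_mul']; rfl
  exact_mod_cast h4

open ZMod in
lemma primitive_expand (d : ℕ) [NeZero d] (χ : DirichletCharacter ℂ d) (hχ : χ.IsPrimitive)
    (S : Finset ℕ) (w : ℕ → ℂ) :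
    ‖∑ n ∈ S, w n * χ (n : ZMod d)‖ ^ 2 * d =
      ‖∑ h : ZMod d, χ⁻¹ h * ∑ n ∈ S, w n * ZMod.stdAddChar (-(h * (n : ZMod d)))‖ ^ 2 := by
  have h2 : (𝓕 (χ : ZMod d → ℂ)) = fun k => χ⁻¹ (-k) * gaussSum χ ZMod.stdAddChar := by
    funext k; exact hχ.fourierTransform_eq_inv_mul_gaussSum k
  have h1 : ∀ n : ZMod d, (d : ℂ) * χ n =
      gaussSum χ ZMod.stdAddChar * ∑ h : ZMod d, χ⁻¹ h * ZMod.stdAddChar (-(h * n)) := by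
    intro n
    have := congrFun (ZMod.dft_dft (χ : ZMod d → ℂ)) (-n)
    simp only [neg_neg, smul_eq_mul] at this
    rw [← this, h2, ZMod.dft_apply, ← Equiv.sum_comp (Equiv.neg _), Finset.mul_sum]
    refine Finset.sum_congr rfl fun j _ => ?_
    simp
    ring
  have h3 : (d : ℂ) * ∑ n ∈ S, w n * χ (n : ZMod d) = gaussSum χ ZMod.stdAddChar *
      ∑ h : ZMod d, χ⁻¹ h * ∑ n ∈ S, w n * ZMod.stdAddChar (-(h * (n : ZMod d))) := by
    have : ∀ n ∈ S, (d : ℂ) * (w n * χ (n : ZMod d)) = ∑ h : ZMod d, gaussSum χ ZMod.stdAddChar *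
       (χ⁻¹ h * (w n * ZMod.stdAddChar (-(h * (n : ZMod d))))) := by
      intro n _
      rw [mul_left_comm, h1, Finset.mul_sum, Finset.mul_sum]
      refine Finset.sum_congr rfl fun j _ => by ring
    rw [Finset.mul_sum, Finset.sum_congr rfl this, Finset.sum_comm, Finset.mul_sum]
    refine Finset.sum_congr rfl fun j _ => ?_
    rw [Finset.mul_sum, Finset.mul_sum]
  have h4 := congrArg (fun z => ‖z‖ ^ 2) h3
  simp only [norm_mul, mul_pow, gaussSum_norm_sq d χ hχ, Complex.norm_natCast] at h4
  have hd : (d : ℝ) ≠ 0 := by exact_mod_cast NeZero.ne d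
  apply mul_left_cancel₀ hd
  linarith

lemma geom_bound (z : ℂ) (hz : ‖z‖ = 1) (c : ℝ) (hc : 0 < c) (hzc : c ≤ ‖z - 1‖) (a b : ℕ) :
    ‖∑ n ∈ Finset.Ioc a b, z ^ n‖ ≤ 2 / c := by
  rcases le_or_gt b a with h | h
  · rw [Finset.Ioc_eq_empty (by omega)]; simp; positivity
  have hz1 : z ≠ 1 := by
    rintro rfl; simp at hzc; linarith
  have : ∑ n ∈ Finset.Ioc a b, z ^ n = (z ^ (b + 1) - z ^ (a + 1)) / (z - 1) := by
    rw [← geom_sum_Ico hz1 (by omega : a + 1 ≤ b + 1)]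
    apply Finset.sum_congr _ (fun _ _ => rfl)
    ext x; simp
  rw [this, norm_div]
  have h2 : ‖z ^ (b + 1) - z ^ (a + 1)‖ ≤ 2 := by
    refine (norm_sub_le _ _).trans ?_
    simp [hz]; norm_num
  gcongr

/-- Abel summation for monotone weights. -/
lemma abel_mono (w : ℕ → ℝ) (hw : Monotone w) (h0 : 0 ≤ w 0) (g : ℕ → ℂ) (M : ℝ) (a b : ℕ)
    (hg : ∀ a' : ℕ, a ≤ a' → ‖∑ n ∈ Finset.Ioc a' b, g n‖ ≤ M) :
    ‖∑ n ∈ Finset.Ioc a b, (w n : ℂ) * g n‖ ≤ w b * M := by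
  have hM : 0 ≤ M := (norm_nonneg _).trans (hg a le_rfl)
  rcases le_or_gt b a with h | h
  · rw [Finset.Ioc_eq_empty (by omega)]
    simp
    exact mul_nonneg (h0.trans (hw (Nat.zero_le _))) hM
  -- downward induction on the left endpoint
  have key : ∀ k : ℕ, a + k ≤ b → ∃ T : ℂ, ‖T‖ ≤ (w b - w (b - k)) * M ∧
      ∑ n ∈ Finset.Ioc (b - k) b, (w n : ℂ) * g n = T + w (b - k) * ∑ n ∈ Finset.Ioc (b - k) b, g n := by
    intro k hk
    induction k with
    | zero => exact ⟨0, by simp, by simp⟩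
    | succ k ih =>
      obtain ⟨T, hT, e⟩ := ih (by omega)
      set m := b - (k + 1) with hm
      have hm1 : b - k = m + 1 := by omega
      rw [hm1] at hT e
      have hins : Finset.Ioc m b = insert (m + 1) (Finset.Ioc (m + 1) b) := by
        ext x; simp; omega
      refine ⟨T + (w (m + 1) - w m) * ∑ n ∈ Finset.Ioc m b, g n, ?_, ?_⟩
      · have h1 := hg m (by omega)
        have h2 : 0 ≤ w (m + 1) - w m := sub_nonneg.mpr (hw (Nat.le_succ m))
        refine (norm_add_le _ _).trans ?_
        rw [norm_mul]
        have h3 : ‖((w (m + 1) : ℂ) - w m)‖ = w (m + 1) - w m := by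
          rw [← Complex.ofReal_sub, Complex.norm_real, Real.norm_of_nonneg h2]
        rw [h3]
        nlinarith [mul_le_mul_of_nonneg_left h1 h2]
      · rw [hins, Finset.sum_insert (by simp), Finset.sum_insert (by simp), e]
        ring
  obtain ⟨T, hT, e⟩ := key (b - a) (by omega)
  rw [show b - (b - a) = a by omega] at hT e
  rw [e]
  have hwa : 0 ≤ w a := h0.trans (hw (Nat.zero_le _))
  refine (norm_add_le _ _).trans ?_
  rw [norm_mul, Complex.norm_real, Real.norm_of_nonneg hwa]
  have := mul_le_mul_of_nonneg_left (hg a le_rfl) hwa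
  linarith

lemma stdAddChar_sub_one (d : ℕ) [NeZero d] (h : ℕ) (hd : 2 * h ≤ d) :
    4 * (h : ℝ) / d ≤ ‖ZMod.stdAddChar (h : ZMod d) - 1‖ := by
  have hd0 : (0 : ℝ) < d := by exact_mod_cast Nat.pos_of_ne_zero (NeZero.ne d)
  have e := ZMod.stdAddChar_coe (N := d) (h : ℤ)
  push_cast at e
  have e2 : (2 * π * Complex.I * h / d : ℂ) = Complex.I * ((2 * π * h / d : ℝ) : ℂ) := by
    push_cast; ring
  rw [e, e2, Complex.norm_exp_I_mul_ofReal_sub_one]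
  have hpi := Real.pi_pos
  have hh : (2 : ℝ) * h ≤ d := by exact_mod_cast hd
  have h1 : 2 * π * h / d / 2 ≤ π / 2 := by
    rw [div_div, div_le_div_iff₀ (by positivity) (by positivity)]; nlinarith
  have := Real.mul_le_sin (x := 2 * π * h / d / 2) (by positivity) h1
  rw [norm_mul, Real.norm_of_nonneg (by norm_num : (0 : ℝ) ≤ 2)]
  have h3 : 2 / π * (2 * π * h / d / 2) = 2 * h / d := by field_simp
  rw [h3] at this
  calc 4 * (h : ℝ) / d = 2 * (2 * h / d) := by ring
    _ ≤ 2 * Real.sin (2 * π * h / d / 2) := by gcongr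
    _ ≤ _ := by gcongr; exact le_abs_self _

lemma kernel_bound (d : ℕ) [NeZero d] (h : ℕ) (h1 : 1 ≤ h) (hd : 2 * h ≤ d) (x : ZMod d)
    (hx : x = (h : ZMod d) ∨ x = -(h : ZMod d)) (w : ℕ → ℝ) (hw : Monotone w) (h0 : 0 ≤ w 0)
    (a b : ℕ) :
    ‖∑ n ∈ Finset.Ioc a b, (w n : ℂ) * ZMod.stdAddChar (-(x * (n : ZMod d)))‖ ≤
      w b * min ((b - a : ℕ) : ℝ) (d / h) := by
  have hd0 : (0 : ℝ) < d := by exact_mod_cast Nat.pos_of_ne_zero (NeZero.ne d)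
  have hh0 : (0 : ℝ) < h := by exact_mod_cast h1
  set z : ℂ := ZMod.stdAddChar (-x) with hz
  have hz1 : ‖z‖ = 1 := AddChar.norm_apply _ _
  have e : ∀ n : ℕ, ZMod.stdAddChar (-(x * (n : ZMod d))) = z ^ n := by
    intro n
    rw [hz, ← AddChar.map_nsmul_eq_pow]
    congr 1; simp [mul_comm]
  simp_rw [e]
  apply abel_mono w hw h0
  intro a' ha'
  apply le_min
  · refine (norm_sum_le _ _).trans ?_
    simp only [norm_pow, hz1, one_pow, Finset.sum_const, Nat.card_Ioc, nsmul_eq_mul, mul_one]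
    exact_mod_cast (by omega : b - a' ≤ b - a)
  · have hc := stdAddChar_sub_one d h hd
    have hzc : 4 * (h : ℝ) / d ≤ ‖z - 1‖ := by
      rcases hx with rfl | rfl
      · refine hc.trans (le_of_eq ?_)
        set y := ZMod.stdAddChar (h : ZMod d) with hy
        have hy1 : ‖y‖ = 1 := AddChar.norm_apply _ _
        have : z * y = 1 := by rw [hz, hy, ← AddChar.map_add_eq_mul]; simp
        have h5 : y - 1 = - y * (z - 1) := by linear_combination this
        rw [h5, norm_mul, norm_neg, hy1, one_mul]
      · rw [hz, neg_neg]; exact hc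
    refine (geom_bound z hz1 _ (by positivity) hzc a' b).trans ?_
    rw [div_div_eq_mul_div, div_le_div_iff₀ (by positivity) (by positivity)]
    nlinarith [mul_pos hd0 hh0]

lemma one_add_log_le (η : ℝ) (hη : 0 < η) (x : ℝ) (hx : 1 ≤ x) :
    1 + Real.log x ≤ (1 + 1 / η) * x ^ η := by
  have h1 := Real.log_le_rpow_div (by linarith : 0 ≤ x) hη
  have h2 := Real.one_le_rpow hx hη.le
  rw [add_mul, one_mul, one_div, inv_mul_eq_div]
  linarith

lemma sum_range_inv_le (e : ℕ) : ∑ j ∈ Finset.range e, ((j + 1 : ℕ) : ℝ)⁻¹ ≤ 1 + Real.log e := by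
  have := harmonic_le_one_add_log e
  rw [harmonic] at this
  push_cast at this
  simpa using this

lemma class_sum (d : ℕ) [NeZero d] (Y : ℝ) (r : ZMod d) :
    ∑ m ∈ (Finset.Icc 1 (d ^ 2)).filter (fun m : ℕ => (m : ZMod d) = r), min (Y ^ 2) ((d : ℝ) ^ 2 / m) ≤
      Y ^ 2 + d * (1 + Real.log d) := by
  have hd : 0 < d := Nat.pos_of_ne_zero (NeZero.ne d)
  have hdR : (0 : ℝ) < d := by exact_mod_cast hd
  set g : ℕ → ℝ := fun j => if j = 0 then Y ^ 2 else d / j with hg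
  have hg0 : ∀ j, 0 ≤ g j := by
    intro j; simp only [hg]; split_ifs <;> positivity
  set A := (Finset.Icc 1 (d ^ 2)).filter (fun m : ℕ => (m : ZMod d) = r) with hA
  have h1 : ∀ m ∈ A, min (Y ^ 2) ((d : ℝ) ^ 2 / m) ≤ g ((m - 1) / d) := by
    intro m hm
    simp only [hA, Finset.mem_filter, Finset.mem_Icc] at hm
    simp only [hg]
    split_ifs with h0
    · exact min_le_left _ _
    · refine (min_le_right _ _).trans ?_
      have hj : 0 < (m - 1) / d := Nat.pos_of_ne_zero h0
      have hjm : (m - 1) / d * d ≤ m := (Nat.div_mul_le_self _ _).trans (by omega)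
      have hjmR : (((m - 1) / d : ℕ) : ℝ) * d ≤ m := by exact_mod_cast hjm
      have hjR : (0 : ℝ) < ((m - 1) / d : ℕ) := by exact_mod_cast hj
      have hmR : (0 : ℝ) < m := by exact_mod_cast (by omega : 0 < m)
      rw [div_le_div_iff₀ hmR hjR]
      nlinarith
  have hinj : Set.InjOn (fun m => (m - 1) / d) (A : Set ℕ) := by
    intro m hm m' hm' e
    simp only [hA, Finset.coe_filter, Set.mem_ofPred_eq, Finset.mem_Icc] at hm hm'
    have hc : (m : ZMod d) = m' := hm.2.trans hm'.2.symm
    rw [ZMod.natCast_eq_natCast_iff] at hc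
    have hc' : m - 1 ≡ m' - 1 [MOD d] := by
      apply Nat.ModEq.add_right_cancel' 1
      rwa [Nat.sub_add_cancel hm.1.1, Nat.sub_add_cancel hm'.1.1]
    have e1 := Nat.div_add_mod (m - 1) d
    have e2 := Nat.div_add_mod (m' - 1) d
    simp only at e
    rw [e, hc', e2] at e1
    omega
  have himg : A.image (fun m => (m - 1) / d) ⊆ Finset.range d := by
    intro j hj
    simp only [Finset.mem_image, hA, Finset.mem_filter, Finset.mem_Icc] at hj
    obtain ⟨m, hm, rfl⟩ := hj
    rw [Finset.mem_range, Nat.div_lt_iff_lt_mul hd]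
    have : d ^ 2 = d * d := by ring
    omega
  calc _ ≤ ∑ m ∈ A, g ((m - 1) / d) := Finset.sum_le_sum h1
    _ = ∑ j ∈ A.image (fun m => (m - 1) / d), g j := by rw [Finset.sum_image hinj]
    _ ≤ ∑ j ∈ Finset.range d, g j := Finset.sum_le_sum_of_subset_of_nonneg himg (fun _ _ _ => hg0 _)
    _ ≤ _ := by
      obtain ⟨e, rfl⟩ : ∃ e, d = e + 1 := ⟨d - 1, by omega⟩
      rw [Finset.sum_range_succ']
      have : ∀ j ∈ Finset.range e, g (j + 1) = ((e + 1 : ℕ) : ℝ) * ((j + 1 : ℕ) : ℝ)⁻¹ := by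
        intro j _
        simp [hg, div_eq_mul_inv]
      rw [Finset.sum_congr rfl this, ← Finset.mul_sum]
      have h0 : g 0 = Y ^ 2 := by simp [hg]
      rw [h0]
      have hs := sum_range_inv_le e
      have hl : Real.log (e : ℝ) ≤ Real.log ((e + 1 : ℕ) : ℝ) := by
        rcases Nat.eq_zero_or_pos e with rfl | he
        · simp
        · apply Real.log_le_log (by exact_mod_cast he); push_cast; linarith
      have := mul_le_mul_of_nonneg_left (hs.trans (by linarith : _ ≤ 1 + Real.log ((e + 1 : ℕ) : ℝ))) hdR.le
      linarith

lemma kappa_pair (η : ℝ) (C : ℝ) (hC1 : 1 ≤ C) (hη : 0 < η)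
    (hC : ∀ n : ℕ, n ≥ 1 → (n.divisors.card : ℝ) ≤ C * (n : ℝ) ^ η) (d : ℕ) [NeZero d]
    (H : ℕ) (hH : H ≤ d) (L Y : ℝ) (hL : 0 ≤ L) (hY : 0 ≤ Y) (κ : ℕ → ℂ)
    (hκ : ∀ h ∈ Finset.Icc 1 H, ‖κ h‖ ≤ L * min Y (d / h)) (r : ZMod d) :
    ∑ p ∈ Finset.Icc 1 H ×ˢ Finset.Icc 1 H with (((p.1 * p.2 : ℕ) : ZMod d) = r), ‖κ p.1 * κ p.2‖ ≤
     L ^ 2 * (C * (d : ℝ) ^ (2 * η)) * (Y ^ 2 + d * (1 + Real.log d)) := by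
  have hd : 0 < d := Nat.pos_of_ne_zero (NeZero.ne d)
  have hdR : (0 : ℝ) < d := by exact_mod_cast hd
  have h1 : ∀ p ∈ (Finset.Icc 1 H ×ˢ Finset.Icc 1 H).filter (fun p => (((p.1 * p.2 : ℕ) : ZMod d) = r)),
     ‖κ p.1 * κ p.2‖ ≤ L ^ 2 * min (Y ^ 2) ((d : ℝ) ^ 2 / (p.1 * p.2 : ℕ)) := by
    intro p hp
    simp only [Finset.mem_filter, Finset.mem_product] at hp
    have a1 := hκ _ hp.1.1
    have a2 := hκ _ hp.1.2
    rw [norm_mul]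
    have m1 : 0 ≤ min Y ((d : ℝ) / p.1) := le_min hY (by positivity)
    have m2 : 0 ≤ min Y ((d : ℝ) / p.2) := le_min hY (by positivity)
    calc _ ≤ (L * min Y (d / p.1)) * (L * min Y (d / p.2)) := by gcongr
      _ = L ^ 2 * (min Y (d / p.1) * min Y (d / p.2)) := by ring
      _ ≤ _ := by
        gcongr
        apply le_min
        · rw [sq]; exact mul_le_mul (min_le_left _ _) (min_le_left _ _) m2 hY
        · refine (mul_le_mul (min_le_right _ _) (min_le_right _ _) m2 (by positivity)).trans (le_of_eq ?_)
          push_cast; rw [div_mul_div_comm]; ring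
  refine (Finset.sum_le_sum h1).trans ?_
  rw [← Finset.mul_sum, mul_assoc]
  gcongr
  set P := (Finset.Icc 1 H ×ˢ Finset.Icc 1 H).filter (fun p => (((p.1 * p.2 : ℕ) : ZMod d) = r)) with hP
  set A := (Finset.Icc 1 (d ^ 2)).filter (fun m : ℕ => (m : ZMod d) = r) with hA
  have hmap : ∀ p ∈ P, p.1 * p.2 ∈ A := by
    intro p hp
    simp only [hP, hA, Finset.mem_filter, Finset.mem_product, Finset.mem_Icc] at hp ⊢
    refine ⟨⟨Nat.mul_pos hp.1.1.1 hp.1.2.1, ?_⟩, hp.2⟩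
    rw [sq]; exact Nat.mul_le_mul (hp.1.1.2.trans hH) (hp.1.2.2.trans hH)
  rw [← Finset.sum_fiberwise_of_maps_to hmap]
  calc _ ≤ ∑ m ∈ A, (C * (d : ℝ) ^ (2 * η)) * min (Y ^ 2) ((d : ℝ) ^ 2 / m) := by
        apply Finset.sum_le_sum
        intro m hm
        have e : ∀ p ∈ P.filter (fun p => p.1 * p.2 = m),
            min (Y ^ 2) ((d : ℝ) ^ 2 / (p.1 * p.2 : ℕ)) = min (Y ^ 2) ((d : ℝ) ^ 2 / m) := by
          intro p hp
          rw [(Finset.mem_filter.mp hp).2]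
        rw [Finset.sum_congr rfl e, Finset.sum_const, nsmul_eq_mul]
        have hm' : 1 ≤ m ∧ m ≤ d ^ 2 := by
          simp only [hA, Finset.mem_filter, Finset.mem_Icc] at hm; exact hm.1
        have hmR : (1 : ℝ) ≤ m := by exact_mod_cast hm'.1
        have hmd : (m : ℝ) ≤ (d : ℝ) ^ 2 := by exact_mod_cast hm'.2
        have m1 : 0 ≤ min (Y ^ 2) ((d : ℝ) ^ 2 / m) := le_min (by positivity) (by positivity)
        gcongr
        have hcard : (P.filter (fun p => p.1 * p.2 = m)).card ≤ m.divisors.card := by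
          apply Finset.card_le_card_of_injOn (fun p => p.1)
          · intro p hp
            have := (Finset.mem_filter.mp hp).2
            exact Nat.mem_divisors.mpr ⟨⟨p.2, this.symm⟩, by omega⟩
          · intro p hp q hq e
            have hp2 := (Finset.mem_filter.mp hp).2
            have hq2 := (Finset.mem_filter.mp hq).2
            have hp1 := (Finset.mem_filter.mp hp).1
            simp only [hP, Finset.mem_filter, Finset.mem_product, Finset.mem_Icc] at hp1
            simp only at e
            have : p.1 * p.2 = p.1 * q.2 := by rw [hp2, e, hq2]
            exact Prod.ext e (Nat.eq_of_mul_eq_mul_left (by omega) this)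
        calc ((P.filter (fun p => p.1 * p.2 = m)).card : ℝ) ≤ m.divisors.card := by exact_mod_cast hcard
          _ ≤ C * (m : ℝ) ^ η := hC m hm'.1
          _ ≤ C * ((d : ℝ) ^ 2) ^ η := by gcongr
          _ = _ := by rw [Real.rpow_mul hdR.le]; norm_cast
    _ = (C * (d : ℝ) ^ (2 * η)) * ∑ m ∈ A, min (Y ^ 2) ((d : ℝ) ^ 2 / m) := by rw [Finset.mul_sum]
    _ ≤ _ := by
      gcongr
      exact class_sum d Y r

lemma E_fourth (η : ℝ) (C : ℝ) (hC1 : 1 ≤ C) (hη : 0 < η)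
    (hC : ∀ n : ℕ, n ≥ 1 → (n.divisors.card : ℝ) ≤ C * (n : ℝ) ^ η) (d : ℕ) [NeZero d]
    (H : ℕ) (hH : H ≤ d) (L Y : ℝ) (hL : 0 ≤ L) (hY : 0 ≤ Y) (κ : ℕ → ℂ)
    (hκ : ∀ h ∈ Finset.Icc 1 H, ‖κ h‖ ≤ L * min Y (d / h)) :
    ∑ χ : DirichletCharacter ℂ d, ‖∑ h ∈ Finset.Icc 1 H, κ h * χ (h : ZMod d)‖ ^ 4 ≤
      d * (L ^ 2 * (C * (d : ℝ) ^ (2 * η)) * (Y ^ 2 + d * (1 + Real.log d))) *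
        (L * d * (1 + Real.log d)) ^ 2 := by
  have hd : 0 < d := Nat.pos_of_ne_zero (NeZero.ne d)
  have hdR : (0 : ℝ) < d := by exact_mod_cast hd
  have hlog : 0 ≤ Real.log (d : ℝ) := Real.log_natCast_nonneg d
  have e : ∀ χ : DirichletCharacter ℂ d, ‖∑ h ∈ Finset.Icc 1 H, κ h * χ (h : ZMod d)‖ ^ 4 =
      ‖∑ p ∈ Finset.Icc 1 H ×ˢ Finset.Icc 1 H, (κ p.1 * κ p.2) * χ ((p.1 * p.2 : ℕ) : ZMod d)‖ ^ 2 := by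
    intro χ
    rw [show (4 : ℕ) = 2 * 2 by norm_num, pow_mul, ← norm_pow, sq (∑ h ∈ Finset.Icc 1 H, _),
      Finset.sum_mul_sum, ← Finset.sum_product']
    congr 2
    refine Finset.sum_congr rfl fun p _ => ?_
    push_cast
    rw [map_mul]; ring
  simp_rw [e]
  refine (ls_bound d (Finset.Icc 1 H ×ˢ Finset.Icc 1 H) (fun p => κ p.1 * κ p.2) (fun p => p.1 * p.2)).trans ?_
  rw [mul_assoc]
  gcongr
  set V := L ^ 2 * (C * (d : ℝ) ^ (2 * η)) * (Y ^ 2 + d * (1 + Real.log d)) with hV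
  calc _ ≤ ∑ r : ZMod d, V * ∑ p ∈ Finset.Icc 1 H ×ˢ Finset.Icc 1 H with (((p.1 * p.2 : ℕ) : ZMod d) = r), ‖κ p.1 * κ p.2‖ := by
        apply Finset.sum_le_sum
        intro r _
        rw [sq]
        apply mul_le_mul_of_nonneg_right _ (Finset.sum_nonneg fun _ _ => norm_nonneg _)
        exact kappa_pair η C hC1 hη hC d H hH L Y hL hY κ hκ r
    _ = V * (∑ h ∈ Finset.Icc 1 H, ‖κ h‖) ^ 2 := by
        rw [← Finset.mul_sum, Finset.sum_fiberwise, sq, Finset.sum_mul_sum, ← Finset.sum_product']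
        simp_rw [norm_mul]
    _ ≤ _ := by
      have hV0 : 0 ≤ V := by positivity
      gcongr
      calc ∑ h ∈ Finset.Icc 1 H, ‖κ h‖ ≤ ∑ h ∈ Finset.Icc 1 H, L * d * ((h : ℝ))⁻¹ := by
            apply Finset.sum_le_sum
            intro h hh
            refine (hκ h hh).trans ?_
            rw [mul_assoc, ← div_eq_mul_inv]
            gcongr
            exact min_le_right _ _
        _ = L * d * ∑ h ∈ Finset.Icc 1 H, ((h : ℝ))⁻¹ := by rw [Finset.mul_sum]
        _ ≤ _ := by
          gcongr
          have h1 : ∑ h ∈ Finset.Icc 1 H, ((h : ℝ))⁻¹ = ∑ j ∈ Finset.range H, ((j + 1 : ℕ) : ℝ)⁻¹ := by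
            rw [Finset.range_eq_Ico, Finset.sum_Ico_add' (fun j : ℕ => ((j : ℕ) : ℝ)⁻¹) 0 H 1]
            rfl
          rw [h1]
          refine (sum_range_inv_le H).trans ?_
          rcases Nat.eq_zero_or_pos H with rfl | hp
          · simpa using hlog
          · gcongr

lemma zmod_split (d : ℕ) [NeZero d] (F : ZMod d → ℂ) (h0 : F 0 = 0) :
    ∑ x : ZMod d, F x = ∑ h ∈ Finset.Icc 1 (d / 2), F (h : ZMod d) +
      ∑ h ∈ Finset.Icc 1 ((d - 1) / 2), F (-(h : ZMod d)) := by
  have hd : 0 < d := Nat.pos_of_ne_zero (NeZero.ne d)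
  have h1 : ∑ x : ZMod d, F x = ∑ n ∈ Finset.range d, F (n : ZMod d) := by
    symm
    apply Finset.sum_bij (fun (n : ℕ) _ => (n : ZMod d))
    · simp
    · intro a ha b hb e
      rw [ZMod.natCast_eq_natCast_iff] at e
      exact Nat.ModEq.eq_of_lt_of_lt e (Finset.mem_range.mp ha) (Finset.mem_range.mp hb)
    · intro x _
      exact ⟨x.val, Finset.mem_range.mpr (ZMod.val_lt x), ZMod.natCast_zmod_val x⟩
    · intros; rfl
  have h2 : Finset.range d = insert 0 (Finset.Icc 1 (d / 2) ∪ Finset.Ioo (d / 2) d) := by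
    ext x; simp only [Finset.mem_range, Finset.mem_insert, Finset.mem_union, Finset.mem_Icc, Finset.mem_Ioo]; omega
  have hdis : Disjoint (Finset.Icc 1 (d / 2)) (Finset.Ioo (d / 2) d) := by
    rw [Finset.disjoint_left]; intro x; simp only [Finset.mem_Icc, Finset.mem_Ioo]; omega
  rw [h1, h2, Finset.sum_insert (by simp), Finset.sum_union hdis]
  simp only [Nat.cast_zero, h0, zero_add]
  congr 1
  apply Finset.sum_bij (fun n _ => d - n)
  · intro a; simp only [Finset.mem_Icc, Finset.mem_Ioo]; omega
  · intro a ha b hb; simp only [Finset.mem_Ioo] at ha hb; omega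
  · intro b hb
    simp only [Finset.mem_Icc] at hb
    exact ⟨d - b, by simp only [Finset.mem_Ioo]; omega, by omega⟩
  · intro a ha
    simp only [Finset.mem_Ioo] at ha
    rw [Nat.cast_sub ha.2.le]; simp

lemma four_pow_add (z1 z2 : ℂ) : ‖z1 + z2‖ ^ 4 ≤ 8 * (‖z1‖ ^ 4 + ‖z2‖ ^ 4) := by
  have h := norm_add_le z1 z2
  calc ‖z1 + z2‖ ^ 4 ≤ (‖z1‖ + ‖z2‖) ^ 4 := by gcongr
    _ ≤ _ := by
      have := add_pow_le (norm_nonneg z1) (norm_nonneg z2) 4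
      norm_num at this
      linarith

lemma fourth_moment (η : ℝ) (hη : 0 < η) : ∃ C : ℝ, 1 ≤ C ∧ ∀ d : ℕ, 2 ≤ d →
    ∀ T : Finset (DirichletCharacter ℂ d), (∀ χ ∈ T, χ.IsPrimitive) →
    ∀ (w : ℕ → ℝ), Monotone w → 0 ≤ w 0 → ∀ (a b : ℕ) (L : ℝ), w b ≤ L →
    ∑ χ ∈ T, ‖∑ n ∈ Finset.Ioc a b, (w n : ℂ) * χ (n : ZMod d)‖ ^ 4 ≤
      C * (d : ℝ) ^ η * L ^ 4 * ((d : ℝ) ^ 2 + d * ((b - a : ℕ) : ℝ) ^ 2) := by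
  set η' := η / 5 with hη'
  have hη'0 : 0 < η' := by positivity
  obtain ⟨C, hC1, hC⟩ := divisor_bound η' hη'0
  set K := 1 + 1 / η' with hK
  have hK1 : 1 ≤ K := by rw [hK]; have : 0 < 1 / η' := by positivity
                         linarith
  refine ⟨16 * C * K ^ 3, ?_, ?_⟩
  · have : 1 ≤ K ^ 3 := one_le_pow₀ hK1
    nlinarith
  intro d hd2 T hT w hw hw0 a b L hL
  have : NeZero d := ⟨by omega⟩
  have : Fact (1 < d) := ⟨by omega⟩
  have hdR : (0 : ℝ) < d := by exact_mod_cast (by omega : 0 < d)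
  have hd1 : (1 : ℝ) ≤ d := by exact_mod_cast (by omega : 1 ≤ d)
  have hL0 : 0 ≤ L := (hw0.trans (hw (Nat.zero_le _))).trans hL
  set Y : ℝ := ((b - a : ℕ) : ℝ) with hY
  have hY0 : 0 ≤ Y := by positivity
  set κ : ZMod d → ℂ := fun x => ∑ n ∈ Finset.Ioc a b, (w n : ℂ) * ZMod.stdAddChar (-(x * (n : ZMod d))) with hκ
  set V := d * (L ^ 2 * (C * (d : ℝ) ^ (2 * η')) * (Y ^ 2 + d * (1 + Real.log d))) *
        (L * d * (1 + Real.log d)) ^ 2 with hV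
  have hkb : ∀ h : ℕ, 1 ≤ h → 2 * h ≤ d → ∀ x : ZMod d, (x = (h : ZMod d) ∨ x = -(h : ZMod d)) →
      ‖κ x‖ ≤ L * min Y (d / h) := by
    intro h h1 h2 x hx
    refine (kernel_bound d h h1 h2 x hx w hw hw0 a b).trans ?_
    have m1 : 0 ≤ min Y ((d : ℝ) / h) := le_min hY0 (by positivity)
    gcongr
  have hE1 := E_fourth η' C hC1 hη'0 hC d (d / 2) (Nat.div_le_self _ _) L Y hL0 hY0
    (fun h => κ (h : ZMod d)) (by
      intro h hh
      rw [Finset.mem_Icc] at hh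
      exact hkb h hh.1 (by omega) _ (Or.inl rfl))
  have hE2 := E_fourth η' C hC1 hη'0 hC d ((d - 1) / 2) (by omega) L Y hL0 hY0
    (fun h => κ (-(h : ZMod d))) (by
      intro h hh
      rw [Finset.mem_Icc] at hh
      exact hkb h hh.1 (by omega) _ (Or.inr rfl))
  rw [← hV] at hE1 hE2
  rw [← Equiv.sum_comp (Equiv.inv _)] at hE1 hE2
  simp only [Equiv.inv_apply] at hE1 hE2
  have key : ∀ χ ∈ T, ‖∑ n ∈ Finset.Ioc a b, (w n : ℂ) * χ (n : ZMod d)‖ ^ 4 * (d : ℝ) ^ 2 ≤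
      8 * (‖∑ h ∈ Finset.Icc 1 (d / 2), κ (h : ZMod d) * χ⁻¹ (h : ZMod d)‖ ^ 4 +
        ‖∑ h ∈ Finset.Icc 1 ((d - 1) / 2), κ (-(h : ZMod d)) * χ⁻¹ (h : ZMod d)‖ ^ 4) := by
    intro χ hχ
    have h1 := primitive_expand d χ (hT χ hχ) (Finset.Ioc a b) (fun n => (w n : ℂ))
    have h2 := zmod_split d (fun h => χ⁻¹ h * κ h) (by
      rw [MulChar.map_nonunit _ (by simp), zero_mul])
    have h3 : ‖∑ n ∈ Finset.Ioc a b, (w n : ℂ) * χ (n : ZMod d)‖ ^ 4 * (d : ℝ) ^ 2 =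
      ‖∑ h : ZMod d, χ⁻¹ h * κ h‖ ^ 4 := by
      have := congrArg (fun x => x ^ 2) h1
      simp only [mul_pow] at this
      rw [← pow_mul, ← pow_mul] at this
      simpa using this
    rw [h3, h2]
    refine (four_pow_add _ _).trans ?_
    have h4 : ∑ h ∈ Finset.Icc 1 ((d - 1) / 2), χ⁻¹ (-(h : ZMod d)) * κ (-(h : ZMod d)) =
       χ⁻¹ (-1) * ∑ h ∈ Finset.Icc 1 ((d - 1) / 2), κ (-(h : ZMod d)) * χ⁻¹ (h : ZMod d) := by
      rw [Finset.mul_sum]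
      refine Finset.sum_congr rfl fun h _ => ?_
      rw [show -(h : ZMod d) = (-1) * (h : ZMod d) by ring, map_mul]; ring
    rw [h4, norm_mul]
    have h5 : ‖χ⁻¹ (-1)‖ ≤ 1 := DirichletCharacter.norm_le_one _ _
    simp_rw [mul_comm (χ⁻¹ _) (κ _)]
    have h6 := norm_nonneg (∑ h ∈ Finset.Icc 1 ((d - 1) / 2), κ (-(h : ZMod d)) * χ⁻¹ (h : ZMod d))
    have h7 := mul_le_of_le_one_left h6 h5
    gcongr
  have hsum : (∑ χ ∈ T, ‖∑ n ∈ Finset.Ioc a b, (w n : ℂ) * χ (n : ZMod d)‖ ^ 4) * (d : ℝ) ^ 2 ≤ 16 * V := by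
    rw [Finset.sum_mul]
    refine (Finset.sum_le_sum key).trans ?_
    refine (Finset.sum_le_sum_of_subset_of_nonneg (Finset.subset_univ T) (fun _ _ _ => by positivity)).trans ?_
    rw [← Finset.mul_sum, Finset.sum_add_distrib]
    linarith
  have hlog := one_add_log_le η' hη'0 d hd1
  have hlog0 : 0 ≤ Real.log (d : ℝ) := Real.log_natCast_nonneg d
  rw [← hK] at hlog
  set D := (d : ℝ) ^ η' with hD
  have hD1 : 1 ≤ D := Real.one_le_rpow hd1 hη'0.le
  have eD2 : (d : ℝ) ^ (2 * η') = D ^ 2 := by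
    rw [hD, ← Real.rpow_natCast, ← Real.rpow_mul hdR.le]; congr 1; push_cast; ring
  have eD5 : (d : ℝ) ^ η = D ^ 5 := by
    rw [hD, ← Real.rpow_natCast, ← Real.rpow_mul hdR.le]; congr 1; push_cast; rw [hη']; ring
  have hd2' : (0 : ℝ) < (d : ℝ) ^ 2 := by positivity
  apply le_of_mul_le_mul_right (hsum.trans _) hd2'
  rw [hV, eD2, eD5]
  have hKD : 1 ≤ K * D := by nlinarith
  calc _ ≤ 16 * (d * (L ^ 2 * (C * D ^ 2) * (Y ^ 2 * (K * D) + d * (K * D))) * (L * d * (K * D)) ^ 2) := by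
        gcongr
        exact le_mul_of_one_le_right (by positivity) hKD
    _ = _ := by ring

lemma class_count (d : ℕ) [NeZero d] (A Z : ℕ) (r : ZMod d) :
    ((Finset.Ioc A (A + Z)).filter (fun m : ℕ => (m : ZMod d) = r)).card ≤ Z / d + 1 := by
  have hd : 0 < d := Nat.pos_of_ne_zero (NeZero.ne d)
  rw [← Finset.card_range (Z / d + 1)]
  apply Finset.card_le_card_of_injOn (fun m => (m - A - 1) / d)
  · intro m hm
    simp only [Finset.coe_filter, Set.mem_ofPred_eq, Finset.mem_Ioc] at hm
    simp only [Finset.coe_range, Set.mem_Iio, Nat.lt_succ_iff]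
    exact Nat.div_le_div_right (by omega)
  · intro m hm m' hm' e
    simp only [Finset.coe_filter, Set.mem_ofPred_eq, Finset.mem_Ioc] at hm hm'
    have hc : (m : ZMod d) = m' := hm.2.trans hm'.2.symm
    rw [ZMod.natCast_eq_natCast_iff] at hc
    have hc' : m - A - 1 ≡ m' - A - 1 [MOD d] := by
      apply Nat.ModEq.add_right_cancel' (A + 1)
      rwa [show m - A - 1 + (A + 1) = m by omega, show m' - A - 1 + (A + 1) = m' by omega]
    have e1 := Nat.div_add_mod (m - A - 1) d
    have e2 := Nat.div_add_mod (m' - A - 1) d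
    simp only at e
    rw [e, hc', e2] at e1
    omega

lemma ls_count {ι : Type*} (d : ℕ) [NeZero d] (S : Finset ι) (w : ι → ℂ) (f : ι → ℕ) (A Z : ℕ)
    (hf : ∀ i ∈ S, f i ∈ Finset.Ioc A (A + Z)) (W : ℝ) (hW : 0 ≤ W)
    (hfib : ∀ m ∈ Finset.Ioc A (A + Z), ∑ i ∈ S.filter (fun i => f i = m), ‖w i‖ ≤ W) :
    ∑ χ : DirichletCharacter ℂ d, ‖∑ i ∈ S, w i * χ (f i : ZMod d)‖ ^ 2 ≤
      W ^ 2 * (Z + d) * Z := by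
  have hd : 0 < d := Nat.pos_of_ne_zero (NeZero.ne d)
  have hdR : (0 : ℝ) < d := by exact_mod_cast hd
  refine (ls_bound d S w f).trans ?_
  have hU : ∀ r : ZMod d, ∑ i ∈ S.filter (fun i => (f i : ZMod d) = r), ‖w i‖ ≤ W * (Z / d + 1) := by
    intro r
    have hmap : ∀ i ∈ S.filter (fun i => (f i : ZMod d) = r),
        f i ∈ (Finset.Ioc A (A + Z)).filter (fun m : ℕ => (m : ZMod d) = r) := by
      intro i hi
      rw [Finset.mem_filter] at hi ⊢
      exact ⟨hf i hi.1, hi.2⟩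
    rw [← Finset.sum_fiberwise_of_maps_to hmap]
    calc _ ≤ ∑ m ∈ (Finset.Ioc A (A + Z)).filter (fun m : ℕ => (m : ZMod d) = r), W := by
          apply Finset.sum_le_sum
          intro m hm
          refine le_trans ?_ (hfib m (Finset.mem_filter.mp hm).1)
          apply Finset.sum_le_sum_of_subset_of_nonneg _ (fun _ _ _ => norm_nonneg _)
          intro i hi
          simp only [Finset.mem_filter] at hi ⊢
          exact ⟨hi.1.1, hi.2⟩
      _ ≤ _ := by
        rw [Finset.sum_const, nsmul_eq_mul, mul_comm]
        gcongr
        have h1 := class_count d A Z r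
        calc _ ≤ ((Z / d + 1 : ℕ) : ℝ) := by exact_mod_cast h1
          _ ≤ _ := by push_cast; gcongr; exact Nat.cast_div_le
  have hT : ∑ i ∈ S, ‖w i‖ ≤ W * Z := by
    rw [← Finset.sum_fiberwise_of_maps_to hf]
    refine (Finset.sum_le_sum hfib).trans ?_
    rw [Finset.sum_const, Nat.card_Ioc, nsmul_eq_mul, mul_comm]; simp
  calc _ ≤ d * ∑ r : ZMod d, (W * (Z / d + 1)) * ∑ i ∈ S.filter (fun i => (f i : ZMod d) = r), ‖w i‖ := by
        gcongr with r
        rw [sq]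
        exact mul_le_mul_of_nonneg_right (hU r) (Finset.sum_nonneg fun _ _ => norm_nonneg _)
    _ = d * ((W * (Z / d + 1)) * ∑ i ∈ S, ‖w i‖) := by
        rw [← Finset.mul_sum, Finset.sum_fiberwise]
    _ ≤ d * ((W * (Z / d + 1)) * (W * Z)) := by gcongr
    _ = _ := by field_simp

noncomputable def hypG (f g : ℕ → ℂ) (V : ℝ → ℕ) (a b : ℝ) : ℂ :=
  ∑ n ∈ Finset.Ioc ⌊a⌋₊ ⌊b⌋₊, f n * ∑ m ∈ Finset.Ioc (V b) (V n), g m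

lemma sum_Ioc_split (g : ℕ → ℂ) {a b c : ℕ} (h1 : a ≤ b) (h2 : b ≤ c) :
    ∑ n ∈ Finset.Ioc a c, g n = ∑ n ∈ Finset.Ioc a b, g n + ∑ n ∈ Finset.Ioc b c, g n := by
  rw [← Finset.Ioc_union_Ioc_eq_Ioc h1 h2, Finset.sum_union]
  rw [Finset.disjoint_left]; intro x; simp only [Finset.mem_Ioc]; omega

lemma hypG_step (f g : ℕ → ℂ) (V : ℝ → ℕ) (hV : AntitoneOn V (Set.Ioi 0)) (a m b : ℝ) (ha : 0 < a)
    (ham : a ≤ m) (hmb : m ≤ b) :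
    hypG f g V a b = hypG f g V a m + hypG f g V m b +
      (∑ n ∈ Finset.Ioc ⌊a⌋₊ ⌊m⌋₊, f n) * ∑ n ∈ Finset.Ioc (V b) (V m), g n := by
  have hm0 : 0 < m := ha.trans_le ham
  have hb0 : 0 < b := hm0.trans_le hmb
  unfold hypG
  rw [sum_Ioc_split _ (Nat.floor_le_floor ham) (Nat.floor_le_floor hmb), Finset.sum_mul]
  have : ∀ n ∈ Finset.Ioc ⌊a⌋₊ ⌊m⌋₊, f n * ∑ k ∈ Finset.Ioc (V b) (V n), g k =
     f n * ∑ k ∈ Finset.Ioc (V m) (V n), g k + f n * ∑ k ∈ Finset.Ioc (V b) (V m), g k := by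
    intro n hn
    rw [Finset.mem_Ioc] at hn
    have hn0 : (0 : ℝ) < n := by exact_mod_cast (by omega : 0 < n)
    have hnm : (n : ℝ) ≤ m := (Nat.le_floor_iff hm0.le).mp hn.2
    rw [sum_Ioc_split g (hV hm0 hb0 hmb) (hV hn0 hm0 hnm)]
    ring
  rw [Finset.sum_congr rfl this, Finset.sum_add_distrib]
  ring

/-- dyadic points -/
noncomputable def dyp (a b : ℝ) (l i : ℕ) : ℝ := a + i * ((b - a) / 2 ^ l)

lemma dyp_double (a b : ℝ) (l i : ℕ) : dyp a b (l + 1) (2 * i) = dyp a b l i := by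
  unfold dyp; push_cast; rw [pow_succ]; field_simp

lemma dyp_mono (a b : ℝ) (hab : a ≤ b) (l : ℕ) {i j : ℕ} (h : i ≤ j) : dyp a b l i ≤ dyp a b l j := by
  unfold dyp
  have : (0 : ℝ) ≤ (b - a) / 2 ^ l := by have := sub_nonneg.mpr hab; positivity
  gcongr

lemma dyp_zero (a b : ℝ) (l : ℕ) : dyp a b l 0 = a := by simp [dyp]

lemma dyp_top (a b : ℝ) (l : ℕ) : dyp a b l (2 ^ l) = b := by
  unfold dyp; push_cast; field_simp; ring

lemma dyp_succ (a b : ℝ) (l i : ℕ) : dyp a b l (i + 1) = dyp a b l i + (b - a) / 2 ^ l := by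
  unfold dyp; push_cast; ring

lemma sum_range_double (h : ℕ → ℂ) (n : ℕ) :
    ∑ j ∈ Finset.range (2 * n), h j = ∑ i ∈ Finset.range n, (h (2 * i) + h (2 * i + 1)) := by
  induction n with
  | zero => simp
  | succ n ih =>
    rw [show 2 * (n + 1) = 2 * n + 1 + 1 by ring, Finset.sum_range_succ, Finset.sum_range_succ, ih,
      Finset.sum_range_succ]
    ring

noncomputable def hypR (f g : ℕ → ℂ) (V : ℝ → ℕ) (a b : ℝ) (l i : ℕ) : ℂ :=
  (∑ n ∈ Finset.Ioc ⌊dyp a b (l + 1) (2 * i)⌋₊ ⌊dyp a b (l + 1) (2 * i + 1)⌋₊, f n) *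
    ∑ n ∈ Finset.Ioc (V (dyp a b (l + 1) (2 * i + 2))) (V (dyp a b (l + 1) (2 * i + 1))), g n

lemma hypG_decomp (f g : ℕ → ℂ) (V : ℝ → ℕ) (hV : AntitoneOn V (Set.Ioi 0)) (a b : ℝ) (ha : 0 < a)
    (hab : a ≤ b) (L : ℕ) :
    hypG f g V a b = ∑ l ∈ Finset.range L, ∑ i ∈ Finset.range (2 ^ l), hypR f g V a b l i +
      ∑ i ∈ Finset.range (2 ^ L), hypG f g V (dyp a b L i) (dyp a b L (i + 1)) := by
  induction L with
  | zero => simp [dyp]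
  | succ L ih =>
    rw [ih, Finset.sum_range_succ, add_assoc]
    congr 1
    rw [pow_succ, mul_comm, sum_range_double, ← Finset.sum_add_distrib]
    refine Finset.sum_congr rfl fun i _ => ?_
    have e1 := dyp_double a b L i
    have e2 := dyp_double a b L (i + 1)
    rw [← e1, ← e2]
    have h1 : dyp a b (L + 1) (2 * i) ≤ dyp a b (L + 1) (2 * i + 1) := dyp_mono a b hab _ (by omega)
    have h2 : dyp a b (L + 1) (2 * i + 1) ≤ dyp a b (L + 1) (2 * (i + 1)) := dyp_mono a b hab _ (by omega)
    have h0 : 0 < dyp a b (L + 1) (2 * i) := by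
      have h3 := dyp_mono a b hab (L + 1) (Nat.zero_le (2 * i))
      rw [dyp_zero] at h3
      exact ha.trans_le h3
    rw [hypG_step f g V hV _ _ _ h0 h1 h2]
    unfold hypR
    rw [show 2 * (i + 1) = 2 * i + 1 + 1 by ring]
    ring

lemma rect_bound (d : ℕ) (T : Finset (DirichletCharacter ℂ d)) (F G : DirichletCharacter ℂ d → ℂ)
    (K L1 L2 Y1 Y2 : ℝ) (hK : 0 ≤ K) (hL1 : 0 ≤ L1) (hL2 : 0 ≤ L2) (hY1 : 0 ≤ Y1) (hY2 : 0 ≤ Y2)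
    (hF : ∑ χ ∈ T, ‖F χ‖ ^ 4 ≤ K * L1 ^ 4 * ((d : ℝ) ^ 2 + d * Y1 ^ 2))
    (hG : ∑ χ ∈ T, ‖G χ‖ ^ 4 ≤ K * L2 ^ 4 * ((d : ℝ) ^ 2 + d * Y2 ^ 2)) :
    ∑ χ ∈ T, ‖F χ * G χ‖ ^ 2 ≤ K * (L1 ^ 2 * L2 ^ 2) * ((d + √d * Y1) * (d + √d * Y2)) := by
  have hs : √(d : ℝ) ^ 2 = d := Real.sq_sqrt (by positivity)
  have hs0 := Real.sqrt_nonneg (d : ℝ)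
  have h1 := Finset.sum_mul_sq_le_sq_mul_sq T (fun χ => ‖F χ‖ ^ 2) (fun χ => ‖G χ‖ ^ 2)
  simp only [← pow_mul, ← mul_pow] at h1
  rw [← pow_le_pow_iff_left₀ (Finset.sum_nonneg fun _ _ => by positivity) (by positivity) (two_ne_zero)]
  simp only [norm_mul]
  refine h1.trans ?_
  norm_num
  have hq : ∀ Y : ℝ, 0 ≤ Y → (d : ℝ) ^ 2 + d * Y ^ 2 ≤ (d + √d * Y) ^ 2 := by
    intro Y hY
    have : (d + √d * Y) ^ 2 = (d : ℝ) ^ 2 + √d ^ 2 * Y ^ 2 + 2 * d * √d * Y := by ring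
    rw [this, hs]
    have : 0 ≤ 2 * d * √d * Y := by positivity
    linarith
  calc _ ≤ (K * L1 ^ 4 * ((d : ℝ) ^ 2 + d * Y1 ^ 2)) * (K * L2 ^ 4 * ((d : ℝ) ^ 2 + d * Y2 ^ 2)) := by
        gcongr
    _ ≤ (K * L1 ^ 4 * (d + √d * Y1) ^ 2) * (K * L2 ^ 4 * (d + √d * Y2) ^ 2) := by
        gcongr
        · exact hq _ hY1
        · exact hq _ hY2
    _ = _ := by ring

lemma sum_norm_sq_le {κ ι : Type*} (T : Finset κ) (I : Finset ι) (F : κ → ι → ℂ) (B : ℝ)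
    (hB : ∀ i ∈ I, ∑ χ ∈ T, ‖F χ i‖ ^ 2 ≤ B) :
    ∑ χ ∈ T, ‖∑ i ∈ I, F χ i‖ ^ 2 ≤ (I.card : ℝ) ^ 2 * B := by
  calc _ ≤ ∑ χ ∈ T, (I.card : ℝ) * ∑ i ∈ I, ‖F χ i‖ ^ 2 := by
        apply Finset.sum_le_sum
        intro χ _
        calc _ ≤ (∑ i ∈ I, ‖F χ i‖) ^ 2 := by gcongr; exact norm_sum_le _ _
          _ ≤ _ := sq_sum_le_card_mul_sum_sq
    _ = (I.card : ℝ) * ∑ i ∈ I, ∑ χ ∈ T, ‖F χ i‖ ^ 2 := by rw [← Finset.mul_sum, Finset.sum_comm]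
    _ ≤ (I.card : ℝ) * ∑ i ∈ I, B := by gcongr with i hi; exact hB i hi
    _ = _ := by rw [Finset.sum_const, nsmul_eq_mul]; ring

lemma norm_add3_sq (x y z : ℂ) : ‖x + (y + z)‖ ^ 2 ≤ 3 * (‖x‖ ^ 2 + ‖y‖ ^ 2 + ‖z‖ ^ 2) := by
  have h : ‖x + (y + z)‖ ≤ ‖x‖ + (‖y‖ + ‖z‖) :=
    (norm_add_le _ _).trans (by gcongr; exact norm_add_le _ _)
  calc _ ≤ (‖x‖ + (‖y‖ + ‖z‖)) ^ 2 := by gcongr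
    _ ≤ _ := by nlinarith [sq_nonneg (‖x‖ - ‖y‖), sq_nonneg (‖x‖ - ‖z‖), sq_nonneg (‖y‖ - ‖z‖)]

/-- the clamped hyperbola boundary -/
noncomputable def hypV (a b u : ℕ) (c : ℝ) : ℕ := max a (min b ⌊(u : ℝ) / c⌋₊)

lemma hypV_anti (a b u : ℕ) : AntitoneOn (hypV a b u) (Set.Ioi 0) := by
  intro x hx y hy hxy
  unfold hypV
  have : ⌊(u : ℝ) / y⌋₊ ≤ ⌊(u : ℝ) / x⌋₊ := by
    apply Nat.floor_le_floor
    have hx' : 0 < x := hx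
    gcongr
  omega

lemma hypV_sub (a b u : ℕ) (x y : ℝ) (hx : 0 < x) (hxy : x ≤ y) (E : ℝ)
    (hE : (u : ℝ) / x - u / y ≤ E) : ((hypV a b u x - hypV a b u y : ℕ) : ℝ) ≤ E + 1 := by
  have hy : 0 < y := hx.trans_le hxy
  have h1 : hypV a b u x - hypV a b u y ≤ ⌊(u : ℝ) / x⌋₊ - ⌊(u : ℝ) / y⌋₊ := by
    unfold hypV; omega
  have h0 : ⌊(u : ℝ) / y⌋₊ ≤ ⌊(u : ℝ) / x⌋₊ := by
    apply Nat.floor_le_floor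
    gcongr
  calc _ ≤ ((⌊(u : ℝ) / x⌋₊ - ⌊(u : ℝ) / y⌋₊ : ℕ) : ℝ) := by exact_mod_cast h1
    _ = (⌊(u : ℝ) / x⌋₊ : ℝ) - ⌊(u : ℝ) / y⌋₊ := by rw [Nat.cast_sub h0]
    _ ≤ (u : ℝ) / x - (u / y - 1) := by
      have h2 := Nat.floor_le (show 0 ≤ (u : ℝ) / x by positivity)
      have h3 := Nat.lt_floor_add_one ((u : ℝ) / y)
      linarith
    _ ≤ _ := by linarith

lemma floor_sub_le (x y E : ℝ) (hx : 0 ≤ x) (hxy : x ≤ y) (hE : y - x ≤ E) :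
    ((⌊y⌋₊ - ⌊x⌋₊ : ℕ) : ℝ) ≤ E + 1 := by
  rw [Nat.cast_sub (Nat.floor_le_floor hxy)]
  have h2 := Nat.floor_le (hx.trans hxy)
  have h3 := Nat.lt_floor_add_one x
  linarith

/-- Remainder bound. -/
lemma hyp_rem (η C : ℝ) (hη : 0 < η) (hC1 : 1 ≤ C)
    (hC : ∀ n : ℕ, n ≥ 1 → (n.divisors.card : ℝ) ≤ C * (n : ℝ) ^ η) (d : ℕ) [NeZero d]
    (w1 w2 : ℕ → ℝ) (hw1 : Monotone w1) (hw2 : Monotone w2)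
    (hw10 : 0 ≤ w1 0) (hw20 : 0 ≤ w2 0) (X1 X2 L1 L2 : ℝ) (hX1 : 1 ≤ X1) (hX2 : 1 ≤ X2)
    (hL1 : w1 ⌊2 * X1⌋₊ ≤ L1) (hL2 : w2 ⌊2 * X2⌋₊ ≤ L2) (L u : ℕ) (hu : (u : ℝ) ≤ 4 * (X1 * X2)) :
    ∑ χ : DirichletCharacter ℂ d, ‖∑ i ∈ Finset.range (2 ^ L),
      hypG (fun n => (w1 n : ℂ) * χ (n : ZMod d)) (fun n => (w2 n : ℂ) * χ (n : ZMod d))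
        (hypV ⌊X2⌋₊ ⌊2 * X2⌋₊ u) (dyp X1 (2 * X1) L i) (dyp X1 (2 * X1) L (i + 1))‖ ^ 2 ≤
    (L1 * L2 * (C * (4 * (X1 * X2)) ^ η)) ^ 2 * ((⌊4 * (X1 * X2) / 2 ^ L⌋₊ + 1 : ℕ) + d) *
      (⌊4 * (X1 * X2) / 2 ^ L⌋₊ + 1 : ℕ) := by
  set P := X1 * X2 with hP
  have hP1 : 1 ≤ P := by nlinarith
  set Zn := ⌊4 * P / 2 ^ L⌋₊ + 1 with hZn
  set V := hypV ⌊X2⌋₊ ⌊2 * X2⌋₊ u with hV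
  set c := dyp X1 (2 * X1) L with hc
  have hX12 : X1 ≤ 2 * X1 := by linarith
  have hL1' : 0 ≤ L1 := (hw10.trans (hw1 (Nat.zero_le _))).trans hL1
  have hL2' : 0 ≤ L2 := (hw20.trans (hw2 (Nat.zero_le _))).trans hL2
  have hcmono : Monotone c := fun i j h => dyp_mono X1 (2 * X1) hX12 L h
  have hc1 : ∀ i, X1 ≤ c i := by
    intro i
    have := hcmono (Nat.zero_le i)
    rw [hc, dyp_zero] at this
    exact this
  set S := (Finset.range (2 ^ L)).sigma (fun i => (Finset.Ioc ⌊c i⌋₊ ⌊c (i + 1)⌋₊).sigma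
    (fun n => Finset.Ioc (V (c (i + 1))) (V n))) with hS
  have hmem : ∀ x ∈ S, x.1 < 2 ^ L ∧ ⌊c x.1⌋₊ < x.2.1 ∧ x.2.1 ≤ ⌊c (x.1 + 1)⌋₊ ∧
      V (c (x.1 + 1)) < x.2.2 ∧ x.2.2 ≤ V x.2.1 := by
    intro x hx
    simp only [hS, Finset.mem_sigma, Finset.mem_range, Finset.mem_Ioc] at hx
    tauto
  have e : ∀ χ : DirichletCharacter ℂ d, ∑ i ∈ Finset.range (2 ^ L),
      hypG (fun n => (w1 n : ℂ) * χ (n : ZMod d)) (fun n => (w2 n : ℂ) * χ (n : ZMod d)) V (c i) (c (i + 1)) =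
      ∑ x ∈ S, ((w1 x.2.1 : ℂ) * w2 x.2.2) * χ ((x.2.1 * x.2.2 : ℕ) : ZMod d) := by
    intro χ
    rw [hS, Finset.sum_sigma]
    refine Finset.sum_congr rfl fun i _ => ?_
    rw [hypG, Finset.sum_sigma]
    refine Finset.sum_congr rfl fun n _ => ?_
    rw [Finset.mul_sum]
    refine Finset.sum_congr rfl fun m _ => ?_
    push_cast
    rw [map_mul]; ring
  simp_rw [e]
  -- facts about elements
  have hfacts : ∀ x ∈ S, 1 ≤ x.2.1 ∧ 1 ≤ x.2.2 ∧ x.2.1 * x.2.2 ≤ u ∧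
      (u : ℝ) - 4 * P / 2 ^ L < (x.2.1 : ℝ) * x.2.2 ∧ x.2.1 ≤ ⌊2 * X1⌋₊ ∧ x.2.2 ≤ ⌊2 * X2⌋₊ := by
    intro x hx
    obtain ⟨h1, h2, h3, h4, h5⟩ := hmem x hx
    obtain ⟨i, n, m⟩ := x
    simp only at h1 h2 h3 h4 h5 ⊢
    have hn1 : 1 ≤ n := by omega
    have hnR : (0 : ℝ) < n := by exact_mod_cast hn1
    rw [hV] at h4 h5
    unfold hypV at h4 h5
    have hu1 : m ≤ ⌊(u : ℝ) / n⌋₊ := by omega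
    have hu2 : ⌊(u : ℝ) / c (i + 1)⌋₊ < m := by omega
    have hm2 : m ≤ ⌊2 * X2⌋₊ := by
      have : ⌊X2⌋₊ ≤ ⌊2 * X2⌋₊ := Nat.floor_le_floor (by linarith)
      omega
    have hci : 0 < c i := by linarith [hc1 i]
    have hci1 : 0 < c (i + 1) := by linarith [hc1 (i + 1)]
    have hnm : (n : ℝ) * m ≤ u := by
      have : (m : ℝ) ≤ u / n := (Nat.le_floor_iff (by positivity)).mp hu1
      rw [le_div_iff₀ hnR] at this
      linarith
    have hmu : (u : ℝ) / c (i + 1) < m := (Nat.floor_lt (by positivity)).mp hu2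
    have hnc : c i < n := (Nat.floor_lt hci.le).mp h2
    refine ⟨hn1, by omega, by exact_mod_cast hnm, ?_, ?_, hm2⟩
    · have h6 : (u : ℝ) / c (i + 1) * c i ≤ n * m := by
        rw [mul_comm]
        exact mul_le_mul hnc.le hmu.le (by positivity) hnR.le
      have h6' : (u : ℝ) / c (i + 1) * c i < n * m := by
        rw [mul_comm]
        have hm0 : (0 : ℝ) < m := lt_of_le_of_lt (by positivity) hmu
        calc _ ≤ c i * m := by gcongr
          _ < _ := by gcongr
      refine lt_of_le_of_lt ?_ h6'
      have h7 : c i = c (i + 1) - X1 / 2 ^ L := by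
        rw [hc, dyp_succ]; ring
      have h8 : (u : ℝ) / c (i + 1) * c i = u - u * (X1 / c (i + 1)) / 2 ^ L := by
        rw [h7]; field_simp
      rw [h8]
      have h9 : X1 / c (i + 1) ≤ 1 := (div_le_one hci1).mpr (hc1 _)
      have h10 : (u : ℝ) * (X1 / c (i + 1)) ≤ 4 * P := by
        calc _ ≤ (u : ℝ) * 1 := by gcongr
          _ ≤ _ := by linarith
      gcongr
    · refine h3.trans (Nat.floor_le_floor ?_)
      have := hcmono (show i + 1 ≤ 2 ^ L by omega)
      rw [hc, dyp_top] at this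
      exact this
  have hfin := ls_count d S (fun x => ((w1 x.2.1 : ℂ) * w2 x.2.2)) (fun x => x.2.1 * x.2.2) (u - Zn) Zn
    (by
      intro x hx
      obtain ⟨g1, g2, g3, g4, -, -⟩ := hfacts x hx
      rw [Finset.mem_Ioc]
      refine ⟨?_, by omega⟩
      rcases le_or_gt u Zn with h | h
      · have := Nat.mul_pos g1 g2; omega
      · have h1 := Nat.lt_floor_add_one (4 * P / 2 ^ L)
        have h2 : ((u - Zn : ℕ) : ℝ) = u - Zn := Nat.cast_sub h.le
        have h3 : ((u - Zn : ℕ) : ℝ) < ((x.2.1 * x.2.2 : ℕ) : ℝ) := by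
          rw [h2, hZn]; push_cast; linarith
        exact_mod_cast h3)
    (L1 * L2 * (C * (4 * P) ^ η)) (by positivity) (by
      intro m _
      rcases Finset.eq_empty_or_nonempty (S.filter (fun x => x.2.1 * x.2.2 = m)) with h | ⟨x0, hx0⟩
      · rw [h]; simp; positivity
      have hm : 1 ≤ m ∧ m ≤ u := by
        rw [Finset.mem_filter] at hx0
        obtain ⟨g1, g2, g3, -⟩ := hfacts x0 hx0.1
        rw [← hx0.2]
        exact ⟨Nat.mul_pos g1 g2, g3⟩
      have hcard : (S.filter (fun x => x.2.1 * x.2.2 = m)).card ≤ m.divisors.card := by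
        apply Finset.card_le_card_of_injOn (fun x => x.2.1)
        · intro x hx
          have := (Finset.mem_filter.mp hx).2
          exact Nat.mem_divisors.mpr ⟨⟨x.2.2, this.symm⟩, by omega⟩
        · intro x hx y hy exy
          have hx' := Finset.mem_filter.mp hx
          have hy' := Finset.mem_filter.mp hy
          obtain ⟨g1, -⟩ := hfacts x hx'.1
          obtain ⟨-, p2, p3, -⟩ := hmem x hx'.1
          obtain ⟨-, q2, q3, -⟩ := hmem y hy'.1
          have hxm := hx'.2
          have hym := hy'.2
          obtain ⟨i, n, k⟩ := x
          obtain ⟨j, n', k'⟩ := y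
          simp only at *
          subst exy
          have hk : k = k' := Nat.eq_of_mul_eq_mul_left (by omega) (hxm.trans hym.symm)
          have hij : i = j := by
            rcases lt_trichotomy i j with h | h | h
            · have := Nat.floor_le_floor (hcmono (show i + 1 ≤ j by omega)); omega
            · exact h
            · have := Nat.floor_le_floor (hcmono (show j + 1 ≤ i by omega)); omega
          subst hk; subst hij; rfl
      calc _ ≤ ∑ x ∈ S.filter (fun x => x.2.1 * x.2.2 = m), L1 * L2 := by
            apply Finset.sum_le_sum
            intro x hx
            obtain ⟨-, -, -, -, g5, g6⟩ := hfacts x (Finset.mem_filter.mp hx).1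
            have a1 : 0 ≤ w1 x.2.1 := hw10.trans (hw1 (Nat.zero_le _))
            have a2 : 0 ≤ w2 x.2.2 := hw20.trans (hw2 (Nat.zero_le _))
            rw [norm_mul, Complex.norm_real, Complex.norm_real, Real.norm_of_nonneg a1, Real.norm_of_nonneg a2]
            exact mul_le_mul ((hw1 g5).trans hL1) ((hw2 g6).trans hL2) a2 hL1'
        _ = L1 * L2 * (S.filter (fun x => x.2.1 * x.2.2 = m)).card := by
            rw [Finset.sum_const, nsmul_eq_mul, mul_comm]
        _ ≤ _ := by
          gcongr
          calc ((S.filter (fun x => x.2.1 * x.2.2 = m)).card : ℝ) ≤ m.divisors.card := by exact_mod_cast hcard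
            _ ≤ C * (m : ℝ) ^ η := hC m hm.1
            _ ≤ _ := by
              have : (m : ℝ) ≤ 4 * P := le_trans (by exact_mod_cast hm.2) hu
              gcongr)
  exact hfin

/-- the decomposition of the truncated product -/
lemma bil_decomp (f g : ℕ → ℂ) (X1 X2 : ℝ) (hX1 : 1 ≤ X1) (hX2 : 1 ≤ X2) (u : ℕ) :
    ∑ p ∈ (Finset.Ioc ⌊X1⌋₊ ⌊2 * X1⌋₊ ×ˢ Finset.Ioc ⌊X2⌋₊ ⌊2 * X2⌋₊).filter (fun p => p.1 * p.2 ≤ u),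
      f p.1 * g p.2 =
    (∑ n ∈ Finset.Ioc ⌊X1⌋₊ ⌊2 * X1⌋₊, f n) *
      (∑ m ∈ Finset.Ioc ⌊X2⌋₊ (hypV ⌊X2⌋₊ ⌊2 * X2⌋₊ u (2 * X1)), g m) +
      hypG f g (hypV ⌊X2⌋₊ ⌊2 * X2⌋₊ u) X1 (2 * X1) := by
  set V := hypV ⌊X2⌋₊ ⌊2 * X2⌋₊ u with hV
  rw [Finset.sum_filter, Finset.sum_product, hypG, Finset.sum_mul, ← Finset.sum_add_distrib]
  refine Finset.sum_congr rfl fun n hn => ?_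
  rw [Finset.mem_Ioc] at hn
  have hn0 : (0 : ℝ) < n := by exact_mod_cast (by omega : 0 < n)
  have hn2 : (n : ℝ) ≤ 2 * X1 := (Nat.le_floor_iff (by linarith)).mp hn.2
  have h1 : ⌊X2⌋₊ ≤ V (2 * X1) := by rw [hV]; unfold hypV; omega
  have h2 : V (2 * X1) ≤ V n := hypV_anti _ _ _ hn0 (show (0 : ℝ) < 2 * X1 by linarith) hn2
  rw [← mul_add, ← sum_Ioc_split g h1 h2, Finset.mul_sum, ← Finset.sum_filter]
  apply Finset.sum_congr _ (fun _ _ => rfl)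
  ext m
  simp only [Finset.mem_filter, Finset.mem_Ioc]
  have h3 : n * m ≤ u ↔ m ≤ ⌊(u : ℝ) / n⌋₊ := by
    rw [Nat.le_floor_iff (by positivity), le_div_iff₀ hn0]
    constructor
    · intro h; rw [mul_comm]; exact_mod_cast h
    · intro h; rw [mul_comm]; exact_mod_cast h
  rw [h3, hV]
  unfold hypV
  omega

set_option maxHeartbeats 1000000 in
lemma bilinear_bound (η : ℝ) (hη : 0 < η) : ∃ C : ℝ, 1 ≤ C ∧ ∀ d : ℕ, 2 ≤ d →
    ∀ T : Finset (DirichletCharacter ℂ d), (∀ χ ∈ T, χ.IsPrimitive) →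
    ∀ (w1 w2 : ℕ → ℝ), Monotone w1 → Monotone w2 → 0 ≤ w1 0 → 0 ≤ w2 0 →
    ∀ (X1 X2 L1 L2 : ℝ), 1 ≤ X1 → 1 ≤ X2 → w1 ⌊2 * X1⌋₊ ≤ L1 → w2 ⌊2 * X2⌋₊ ≤ L2 → ∀ (L u : ℕ),
    ∑ χ ∈ T, ‖∑ p ∈ (Finset.Ioc ⌊X1⌋₊ ⌊2 * X1⌋₊ ×ˢ Finset.Ioc ⌊X2⌋₊ ⌊2 * X2⌋₊).filter
      (fun p => p.1 * p.2 ≤ u), ((w1 p.1 : ℂ) * w2 p.2) * χ ((p.1 * p.2 : ℕ) : ZMod d)‖ ^ 2 ≤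
    C * (d : ℝ) ^ η * (X1 * X2) ^ η * (L + 1 : ℝ) ^ 2 * (L1 ^ 2 * L2 ^ 2) *
      ((2 ^ L * d + √d * X1) * (2 ^ L * d + √d * X2) +
        (X1 * X2 / 2 ^ L + 1 + d) * (X1 * X2 / 2 ^ L + 1)) := by
  obtain ⟨C1, hC11, hC1⟩ := fourth_moment η hη
  obtain ⟨C2, hC21, hC2⟩ := divisor_bound (η / 2) (by positivity)
  refine ⟨12 * C1 + 48 * (C2 ^ 2 * 4 ^ η), ?_, ?_⟩
  · have : (0 : ℝ) ≤ 48 * (C2 ^ 2 * 4 ^ η) := by positivity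
    linarith
  intro d hd T hT w1 w2 hw1 hw2 hw10 hw20 X1 X2 L1 L2 hX1 hX2 hL1 hL2 L u
  have : NeZero d := ⟨by omega⟩
  have hdR : (0 : ℝ) < d := by exact_mod_cast (by omega : 0 < d)
  have hd1 : (1 : ℝ) ≤ d := by exact_mod_cast (by omega : 1 ≤ d)
  have hL1' : 0 ≤ L1 := (hw10.trans (hw1 (Nat.zero_le _))).trans hL1
  have hL2' : 0 ≤ L2 := (hw20.trans (hw2 (Nat.zero_le _))).trans hL2
  have hP1 : 1 ≤ X1 * X2 := by nlinarith
  have hX10 : 0 < X1 := by linarith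
  have hX20 : 0 < X2 := by linarith
  -- reduce to bounded u
  wlog hu : (u : ℝ) ≤ 4 * (X1 * X2) generalizing u with H
  · have h2 := H (⌊2 * X1⌋₊ * ⌊2 * X2⌋₊) (by
      push_cast
      have a1 := Nat.floor_le (show 0 ≤ 2 * X1 by linarith)
      have a2 := Nat.floor_le (show 0 ≤ 2 * X2 by linarith)
      calc _ ≤ (2 * X1) * (2 * X2) := by gcongr
        _ = _ := by ring)
    convert h2 using 5
    ext p
    simp only [Finset.mem_filter, Finset.mem_product, Finset.mem_Ioc]
    constructor
    · rintro ⟨h, -⟩; exact ⟨h, Nat.mul_le_mul h.1.2 h.2.2⟩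
    · rintro ⟨h, -⟩
      refine ⟨h, ?_⟩
      push Not at hu
      have h3 := Nat.mul_le_mul h.1.2 h.2.2
      have a1 := Nat.floor_le (show 0 ≤ 2 * X1 by linarith)
      have a2 := Nat.floor_le (show 0 ≤ 2 * X2 by linarith)
      have h4 : ((⌊2 * X1⌋₊ * ⌊2 * X2⌋₊ : ℕ) : ℝ) < u := by
        push_cast
        calc _ ≤ (2 * X1) * (2 * X2) := by gcongr
          _ = 4 * (X1 * X2) := by ring
          _ < _ := hu
      have h5 : ⌊2 * X1⌋₊ * ⌊2 * X2⌋₊ < u := by exact_mod_cast h4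
      omega
  set V := hypV ⌊X2⌋₊ ⌊2 * X2⌋₊ u with hV
  have hVa : AntitoneOn V (Set.Ioi 0) := hypV_anti _ _ _
  set f : DirichletCharacter ℂ d → ℕ → ℂ := fun χ n => (w1 n : ℂ) * χ (n : ZMod d) with hf
  set g : DirichletCharacter ℂ d → ℕ → ℂ := fun χ n => (w2 n : ℂ) * χ (n : ZMod d) with hg
  have e1 : ∀ χ : DirichletCharacter ℂ d, ∑ p ∈ (Finset.Ioc ⌊X1⌋₊ ⌊2 * X1⌋₊ ×ˢ Finset.Ioc ⌊X2⌋₊ ⌊2 * X2⌋₊).filter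
      (fun p => p.1 * p.2 ≤ u), ((w1 p.1 : ℂ) * w2 p.2) * χ ((p.1 * p.2 : ℕ) : ZMod d) =
      (∑ n ∈ Finset.Ioc ⌊X1⌋₊ ⌊2 * X1⌋₊, f χ n) * (∑ m ∈ Finset.Ioc ⌊X2⌋₊ (V (2 * X1)), g χ m) +
      (∑ l ∈ Finset.range L, ∑ i ∈ Finset.range (2 ^ l), hypR (f χ) (g χ) V X1 (2 * X1) l i +
      ∑ i ∈ Finset.range (2 ^ L), hypG (f χ) (g χ) V (dyp X1 (2 * X1) L i) (dyp X1 (2 * X1) L (i + 1))) := by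
    intro χ
    rw [← hypG_decomp (f χ) (g χ) V hVa X1 (2 * X1) (by linarith) (by linarith) L,
      ← bil_decomp (f χ) (g χ) X1 X2 hX1 hX2 u]
    refine Finset.sum_congr rfl fun p _ => ?_
    push_cast
    simp only [hf, hg]
    rw [map_mul]; ring
  simp_rw [e1]
  set K := C1 * (d : ℝ) ^ η with hK
  have hK0 : 0 ≤ K := by positivity
  set sd := √(d : ℝ) with hsd
  have hsd0 : 0 ≤ sd := Real.sqrt_nonneg _
  have hsdd : sd ≤ d := by
    rw [hsd, Real.sqrt_le_left hdR.le]; nlinarith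
  set Q := (2 ^ L * d + sd * X1) * (2 ^ L * d + sd * X2) with hQ
  have hV2 : ∀ c, V c ≤ ⌊2 * X2⌋₊ := by
    intro c
    have : ⌊X2⌋₊ ≤ ⌊2 * X2⌋₊ := Nat.floor_le_floor (by linarith)
    rw [hV]; unfold hypV; omega
  -- generic rectangle
  have rect : ∀ (p q r s : ℕ) (Y1 Y2 : ℝ), q ≤ ⌊2 * X1⌋₊ → s ≤ ⌊2 * X2⌋₊ →
      ((q - p : ℕ) : ℝ) ≤ Y1 → ((s - r : ℕ) : ℝ) ≤ Y2 →
      ∑ χ ∈ T, ‖(∑ n ∈ Finset.Ioc p q, f χ n) * ∑ n ∈ Finset.Ioc r s, g χ n‖ ^ 2 ≤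
        K * (L1 ^ 2 * L2 ^ 2) * ((d + sd * Y1) * (d + sd * Y2)) := by
    intro p q r s Y1 Y2 hq hs hY1 hY2
    have hY10 : 0 ≤ Y1 := le_trans (by positivity) hY1
    have hY20 : 0 ≤ Y2 := le_trans (by positivity) hY2
    apply rect_bound d T _ _ K L1 L2 Y1 Y2 hK0 hL1' hL2' hY10 hY20
    · refine (hC1 d hd T hT w1 hw1 hw10 p q L1 ((hw1 hq).trans hL1)).trans ?_
      gcongr
    · refine (hC1 d hd T hT w2 hw2 hw20 r s L2 ((hw2 hs).trans hL2)).trans ?_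
      gcongr
  have h2L : (1 : ℝ) ≤ 2 ^ L := one_le_pow₀ (by norm_num)
  -- piece one
  have hp1 : ∑ χ ∈ T, ‖(∑ n ∈ Finset.Ioc ⌊X1⌋₊ ⌊2 * X1⌋₊, f χ n) *
      (∑ m ∈ Finset.Ioc ⌊X2⌋₊ (V (2 * X1)), g χ m)‖ ^ 2 ≤ 4 * (K * (L1 ^ 2 * L2 ^ 2) * Q) := by
    refine (rect _ _ _ _ (X1 + 1) (X2 + 1) le_rfl (hV2 _) (floor_sub_le _ _ _ (by linarith) (by linarith)
      (by linarith)) ?_).trans ?_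
    · have h3 := floor_sub_le X2 (2 * X2) X2 (by linarith) (by linarith) (by linarith)
      refine le_trans ?_ h3
      have := hV2 (2 * X1)
      exact_mod_cast (by omega : V (2 * X1) - ⌊X2⌋₊ ≤ ⌊2 * X2⌋₊ - ⌊X2⌋₊)
    · have h3 : ∀ X : ℝ, 0 < X → d + sd * (X + 1) ≤ 2 * (2 ^ L * d + sd * X) := by
        intro X hX
        have : 0 ≤ sd * X := by positivity
        nlinarith
      calc _ ≤ K * (L1 ^ 2 * L2 ^ 2) * ((2 * (2 ^ L * d + sd * X1)) * (2 * (2 ^ L * d + sd * X2))) := by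
            gcongr
            · exact h3 X1 hX10
            · exact h3 X2 hX20
        _ = _ := by rw [hQ]; ring
  -- level bound
  have hlev : ∀ l ∈ Finset.range L, ∑ χ ∈ T, ‖∑ i ∈ Finset.range (2 ^ l), hypR (f χ) (g χ) V X1 (2 * X1) l i‖ ^ 2 ≤
      4 * (K * (L1 ^ 2 * L2 ^ 2) * Q) := by
    intro l hl
    rw [Finset.mem_range] at hl
    refine (sum_norm_sq_le T (Finset.range (2 ^ l)) (fun χ i => hypR (f χ) (g χ) V X1 (2 * X1) l i)
      (K * (L1 ^ 2 * L2 ^ 2) * ((d + sd * (X1 / 2 ^ (l + 1) + 1)) * (d + sd * (4 * X2 / 2 ^ (l + 1) + 1)))) ?_).trans ?_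
    · intro i hi
      rw [Finset.mem_range] at hi
      set c := dyp X1 (2 * X1) (l + 1) with hc
      have hcm : Monotone c := fun i j h => dyp_mono X1 (2 * X1) (by linarith) (l + 1) h
      have hc1 : ∀ j, X1 ≤ c j := by
        intro j
        have := hcm (Nat.zero_le j)
        rw [hc, dyp_zero] at this
        exact this
      have hsucc : ∀ j, c (j + 1) = c j + X1 / 2 ^ (l + 1) := by
        intro j; rw [hc, dyp_succ]; ring
      have hc2 : c (2 * i + 1) ≤ 2 * X1 := by
        have := hcm (show 2 * i + 1 ≤ 2 ^ (l + 1) by rw [pow_succ]; omega)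
        rw [hc, dyp_top] at this
        exact this
      unfold hypR
      apply rect
      · exact Nat.floor_le_floor hc2
      · exact hV2 _
      · apply floor_sub_le
        · exact hX10.le.trans (hc1 _)
        · exact hcm (by omega)
        · have := hsucc (2 * i); linarith
      · have hx := hc1 (2 * i + 1)
        have hy := hc1 (2 * i + 2)
        have hx0 : 0 < c (2 * i + 1) := by linarith
        have hy0 : 0 < c (2 * i + 2) := by linarith
        apply hypV_sub
        · exact hx0
        · exact hcm (by omega)
        · have h6 := hsucc (2 * i + 1)
          have h6' : c (2 * i + 2) = c (2 * i + 1) + X1 / 2 ^ (l + 1) := h6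
          rw [← hc]
          have h7 : (u : ℝ) / c (2 * i + 1) - u / c (2 * i + 2) =
              u * (X1 / 2 ^ (l + 1)) / (c (2 * i + 1) * c (2 * i + 2)) := by
            rw [div_sub_div _ _ hx0.ne' hy0.ne']
            congr 1
            rw [h6']; ring
          rw [h7, div_le_iff₀ (by positivity)]
          calc (u : ℝ) * (X1 / 2 ^ (l + 1)) ≤ 4 * (X1 * X2) * (X1 / 2 ^ (l + 1)) := by gcongr
            _ = 4 * X2 / 2 ^ (l + 1) * (X1 * X1) := by ring
            _ ≤ _ := by gcongr
    · have hll : (2 : ℝ) ^ l ≤ 2 ^ L := pow_le_pow_right₀ (by norm_num) hl.le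
      have hl0 : (0 : ℝ) < 2 ^ l := by positivity
      rw [Finset.card_range]
      push_cast
      have h3 : 2 ^ l * (d + sd * (X1 / 2 ^ (l + 1) + 1)) ≤ 2 * (2 ^ L * d + sd * X1) := by
        have : (2 : ℝ) ^ l * (d + sd * (X1 / 2 ^ (l + 1) + 1)) = 2 ^ l * d + 2 ^ l * sd + sd * X1 / 2 := by
          rw [pow_succ]; field_simp; ring
        rw [this]
        have h4 : (2 : ℝ) ^ l * d ≤ 2 ^ L * d := by gcongr
        have h5 : (2 : ℝ) ^ l * sd ≤ 2 ^ L * d := by gcongr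
        have : 0 ≤ sd * X1 := by positivity
        linarith
      have h3' : 2 ^ l * (d + sd * (4 * X2 / 2 ^ (l + 1) + 1)) ≤ 2 * (2 ^ L * d + sd * X2) := by
        have : (2 : ℝ) ^ l * (d + sd * (4 * X2 / 2 ^ (l + 1) + 1)) = 2 ^ l * d + 2 ^ l * sd + 2 * (sd * X2) := by
          rw [pow_succ]; field_simp; ring
        rw [this]
        have h4 : (2 : ℝ) ^ l * d ≤ 2 ^ L * d := by gcongr
        have h5 : (2 : ℝ) ^ l * sd ≤ 2 ^ L * d := by gcongr
        linarith
      calc _ = K * (L1 ^ 2 * L2 ^ 2) * ((2 ^ l * (d + sd * (X1 / 2 ^ (l + 1) + 1))) *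
              (2 ^ l * (d + sd * (4 * X2 / 2 ^ (l + 1) + 1)))) := by ring
        _ ≤ K * (L1 ^ 2 * L2 ^ 2) * ((2 * (2 ^ L * d + sd * X1)) * (2 * (2 ^ L * d + sd * X2))) := by
            gcongr
        _ = _ := by rw [hQ]; ring
  have hp2 := sum_norm_sq_le T (Finset.range L) (fun χ l => ∑ i ∈ Finset.range (2 ^ l), hypR (f χ) (g χ) V X1 (2 * X1) l i) _ hlev
  rw [Finset.card_range] at hp2
  have hp3 := hyp_rem (η / 2) C2 (by positivity) hC21 hC2 d w1 w2 hw1 hw2 hw10 hw20 X1 X2 L1 L2 hX1 hX2 hL1 hL2 L u hu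
  have hp3' : ∑ χ ∈ T, ‖∑ i ∈ Finset.range (2 ^ L), hypG (f χ) (g χ) V (dyp X1 (2 * X1) L i) (dyp X1 (2 * X1) L (i + 1))‖ ^ 2 ≤
      (C2 ^ 2 * 4 ^ η) * ((X1 * X2) ^ η * (L1 ^ 2 * L2 ^ 2)) * (16 * ((X1 * X2 / 2 ^ L + 1 + d) * (X1 * X2 / 2 ^ L + 1))) := by
    refine (Finset.sum_le_sum_of_subset_of_nonneg (Finset.subset_univ T) (fun _ _ _ => by positivity)).trans ?_
    refine hp3.trans ?_
    have hpw : ((4 * (X1 * X2)) ^ (η / 2)) ^ 2 = 4 ^ η * (X1 * X2) ^ η := by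
      rw [← Real.rpow_natCast, ← Real.rpow_mul (by positivity), Real.mul_rpow (by norm_num) (by positivity)]
      norm_num
    have hz : ((⌊4 * (X1 * X2) / 2 ^ L⌋₊ + 1 : ℕ) : ℝ) ≤ 4 * (X1 * X2 / 2 ^ L + 1) := by
      push_cast
      have := Nat.floor_le (show 0 ≤ 4 * (X1 * X2) / 2 ^ L by positivity)
      have h4 : 4 * (X1 * X2) / 2 ^ L = 4 * (X1 * X2 / 2 ^ L) := by ring
      linarith
    have hz0 : (0 : ℝ) ≤ X1 * X2 / 2 ^ L + 1 := by positivity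
    calc _ = (C2 ^ 2 * 4 ^ η) * ((X1 * X2) ^ η * (L1 ^ 2 * L2 ^ 2)) * (((⌊4 * (X1 * X2) / 2 ^ L⌋₊ + 1 : ℕ) + d) *
           (⌊4 * (X1 * X2) / 2 ^ L⌋₊ + 1 : ℕ)) := by
          rw [mul_pow, mul_pow C2, hpw]; ring
      _ ≤ (C2 ^ 2 * 4 ^ η) * ((X1 * X2) ^ η * (L1 ^ 2 * L2 ^ 2)) * ((4 * (X1 * X2 / 2 ^ L + 1 + d)) * (4 * (X1 * X2 / 2 ^ L + 1))) := by
          gcongr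
          linarith
      _ = _ := by ring
  have hdη : 1 ≤ (d : ℝ) ^ η := Real.one_le_rpow hd1 hη.le
  have hPη : 1 ≤ (X1 * X2) ^ η := Real.one_le_rpow hP1 hη.le
  have hLL : (1 : ℝ) ≤ (L + 1 : ℝ) ^ 2 := by
    apply one_le_pow₀; have : (0 : ℝ) ≤ L := by positivity
    linarith
  calc _ ≤ ∑ χ ∈ T, 3 * (‖(∑ n ∈ Finset.Ioc ⌊X1⌋₊ ⌊2 * X1⌋₊, f χ n) *
      (∑ m ∈ Finset.Ioc ⌊X2⌋₊ (V (2 * X1)), g χ m)‖ ^ 2 +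
      ‖∑ l ∈ Finset.range L, ∑ i ∈ Finset.range (2 ^ l), hypR (f χ) (g χ) V X1 (2 * X1) l i‖ ^ 2 +
      ‖∑ i ∈ Finset.range (2 ^ L), hypG (f χ) (g χ) V (dyp X1 (2 * X1) L i) (dyp X1 (2 * X1) L (i + 1))‖ ^ 2) :=
        Finset.sum_le_sum fun χ _ => norm_add3_sq _ _ _
    _ ≤ 3 * (4 * (K * (L1 ^ 2 * L2 ^ 2) * Q) + (L : ℝ) ^ 2 * (4 * (K * (L1 ^ 2 * L2 ^ 2) * Q)) +
        (C2 ^ 2 * 4 ^ η) * ((X1 * X2) ^ η * (L1 ^ 2 * L2 ^ 2)) * (16 * ((X1 * X2 / 2 ^ L + 1 + d) * (X1 * X2 / 2 ^ L + 1)))) := by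
        rw [← Finset.mul_sum, Finset.sum_add_distrib, Finset.sum_add_distrib]
        gcongr
    _ = 12 * C1 * (d : ℝ) ^ η * (1 + (L : ℝ) ^ 2) * (L1 ^ 2 * L2 ^ 2) * Q +
        48 * (C2 ^ 2 * 4 ^ η) * ((X1 * X2) ^ η) * (L1 ^ 2 * L2 ^ 2) * ((X1 * X2 / 2 ^ L + 1 + d) * (X1 * X2 / 2 ^ L + 1)) := by
        rw [hK]; ring
    _ ≤ 12 * C1 * ((d : ℝ) ^ η * (X1 * X2) ^ η * (L + 1 : ℝ) ^ 2) * (L1 ^ 2 * L2 ^ 2) * Q +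
        48 * (C2 ^ 2 * 4 ^ η) * ((d : ℝ) ^ η * (X1 * X2) ^ η * (L + 1 : ℝ) ^ 2) * (L1 ^ 2 * L2 ^ 2) * ((X1 * X2 / 2 ^ L + 1 + d) * (X1 * X2 / 2 ^ L + 1)) := by
        have hQ0 : 0 ≤ Q := by positivity
        have q1 : (d : ℝ) ^ η * (1 + (L : ℝ) ^ 2) ≤ (d : ℝ) ^ η * (X1 * X2) ^ η * (L + 1 : ℝ) ^ 2 := by
          rw [mul_assoc]
          gcongr
          calc (1 + (L : ℝ) ^ 2) ≤ 1 * (L + 1 : ℝ) ^ 2 := by nlinarith [(Nat.cast_nonneg L : (0 : ℝ) ≤ L)]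
            _ ≤ _ := by gcongr
        have q2 : (X1 * X2) ^ η ≤ (d : ℝ) ^ η * (X1 * X2) ^ η * (L + 1 : ℝ) ^ 2 := by
          calc (X1 * X2) ^ η = 1 * (X1 * X2) ^ η * 1 := by ring
            _ ≤ _ := by gcongr
        have := mul_le_mul_of_nonneg_left q1 (show 0 ≤ 12 * C1 by linarith)
        rw [show 12 * C1 * (d : ℝ) ^ η * (1 + (L : ℝ) ^ 2) = 12 * C1 * ((d : ℝ) ^ η * (1 + (L : ℝ) ^ 2)) by ring]
        gcongr
    _ ≤ 12 * C1 * ((d : ℝ) ^ η * (X1 * X2) ^ η * (L + 1 : ℝ) ^ 2) * (L1 ^ 2 * L2 ^ 2) * (Q + ((X1 * X2 / 2 ^ L + 1 + d) * (X1 * X2 / 2 ^ L + 1))) +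
        48 * (C2 ^ 2 * 4 ^ η) * ((d : ℝ) ^ η * (X1 * X2) ^ η * (L + 1 : ℝ) ^ 2) * (L1 ^ 2 * L2 ^ 2) * (Q + ((X1 * X2 / 2 ^ L + 1 + d) * (X1 * X2 / 2 ^ L + 1))) := by
        have hQ0 : 0 ≤ Q := by positivity
        have hR0 : 0 ≤ (X1 * X2 / 2 ^ L + 1 + d) * (X1 * X2 / 2 ^ L + 1) := by positivity
        gcongr
        · linarith
        · linarith
    _ = _ := by ring

/-- mean square bound -/
def MSB {κ : Type*} (T : Finset κ) (F : κ → ℝ → ℂ) (q : ℝ) : Prop :=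
  Integrable (fun t : ℝ => ∑ χ ∈ T, ‖F χ t‖ ^ 2 * ((t ^ 2 + 1 / 4 : ℝ))⁻¹) ∧
    ∫ t : ℝ, ∑ χ ∈ T, ‖F χ t‖ ^ 2 * ((t ^ 2 + 1 / 4 : ℝ))⁻¹ ≤ q

lemma MSB.mono {κ : Type*} {T : Finset κ} {F : κ → ℝ → ℂ} {q q' : ℝ} (h : MSB T F q) (hq : q ≤ q') :
    MSB T F q' := ⟨h.1, h.2.trans hq⟩

lemma MSB.of_genDP {κ ι : Type*} (T : Finset κ) (S : Finset ι) (w : κ → ι → ℂ) (f : ι → ℕ)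
    (hf : ∀ i ∈ S, 1 ≤ f i) (Z Bd : ℝ) (hZ : 0 < Z) (hfZ : ∀ i ∈ S, Z ≤ f i)
    (hB : ∀ k : ℕ, ∑ χ ∈ T, ‖∑ i ∈ S with f i ≤ k, w χ i‖ ^ 2 ≤ Bd)
    (F : κ → ℝ → ℂ) (hF : ∀ χ ∈ T, ∀ t, F χ t = genDP S (w χ) f t) : MSB T F (2 * π * (Bd / Z)) := by
  have e : (fun t : ℝ => ∑ χ ∈ T, ‖F χ t‖ ^ 2 * ((t ^ 2 + 1 / 4 : ℝ))⁻¹) =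
      fun t : ℝ => ∑ χ ∈ T, ‖genDP S (w χ) f t‖ ^ 2 * ((t ^ 2 + 1 / 4 : ℝ))⁻¹ := by
    funext t
    exact Finset.sum_congr rfl fun χ hχ => by rw [hF χ hχ t]
  unfold MSB
  rw [e]
  refine ⟨?_, genDP_mean T S w f hf Z Bd hZ hfZ hB⟩
  apply integrable_finsetSum
  intro χ _
  exact genDP_sq_integrable S (w χ) f hf

lemma MSB.cauchy {κ : Type*} (T : Finset κ) (F G : κ → ℝ → ℂ) (q1 q2 : ℝ) (h1 : 0 < q1) (h2 : 0 < q2)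
    (hF : MSB T F q1) (hG : MSB T G q2) :
    ∫ t : ℝ, (∑ χ ∈ T, ‖F χ t * G χ t‖) / (t ^ 2 + 1) ≤ √(q1 * q2) := by
  set l := √(q2 / q1) with hl
  have hl0 : 0 < l := Real.sqrt_pos.mpr (by positivity)
  have hintg := (hF.1.const_mul (l / 2)).add (hG.1.const_mul (1 / (2 * l)))
  have hle : ∀ t : ℝ, (∑ χ ∈ T, ‖F χ t * G χ t‖) / (t ^ 2 + 1) ≤
      l / 2 * (∑ χ ∈ T, ‖F χ t‖ ^ 2 * ((t ^ 2 + 1 / 4 : ℝ))⁻¹) +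
        1 / (2 * l) * (∑ χ ∈ T, ‖G χ t‖ ^ 2 * ((t ^ 2 + 1 / 4 : ℝ))⁻¹) := by
    intro t
    rw [Finset.mul_sum, Finset.mul_sum, ← Finset.sum_add_distrib, Finset.sum_div]
    apply Finset.sum_le_sum
    intro χ _
    rw [norm_mul]
    have hw : (t ^ 2 + 1)⁻¹ ≤ ((t ^ 2 + 1 / 4 : ℝ))⁻¹ := by
      apply inv_anti₀ (by positivity); linarith
    have hab : ‖F χ t‖ * ‖G χ t‖ ≤ l / 2 * ‖F χ t‖ ^ 2 + 1 / (2 * l) * ‖G χ t‖ ^ 2 := by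
      have h3 : l / 2 * ‖F χ t‖ ^ 2 + 1 / (2 * l) * ‖G χ t‖ ^ 2 - ‖F χ t‖ * ‖G χ t‖ =
        1 / (2 * l) * (l * ‖F χ t‖ - ‖G χ t‖) ^ 2 := by field_simp; ring
      have : 0 ≤ 1 / (2 * l) * (l * ‖F χ t‖ - ‖G χ t‖) ^ 2 := by positivity
      linarith
    calc _ = (‖F χ t‖ * ‖G χ t‖) * (t ^ 2 + 1)⁻¹ := by rw [div_eq_mul_inv]
      _ ≤ (l / 2 * ‖F χ t‖ ^ 2 + 1 / (2 * l) * ‖G χ t‖ ^ 2) * ((t ^ 2 + 1 / 4 : ℝ))⁻¹ := by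
        gcongr
      _ = _ := by ring
  calc _ ≤ ∫ t : ℝ, (l / 2 * (∑ χ ∈ T, ‖F χ t‖ ^ 2 * ((t ^ 2 + 1 / 4 : ℝ))⁻¹) +
        1 / (2 * l) * (∑ χ ∈ T, ‖G χ t‖ ^ 2 * ((t ^ 2 + 1 / 4 : ℝ))⁻¹)) := by
        apply integral_mono_of_nonneg
        · exact Filter.Eventually.of_forall fun t => div_nonneg (Finset.sum_nonneg fun _ _ => norm_nonneg _) (by positivity)
        · exact hintg
        · exact Filter.Eventually.of_forall hle
    _ = l / 2 * (∫ t : ℝ, ∑ χ ∈ T, ‖F χ t‖ ^ 2 * ((t ^ 2 + 1 / 4 : ℝ))⁻¹) +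
        1 / (2 * l) * ∫ t : ℝ, ∑ χ ∈ T, ‖G χ t‖ ^ 2 * ((t ^ 2 + 1 / 4 : ℝ))⁻¹ := by
        rw [integral_add (hF.1.const_mul _) (hG.1.const_mul _), integral_const_mul, integral_const_mul]
    _ ≤ l / 2 * q1 + 1 / (2 * l) * q2 := by
        have := hF.2
        have := hG.2
        gcongr
    _ = _ := by
      have e1 : l * q1 = √(q1 * q2) := by
        rw [hl, show q1 * q2 = (q2 / q1) * q1 ^ 2 by field_simp, Real.sqrt_mul (by positivity), Real.sqrt_sq h1.le]
      have e2 : q2 = l * √(q1 * q2) := by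
        rw [hl, ← Real.sqrt_mul (by positivity), show q2 / q1 * (q1 * q2) = q2 ^ 2 by field_simp, Real.sqrt_sq h2.le]
      have e3 : 1 / (2 * l) * q2 = √(q1 * q2) / 2 := by
        rw [e2, ← e2]
        nth_rewrite 1 [e2]
        field_simp
      rw [e3]; linarith

/-- Dirichlet polynomial with controlled support and size. -/
def DPoly (d : ℕ) (F : DirichletCharacter ℂ d → ℝ → ℂ) (Z R W : ℝ) : Prop :=
  ∃ (S : Finset ℕ) (c : ℕ → ℂ), (∀ n ∈ S, 1 ≤ n ∧ Z ≤ n ∧ (n : ℝ) ≤ R) ∧ (∀ n ∈ S, ‖c n‖ ≤ W) ∧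
    ∀ χ t, F χ t = ∑ n ∈ S, c n * χ (n : ZMod d) * (n : ℂ) ^ (-(1 / 2 : ℂ) - Complex.I * t)

lemma DPoly.one (d : ℕ) : DPoly d (fun _ _ => 1) 1 1 1 := by
  refine ⟨{1}, fun _ => 1, by simp, by simp, ?_⟩
  intro χ t
  simp

lemma DPoly.mul {d : ℕ} {F1 F2 : DirichletCharacter ℂ d → ℝ → ℂ} {Z1 R1 W1 Z2 R2 W2 : ℝ}
    (h1 : DPoly d F1 Z1 R1 W1) (h2 : DPoly d F2 Z2 R2 W2) (hZ1 : 0 ≤ Z1) (hZ2 : 0 ≤ Z2)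
    (hR1 : 0 ≤ R1) (hR2 : 0 ≤ R2)
    (hW1 : 0 ≤ W1) (hW2 : 0 ≤ W2) (Ct : ℝ)
    (hCt : ∀ n : ℕ, 1 ≤ n → (n : ℝ) ≤ R1 * R2 → (n.divisors.card : ℝ) ≤ Ct) :
    DPoly d (fun χ t => F1 χ t * F2 χ t) (Z1 * Z2) (R1 * R2) (Ct * (W1 * W2)) := by
  classical
  obtain ⟨S1, c1, s1, b1, e1⟩ := h1
  obtain ⟨S2, c2, s2, b2, e2⟩ := h2
  set P := S1 ×ˢ S2 with hP
  set S := P.image (fun p => p.1 * p.2) with hS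
  have hmem : ∀ n ∈ S, 1 ≤ n ∧ Z1 * Z2 ≤ n ∧ (n : ℝ) ≤ R1 * R2 := by
    intro n hn
    simp only [hS, hP, Finset.mem_image, Finset.mem_product] at hn
    obtain ⟨p, ⟨hp1, hp2⟩, rfl⟩ := hn
    obtain ⟨x1, x2, x3⟩ := s1 _ hp1
    obtain ⟨y1, y2, y3⟩ := s2 _ hp2
    refine ⟨Nat.mul_pos x1 y1, ?_, ?_⟩
    · push_cast; exact mul_le_mul x2 y2 hZ2 (by positivity)
    · push_cast; exact mul_le_mul x3 y3 (by positivity) hR1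
  refine ⟨S, fun n => ∑ p ∈ P.filter (fun p => p.1 * p.2 = n), c1 p.1 * c2 p.2, hmem, ?_, ?_⟩
  · intro n hn
    obtain ⟨x1, x2, x3⟩ := hmem n hn
    have hcard : (P.filter (fun p => p.1 * p.2 = n)).card ≤ n.divisors.card := by
      apply Finset.card_le_card_of_injOn (fun p => p.1)
      · intro p hp
        have := (Finset.mem_filter.mp hp).2
        exact Nat.mem_divisors.mpr ⟨⟨p.2, this.symm⟩, by omega⟩
      · intro p hp q hq e
        have hp2 := (Finset.mem_filter.mp hp).2
        have hq2 := (Finset.mem_filter.mp hq).2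
        have hp1 := (Finset.mem_filter.mp hp).1
        simp only [hP, Finset.mem_product] at hp1
        simp only at e
        have : p.1 * p.2 = p.1 * q.2 := by rw [hp2, e, hq2]
        have hpos := (s1 _ hp1.1).1
        exact Prod.ext e (Nat.eq_of_mul_eq_mul_left (by omega) this)
    calc _ ≤ ∑ p ∈ P.filter (fun p => p.1 * p.2 = n), W1 * W2 := by
          refine (norm_sum_le _ _).trans (Finset.sum_le_sum fun p hp => ?_)
          have hp1 := (Finset.mem_filter.mp hp).1
          simp only [hP, Finset.mem_product] at hp1
          rw [norm_mul]
          exact mul_le_mul (b1 _ hp1.1) (b2 _ hp1.2) (norm_nonneg _) hW1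
      _ = (P.filter (fun p => p.1 * p.2 = n)).card * (W1 * W2) := by rw [Finset.sum_const, nsmul_eq_mul]
      _ ≤ _ := by
        gcongr
        exact le_trans (by exact_mod_cast hcard) (hCt n x1 x3)
  · intro χ t
    have hmap : ∀ p ∈ P, p.1 * p.2 ∈ S := fun p hp => Finset.mem_image_of_mem _ hp
    show F1 χ t * F2 χ t = ∑ n ∈ S, (∑ p ∈ P.filter (fun p => p.1 * p.2 = n), c1 p.1 * c2 p.2) *
      χ (n : ZMod d) * (n : ℂ) ^ (-(1 / 2 : ℂ) - Complex.I * t)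
    rw [e1, e2, Finset.sum_mul_sum, ← Finset.sum_product', ← hP, ← Finset.sum_fiberwise_of_maps_to hmap]
    refine Finset.sum_congr rfl fun n _ => ?_
    rw [Finset.sum_mul, Finset.sum_mul]
    refine Finset.sum_congr rfl fun p hp => ?_
    rw [← (Finset.mem_filter.mp hp).2, Nat.cast_mul, map_mul, Nat.cast_mul, Complex.natCast_mul_natCast_cpow]
    ring

lemma DPoly.prod {d : ℕ} {ι : Type*} [DecidableEq ι] (F : ι → DirichletCharacter ℂ d → ℝ → ℂ) (Z : ι → ℝ)
    (W Ct Rm : ℝ) (hZ : ∀ j, 1 ≤ Z j) (hW : 1 ≤ W) (hF : ∀ j, DPoly d (F j) (Z j) (2 * Z j) W)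
    (hCt1 : 1 ≤ Ct) (hCt : ∀ n : ℕ, 1 ≤ n → (n : ℝ) ≤ Rm → (n.divisors.card : ℝ) ≤ Ct)
    (J : Finset ι) (hR : ∀ J' ⊆ J, 2 ^ J'.card * ∏ j ∈ J', Z j ≤ Rm) :
    DPoly d (fun χ t => ∏ j ∈ J, F j χ t) (∏ j ∈ J, Z j) (2 ^ J.card * ∏ j ∈ J, Z j) ((Ct * W) ^ J.card) := by
  induction J using Finset.induction_on with
  | empty => simpa using DPoly.one d
  | insert a J ha ih =>
    have h1 := ih (fun J' hJ' => hR J' (hJ'.trans (Finset.subset_insert _ _)))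
    have hR1 := hR _ (Finset.Subset.refl _)
    rw [Finset.card_insert_of_notMem ha, Finset.prod_insert ha] at hR1
    have hp0 : 0 ≤ ∏ j ∈ J, Z j := Finset.prod_nonneg fun j _ => by linarith [hZ j]
    have hza := hZ a
    have h2 := DPoly.mul (hF a) h1 (by linarith) hp0 (by linarith) (by positivity) (by linarith) (by positivity) Ct
      (fun n hn hn2 => hCt n hn (hn2.trans (le_trans (le_of_eq (by ring)) hR1)))
    simp only [Finset.prod_insert ha, Finset.card_insert_of_notMem ha]
    convert h2 using 1
    · ring
    · ring

lemma DPoly.msb {d : ℕ} [NeZero d] {F : DirichletCharacter ℂ d → ℝ → ℂ} {Z R W : ℝ}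
    (h : DPoly d F Z R W) (hZ : 0 < Z) (hR : 0 ≤ R) (hW : 0 ≤ W) (T : Finset (DirichletCharacter ℂ d)) :
    MSB T F (2 * π * (W ^ 2 * (R + d) * R / Z)) := by
  obtain ⟨S, c, s, b, e⟩ := h
  apply MSB.of_genDP T S (fun χ n => c n * χ (n : ZMod d)) (fun n => n) (fun n hn => (s n hn).1) Z _ hZ
    (fun n hn => (s n hn).2.1)
  · intro k
    refine (Finset.sum_le_sum_of_subset_of_nonneg (Finset.subset_univ T) (fun _ _ _ => by positivity)).trans ?_
    refine (ls_count d (S.filter (fun n => n ≤ k)) c (fun n => n) 0 ⌊R⌋₊ ?_ W hW ?_).trans ?_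
    · intro n hn
      obtain ⟨x1, x2, x3⟩ := s n (Finset.mem_filter.mp hn).1
      rw [Finset.mem_Ioc, zero_add]
      exact ⟨x1, Nat.le_floor x3⟩
    · intro m _
      by_cases hm : m ∈ S.filter (fun n => n ≤ k)
      · rw [Finset.filter_eq' _ m, if_pos hm, Finset.sum_singleton]
        exact b m (Finset.mem_filter.mp hm).1
      · rw [Finset.filter_eq' _ m, if_neg hm]; simpa using hW
    · have := Nat.floor_le hR
      gcongr
  · intro χ _ t
    rw [e]; rfl

lemma single_bound (η : ℝ) (hη : 0 < η) : ∃ C, 1 ≤ C ∧ ∀ d : ℕ, 2 ≤ d → ∀ T : Finset (DirichletCharacter ℂ d),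
    (∀ χ ∈ T, χ.IsPrimitive) → ∀ w : ℕ → ℝ, Monotone w → 0 ≤ w 0 → ∀ X L : ℝ, 1 ≤ X → w ⌊2 * X⌋₊ ≤ L → ∀ u : ℕ,
    ∑ χ ∈ T, ‖∑ n ∈ (Ioc ⌊X⌋₊ ⌊2 * X⌋₊).filter (fun n => n ≤ u), (w n : ℂ) * χ (n : ZMod d)‖ ^ 2 ≤
      C * (d : ℝ) ^ η * L ^ 2 * ((d : ℝ) * √d + d * X) := by
  obtain ⟨C, hC1, hC⟩ := fourth_moment η hη
  refine ⟨2 * C, by linarith, ?_⟩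
  intro d hd T hT w hw hw0 X L hX hL u
  haveI : NeZero d := ⟨by omega⟩
  have hd1 : (1 : ℝ) ≤ d := by exact_mod_cast (by omega : 1 ≤ d)
  have hset : (Ioc ⌊X⌋₊ ⌊2 * X⌋₊).filter (fun n => n ≤ u) = Ioc ⌊X⌋₊ (min ⌊2 * X⌋₊ u) := by
    ext n; simp only [Finset.mem_filter, Finset.mem_Ioc, le_min_iff]; tauto
  rw [hset]
  have hL' : w (min ⌊2 * X⌋₊ u) ≤ L := (hw (min_le_left _ _)).trans hL
  have h4 := hC d hd T hT w hw hw0 ⌊X⌋₊ (min ⌊2 * X⌋₊ u) L hL'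
  have hlen : ((min ⌊2 * X⌋₊ u - ⌊X⌋₊ : ℕ) : ℝ) ≤ 2 * X := by
    have h1 : min ⌊2 * X⌋₊ u - ⌊X⌋₊ ≤ ⌊2 * X⌋₊ := (Nat.sub_le _ _).trans (min_le_left _ _)
    exact le_trans (by exact_mod_cast h1) (Nat.floor_le (by linarith))
  set g : DirichletCharacter ℂ d → ℝ := fun χ => ‖∑ n ∈ Ioc ⌊X⌋₊ (min ⌊2 * X⌋₊ u), (w n : ℂ) * χ (n : ZMod d)‖ with hg
  have hcs : (∑ χ ∈ T, g χ ^ 2) ^ 2 ≤ T.card * ∑ χ ∈ T, (g χ ^ 2) ^ 2 := sq_sum_le_card_mul_sum_sq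
  have hcard : (T.card : ℝ) ≤ d := by
    have h1 : T.card ≤ Fintype.card (DirichletCharacter ℂ d) := Finset.card_le_univ T
    have h2 : Fintype.card (DirichletCharacter ℂ d) = d.totient := by
      rw [← Nat.card_eq_fintype_card]
      exact DirichletCharacter.card_eq_totient_of_hasEnoughRootsOfUnity ℂ d
    have h3 := Nat.totient_le d
    exact_mod_cast (by omega : T.card ≤ d)
  have hdη : 1 ≤ (d : ℝ) ^ η := Real.one_le_rpow hd1 hη.le
  have hfin : (∑ χ ∈ T, g χ ^ 2) ^ 2 ≤ (2 * C * (d : ℝ) ^ η * L ^ 2 * ((d : ℝ) * √d + d * X)) ^ 2 := by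
    calc _ ≤ (T.card : ℝ) * ∑ χ ∈ T, (g χ ^ 2) ^ 2 := hcs
      _ = (T.card : ℝ) * ∑ χ ∈ T, (g χ) ^ 4 := by
        congr 1; refine Finset.sum_congr rfl fun χ _ => by ring
      _ ≤ d * (C * (d : ℝ) ^ η * L ^ 4 * ((d : ℝ) ^ 2 + d * (2 * X) ^ 2)) := by
        refine mul_le_mul hcard (h4.trans ?_) (Finset.sum_nonneg fun _ _ => by positivity) (by positivity)
        gcongr
      _ ≤ (C * (d : ℝ) ^ η) ^ 2 * L ^ 4 * (4 * (d ^ 3 + d ^ 2 * X ^ 2)) := by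
        have hx : 1 ≤ C * (d : ℝ) ^ η := by nlinarith
        have : C * (d : ℝ) ^ η ≤ (C * (d : ℝ) ^ η) ^ 2 := by nlinarith
        have h0 : (0:ℝ) ≤ (d : ℝ) ^ 3 := by positivity
        calc _ = C * (d : ℝ) ^ η * L ^ 4 * (d ^ 3 + 4 * d ^ 2 * X ^ 2) := by ring
          _ ≤ (C * (d : ℝ) ^ η) ^ 2 * L ^ 4 * (4 * (d ^ 3 + d ^ 2 * X ^ 2)) := by
            gcongr
            linarith
      _ ≤ _ := by
        have hs : √(d : ℝ) ^ 2 = d := Real.sq_sqrt (by positivity)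
        have : ((d : ℝ) * √d + d * X) ^ 2 = d ^ 3 + d ^ 2 * X ^ 2 + 2 * d * √d * d * X := by
          have : ((d : ℝ) * √d + d * X) ^ 2 = d ^ 2 * √(d : ℝ) ^ 2 + d ^ 2 * X ^ 2 + 2 * d * √d * d * X := by ring
          rw [this, hs]; ring
        have h0 : 0 ≤ 2 * d * √(d : ℝ) * d * X := by positivity
        calc _ ≤ (C * (d : ℝ) ^ η) ^ 2 * L ^ 4 * (4 * ((d : ℝ) * √d + d * X) ^ 2) := by
              rw [this]; refine mul_le_mul_of_nonneg_left ?_ (by positivity); linarith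
          _ = _ := by ring
  exact abs_le_of_sq_le_sq' hfin (by positivity) |>.2

/-- combinatorial trichotomy (multiplicative form) -/
lemma trichotomy {ι : Type*} [Fintype ι] [DecidableEq ι] (Z : ι → ℝ) (hZ : ∀ j, 1 ≤ Z j) (Λ : ℝ) (hΛ : 1 ≤ Λ)
    (hp : ∏ j, Z j ≤ Λ ^ 5) :
    (∃ J : Finset ι, ∏ j ∈ J, Z j ≤ Λ ^ 3 ∧ ∏ j ∈ Jᶜ, Z j ≤ Λ ^ 3) ∨
    (∃ j1, Λ ^ 3 < Z j1) ∨
    (∃ j1 j2, j1 ≠ j2 ∧ Λ < Z j1 ∧ Λ < Z j2 ∧ Z j1 < Λ ^ 2 ∧ Z j2 < Λ ^ 2 ∧ Λ ^ 3 < Z j1 * Z j2 ∧ Z j1 ≤ Z j2) := by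
  have hpos : ∀ J : Finset ι, 1 ≤ ∏ j ∈ J, Z j := fun J => by
    exact Finset.prod_induction _ (fun x : ℝ => 1 ≤ x) (fun a b ha hb => by nlinarith) le_rfl (fun j _ => hZ j)
  have hsplit : ∀ J : Finset ι, (∏ j ∈ J, Z j) * ∏ j ∈ Jᶜ, Z j ≤ Λ ^ 5 := fun J => by
    rw [Finset.prod_mul_prod_compl]; exact hp
  have hL0 : 0 < Λ := by linarith
  have hcomp : ∀ J : Finset ι, Λ ^ 2 ≤ ∏ j ∈ J, Z j → ∏ j ∈ Jᶜ, Z j ≤ Λ ^ 3 := by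
    intro J h
    have h1 := hsplit J
    have h2 := hpos Jᶜ
    by_contra! hlt
    have : Λ ^ 2 * Λ ^ 3 < (∏ j ∈ J, Z j) * ∏ j ∈ Jᶜ, Z j :=
      mul_lt_mul' h hlt (by positivity) (by linarith [hpos J])
    nlinarith
  by_cases h3 : ∃ j1, Λ ^ 3 < Z j1
  · exact Or.inr (Or.inl h3)
  push Not at h3
  by_cases h2 : ∃ j, Λ ^ 2 ≤ Z j
  · obtain ⟨j, hj⟩ := h2
    refine Or.inl ⟨{j}, by simpa using h3 j, hcomp _ (by simpa using hj)⟩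
  push Not at h2
  by_cases h1 : ∃ j1 j2, j1 ≠ j2 ∧ Λ < Z j1 ∧ Λ < Z j2
  · obtain ⟨j1, j2, hne, ha, hb⟩ := h1
    by_cases hs : Z j1 * Z j2 ≤ Λ ^ 3
    · refine Or.inl ⟨{j1, j2}, ?_, hcomp _ ?_⟩
      · rw [Finset.prod_pair hne]; exact hs
      · rw [Finset.prod_pair hne]; nlinarith
    · push Not at hs
      right; right
      rcases le_total (Z j1) (Z j2) with h | h
      · exact ⟨j1, j2, hne, ha, hb, h2 _, h2 _, hs, h⟩
      · exact ⟨j2, j1, hne.symm, hb, ha, h2 _, h2 _, by rwa [mul_comm], h⟩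
  push Not at h1
  left
  -- J0 : a base set containing every index with Z > Λ
  have hJ0 : ∃ J0 : Finset ι, (∏ j ∈ J0, Z j ≤ Λ ^ 3) ∧ ∀ j ∉ J0, Z j ≤ Λ := by
    by_cases h0 : ∃ j, Λ < Z j
    · obtain ⟨j, hj⟩ := h0
      refine ⟨{j}, by simpa using h3 j, fun i hi => ?_⟩
      have hne : j ≠ i := fun h => hi (by simp [h])
      exact h1 j i hne hj
    · push Not at h0
      exact ⟨∅, by simp; exact one_le_pow₀ hΛ, fun j _ => h0 j⟩
  obtain ⟨J0, hJ0p, hJ0s⟩ := hJ0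
  obtain ⟨J, hJ, hmax⟩ := Finset.exists_max_image
    ((Finset.univ : Finset (Finset ι)).filter (fun J => J0 ⊆ J ∧ ∏ j ∈ J, Z j ≤ Λ ^ 3)) Finset.card
    ⟨J0, by simp [hJ0p]⟩
  simp only [Finset.mem_filter, Finset.mem_univ, true_and] at hJ hmax
  by_cases hge : Λ ^ 2 ≤ ∏ j ∈ J, Z j
  · exact ⟨J, hJ.2, hcomp J hge⟩
  · push Not at hge
    have huniv : ∀ j, j ∈ J := by
      intro j
      by_contra hj
      have hzj := hJ0s j (fun h => hj (hJ.1 h))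
      have := hmax (insert j J) ⟨hJ.1.trans (Finset.subset_insert _ _), by
        rw [Finset.prod_insert hj]
        have := hpos J
        calc Z j * ∏ i ∈ J, Z i ≤ Λ * Λ ^ 2 := mul_le_mul hzj hge.le (by linarith) hL0.le
          _ = Λ ^ 3 := by ring⟩
      rw [Finset.card_insert_of_notMem hj] at this
      omega
    refine ⟨J, hJ.2, ?_⟩
    have : Jᶜ = ∅ := by ext j; simp [huniv j]
    rw [this, Finset.prod_empty]; exact one_le_pow₀ hΛ

lemma small_E (η : ℝ) (hη : 0 < η) (hη1 : η ≤ 1) (N : ℝ) (hN : 2 ≤ N) (x : ℝ) (hx : 1 ≤ x) (hxN : x ≤ 2 ^ 80 * N ^ 2) :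
    x ^ η ≤ 2 ^ 80 * (1 + 1 / η) * N ^ (2 * η) ∧ 1 + Real.log x ≤ 2 ^ 80 * (1 + 1 / η) * N ^ (2 * η) := by
  have h1 : x ^ η ≤ 2 ^ 80 * N ^ (2 * η) := by
    calc x ^ η ≤ ((2 ^ 80 : ℝ) * N ^ 2) ^ η := Real.rpow_le_rpow (by linarith) hxN hη.le
      _ = ((2 : ℝ) ^ 80) ^ η * N ^ (2 * η) := by
        rw [Real.mul_rpow (by positivity) (by positivity), ← Real.rpow_natCast N 2, ← Real.rpow_mul (by linarith)]
        norm_num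
      _ ≤ _ := by
        gcongr
        calc ((2 : ℝ) ^ 80) ^ η ≤ ((2 : ℝ) ^ 80) ^ (1 : ℝ) :=
              Real.rpow_le_rpow_of_exponent_le (by norm_num) hη1
          _ = _ := Real.rpow_one _
  have h0 : 0 ≤ 2 ^ 80 * N ^ (2 * η) := by positivity
  have h2 := one_add_log_le η hη x hx
  have h3 : 0 < 1 / η := by positivity
  constructor
  · nlinarith
  · calc _ ≤ (1 + 1 / η) * x ^ η := h2
      _ ≤ (1 + 1 / η) * (2 ^ 80 * N ^ (2 * η)) := by gcongr
      _ = _ := by ring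

lemma E_pow (η : ℝ) (N : ℝ) (hN : 2 ≤ N) (m : ℕ) :
    (2 ^ 80 * (1 + 1 / η) * N ^ (2 * η)) ^ m = (2 ^ 80 * (1 + 1 / η)) ^ m * N ^ (2 * η * m) := by
  rw [mul_pow, ← Real.rpow_natCast (N ^ (2 * η)), ← Real.rpow_mul (by linarith)]

lemma E_one (η : ℝ) (hη : 0 < η) (N : ℝ) (hN : 2 ≤ N) : 1 ≤ 2 ^ 80 * (1 + 1 / η) * N ^ (2 * η) := by
  have h1 : 1 ≤ N ^ (2 * η) := Real.one_le_rpow (by linarith) (by positivity)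
  have h2 : 0 < 1 / η := by positivity
  have h3 : (1 : ℝ) ≤ 2 ^ 80 * (1 + 1 / η) := by nlinarith
  nlinarith

lemma E_exists (δ : ℝ) (hδ : 0 < δ) (hδ1 : δ ≤ 1) : ∃ A : ℝ, 1 ≤ A ∧ ∀ N : ℝ, 2 ≤ N → ∃ E : ℝ, 1 ≤ E ∧
    E ^ 160 = A * N ^ δ ∧ ∀ x : ℝ, 1 ≤ x → x ≤ 2 ^ 80 * N ^ 2 → x ^ (δ / 320) ≤ E ∧ 1 + Real.log x ≤ E := by
  have hη : 0 < δ / 320 := by positivity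
  have hc1 : (1:ℝ) ≤ 2 ^ 80 * (1 + 1 / (δ / 320)) := by
    have : 0 < 1 / (δ / 320) := by positivity
    nlinarith
  refine ⟨(2 ^ 80 * (1 + 1 / (δ / 320))) ^ 160, one_le_pow₀ hc1, fun N hN => ?_⟩
  refine ⟨_, E_one (δ / 320) hη N hN, ?_, fun x hx hx2 => small_E (δ / 320) hη (by linarith) N hN x hx hx2⟩
  rw [E_pow (δ / 320) N hN]
  have : 2 * (δ / 320) * ((160 : ℕ) : ℝ) = δ := by push_cast; ring
  rw [this]

lemma DPoly.mono {d : ℕ} {F : DirichletCharacter ℂ d → ℝ → ℂ} {Z R W W' : ℝ} (h : DPoly d F Z R W)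
    (hW : W ≤ W') : DPoly d F Z R W' := by
  obtain ⟨S, c, s, b, e⟩ := h
  exact ⟨S, c, s, fun n hn => (b n hn).trans hW, e⟩

set_option maxHeartbeats 1000000 in
lemma gen_msb (δ : ℝ) (hδ : 0 < δ) (hδ1 : δ ≤ 1) : ∃ K, 1 ≤ K ∧ ∀ d : ℕ, 2 ≤ d → ∀ N : ℝ, 2 ≤ N →
    ∀ T : Finset (DirichletCharacter ℂ d), ∀ Z : Fin 40 → ℝ, (∀ j, 1 ≤ Z j) → ∏ j, Z j ≤ 2 ^ 40 * N ^ 2 →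
    ∀ F : Fin 40 → DirichletCharacter ℂ d → ℝ → ℂ,
    (∀ j, DPoly d (F j) (Z j) (2 * Z j) (1 + Real.log (2 * Z j))) →
    ∀ J : Finset (Fin 40), MSB T (fun χ t => ∏ j ∈ J, F j χ t) (K * N ^ δ * (d + ∏ j ∈ J, Z j)) := by
  obtain ⟨A, hA1, hA⟩ := E_exists δ hδ hδ1
  obtain ⟨η, hηd⟩ : ∃ η, η = δ / 320 := ⟨_, rfl⟩
  have hη : 0 < η := by rw [hηd]; positivity
  rw [← hηd] at hA
  obtain ⟨C, hC1, hC⟩ := divisor_bound η hη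
  refine ⟨2 * π * C ^ 80 * 2 ^ 80 * A, ?_, ?_⟩
  · have h1 : (1:ℝ) ≤ C ^ 80 := one_le_pow₀ hC1
    have h3 : (1:ℝ) ≤ 2 * π := by linarith [Real.pi_gt_three]
    have h4 : (1 : ℝ) ≤ 2 ^ 80 := by norm_num
    exact one_le_mul_of_one_le_of_one_le (one_le_mul_of_one_le_of_one_le (one_le_mul_of_one_le_of_one_le h3 h1) h4) hA1
  intro d hd N hN T Z hZ hP F hF J
  have : NeZero d := ⟨by omega⟩
  obtain ⟨E, hE1, hNδ, hEx⟩ := hA N hN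
  have hpos : ∀ J : Finset (Fin 40), 1 ≤ ∏ j ∈ J, Z j := fun J =>
    Finset.prod_induction _ (fun x : ℝ => 1 ≤ x) (fun a b ha hb => by nlinarith) le_rfl (fun j _ => hZ j)
  have hle : ∀ J : Finset (Fin 40), ∏ j ∈ J, Z j ≤ 2 ^ 40 * N ^ 2 := fun J => by
    have h1 := hpos Jᶜ
    have h2 := hpos J
    have h3 := Finset.prod_mul_prod_compl J Z
    nlinarith
  have hcard : ∀ J : Finset (Fin 40), (2:ℝ) ^ J.card ≤ 2 ^ 40 := fun J => by
    apply pow_le_pow_right₀ (by norm_num)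
    simpa using Finset.card_le_univ J
  have hle2 : ∀ J : Finset (Fin 40), (2:ℝ) ^ J.card * ∏ j ∈ J, Z j ≤ 2 ^ 80 * N ^ 2 := fun J => by
    calc _ ≤ (2:ℝ) ^ 40 * (2 ^ 40 * N ^ 2) := mul_le_mul (hcard J) (hle J) (by linarith [hpos J]) (by positivity)
      _ = _ := by ring
  have hF' : ∀ j, DPoly d (F j) (Z j) (2 * Z j) E := fun j => by
    refine (hF j).mono (hEx _ (by linarith [hZ j]) ?_).2
    have := hle2 {j}
    simpa using this
  have hprod := DPoly.prod F Z E (C * E) (2 ^ 80 * N ^ 2) hZ hE1 hF' (one_le_mul_of_one_le_of_one_le hC1 hE1) (by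
    intro n hn hn2
    refine (hC n hn).trans ?_
    gcongr
    exact (hEx _ (by exact_mod_cast hn) hn2).1) J (fun J' _ => hle2 J')
  have hZ0 := hpos J
  refine (hprod.msb (by linarith) (by positivity) (by positivity) T).mono ?_
  have hd0 : (0:ℝ) ≤ d := by positivity
  have hcE : 1 ≤ C * E * E := one_le_mul_of_one_le_of_one_le (one_le_mul_of_one_le_of_one_le hC1 hE1) hE1
  have hcard2 : J.card ≤ 40 := by simpa using Finset.card_le_univ J
  have h2c := hcard J
  have h2c1 : (1:ℝ) ≤ 2 ^ J.card := one_le_pow₀ (by norm_num)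
  calc 2 * π * ((((C * E) * E) ^ J.card) ^ 2 * (2 ^ J.card * ∏ j ∈ J, Z j + d) * (2 ^ J.card * ∏ j ∈ J, Z j) / ∏ j ∈ J, Z j)
      = 2 * π * (((C * E) * E) ^ J.card) ^ 2 * ((2 ^ J.card * ∏ j ∈ J, Z j + d) * 2 ^ J.card) := by
        have : ∏ j ∈ J, Z j ≠ 0 := by linarith
        field_simp
    _ ≤ 2 * π * (((C * E) * E) ^ 40) ^ 2 * ((2 ^ 40 * ∏ j ∈ J, Z j + 2 ^ 40 * d) * 2 ^ 40) := by
        have h1 : (d:ℝ) ≤ 2 ^ 40 * d := le_mul_of_one_le_left hd0 (by norm_num)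
        gcongr
    _ = 2 * π * C ^ 80 * 2 ^ 80 * E ^ 160 * (d + ∏ j ∈ J, Z j) := by ring
    _ = _ := by rw [hNδ]; ring

/-- the Dirichlet polynomial with real weights -/
noncomputable def dpw {d : ℕ} (w : ℕ → ℝ) (X : ℝ) (χ : DirichletCharacter ℂ d) (t : ℝ) : ℂ :=
  ∑ n ∈ Ioc ⌊X⌋₊ ⌊2 * X⌋₊, (w n : ℂ) * χ (n : ZMod d) * (n : ℂ) ^ (-(1 / 2 : ℂ) - Complex.I * t)

set_option maxHeartbeats 1000000 in
lemma sing_msb (δ : ℝ) (hδ : 0 < δ) (hδ1 : δ ≤ 1) : ∃ K, 1 ≤ K ∧ ∀ d : ℕ, 2 ≤ d → ∀ N : ℝ, 2 ≤ N → (d : ℝ) ≤ N ^ 2 →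
    ∀ T : Finset (DirichletCharacter ℂ d), (∀ χ ∈ T, χ.IsPrimitive) → ∀ w : ℕ → ℝ, Monotone w → 0 ≤ w 0 →
    ∀ X : ℝ, 1 ≤ X → X ≤ 2 ^ 40 * N ^ 2 → w ⌊2 * X⌋₊ ≤ 1 + Real.log (2 * X) →
    MSB T (dpw w X) (K * N ^ δ * (((d : ℝ) * √d + d * X) / X)) := by
  obtain ⟨A, hA1, hA⟩ := E_exists δ hδ hδ1
  obtain ⟨η, hηd⟩ : ∃ η, η = δ / 320 := ⟨_, rfl⟩
  have hη : 0 < η := by rw [hηd]; positivity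
  rw [← hηd] at hA
  obtain ⟨C, hC1, hC⟩ := single_bound η hη
  refine ⟨2 * π * C * A, ?_, ?_⟩
  · have h3 : (1:ℝ) ≤ 2 * π := by linarith [Real.pi_gt_three]
    exact one_le_mul_of_one_le_of_one_le (one_le_mul_of_one_le_of_one_le h3 hC1) hA1
  intro d hd N hN hdN T hT w hw hw0 X hX hXN hwX
  obtain ⟨E, hE1, hNδ, hEx⟩ := hA N hN
  have hN2 : 0 < N ^ 2 := by positivity
  have hd1 : (1 : ℝ) ≤ d := by exact_mod_cast (by omega : 1 ≤ d)
  have hwE : w ⌊2 * X⌋₊ ≤ E := hwX.trans (hEx _ (by linarith) (by linarith)).2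
  have hdE : (d : ℝ) ^ η ≤ E := (hEx _ hd1 (hdN.trans (le_mul_of_one_le_left hN2.le (by norm_num)))).1
  have hB := hC d hd T hT w hw hw0 X E hX hwE
  have hM := MSB.of_genDP T (Ioc ⌊X⌋₊ ⌊2 * X⌋₊) (fun χ n => (w n : ℂ) * χ (n : ZMod d)) (fun n => n)
    (fun n hn => by have := (Finset.mem_Ioc.mp hn).1; omega) X _ (by linarith)
    (fun n hn => ((Nat.floor_lt (by linarith)).mp (Finset.mem_Ioc.mp hn).1).le) hB (dpw w X) (fun χ _ t => rfl)
  refine hM.mono ?_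
  calc 2 * π * (C * (d:ℝ) ^ η * E ^ 2 * ((d : ℝ) * √d + d * X) / X)
      = 2 * π * C * ((d:ℝ) ^ η * E ^ 2) * (((d : ℝ) * √d + d * X) / X) := by ring
    _ ≤ 2 * π * C * (E ^ 160) * (((d : ℝ) * √d + d * X) / X) := by
      gcongr
      calc (d:ℝ) ^ η * E ^ 2 ≤ E * E ^ 2 := by gcongr
        _ = E ^ 3 := by ring
        _ ≤ E ^ 160 := pow_le_pow_right₀ hE1 (by norm_num)
    _ = _ := by rw [hNδ]; ring

set_option maxHeartbeats 1000000 in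
lemma bil_msb (δ : ℝ) (hδ : 0 < δ) (hδ1 : δ ≤ 1) : ∃ K, 1 ≤ K ∧ ∀ d : ℕ, 2 ≤ d → ∀ N : ℝ, 2 ≤ N → (d : ℝ) ≤ N ^ 2 →
    ∀ T : Finset (DirichletCharacter ℂ d), (∀ χ ∈ T, χ.IsPrimitive) → ∀ w1 w2 : ℕ → ℝ, Monotone w1 → Monotone w2 →
    0 ≤ w1 0 → 0 ≤ w2 0 → ∀ X1 X2 : ℝ, 1 ≤ X1 → 1 ≤ X2 → X1 * X2 ≤ 2 ^ 40 * N ^ 2 →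
    w1 ⌊2 * X1⌋₊ ≤ 1 + Real.log (2 * X1) → w2 ⌊2 * X2⌋₊ ≤ 1 + Real.log (2 * X2) → ∀ L : ℕ, (2:ℝ) ^ L ≤ X1 * X2 →
    MSB T (fun χ t => dpw w1 X1 χ t * dpw w2 X2 χ t) (K * N ^ δ * (((2 ^ L * d + √d * X1) * (2 ^ L * d + √d * X2) +
      (X1 * X2 / 2 ^ L + 1 + d) * (X1 * X2 / 2 ^ L + 1)) / (X1 * X2))) := by
  obtain ⟨A, hA1, hA⟩ := E_exists δ hδ hδ1
  obtain ⟨η, hηd⟩ : ∃ η, η = δ / 320 := ⟨_, rfl⟩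
  have hη : 0 < η := by rw [hηd]; positivity
  rw [← hηd] at hA
  obtain ⟨C, hC1, hC⟩ := bilinear_bound η hη
  refine ⟨2 * π * C * 4 * A, ?_, ?_⟩
  · have h3 : (1:ℝ) ≤ 2 * π := by linarith [Real.pi_gt_three]
    exact one_le_mul_of_one_le_of_one_le (one_le_mul_of_one_le_of_one_le (one_le_mul_of_one_le_of_one_le h3 hC1) (by norm_num)) hA1
  intro d hd N hN hdN T hT w1 w2 hw1 hw2 hw10 hw20 X1 X2 hX1 hX2 hXN hwX1 hwX2 L hL
  obtain ⟨E, hE1, hNδ, hEx⟩ := hA N hN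
  have hN2 : 0 < N ^ 2 := by positivity
  have hP1 : 1 ≤ X1 * X2 := one_le_mul_of_one_le_of_one_le hX1 hX2
  have hX1P : X1 ≤ X1 * X2 := le_mul_of_one_le_right (by linarith) hX2
  have hX2P : X2 ≤ X1 * X2 := le_mul_of_one_le_left (by linarith) hX1
  have hd1 : (1 : ℝ) ≤ d := by exact_mod_cast (by omega : 1 ≤ d)
  have hw1E : w1 ⌊2 * X1⌋₊ ≤ E := hwX1.trans (hEx _ (by linarith) (by linarith)).2
  have hw2E : w2 ⌊2 * X2⌋₊ ≤ E := hwX2.trans (hEx _ (by linarith) (by linarith)).2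
  have hdE : (d : ℝ) ^ η ≤ E := (hEx _ hd1 (hdN.trans (le_mul_of_one_le_left hN2.le (by norm_num)))).1
  have hPE : (X1 * X2) ^ η ≤ E := (hEx _ hP1 (by linarith)).1
  have hLE : (L + 1 : ℝ) ≤ 2 * E := by
    have h1 := (hEx _ hP1 (by linarith)).2
    have h2 : (L:ℝ) * Real.log 2 ≤ Real.log (X1 * X2) := by
      rw [← Real.log_pow]; exact Real.log_le_log (by positivity) hL
    have h3 := Real.log_two_gt_d9
    have h4 : (0:ℝ) ≤ L := by positivity
    nlinarith
  have hB := fun u => hC d hd T hT w1 w2 hw1 hw2 hw10 hw20 X1 X2 E E hX1 hX2 hw1E hw2E L u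
  have hlow : ∀ p ∈ Ioc ⌊X1⌋₊ ⌊2 * X1⌋₊ ×ˢ Ioc ⌊X2⌋₊ ⌊2 * X2⌋₊, X1 ≤ p.1 ∧ X2 ≤ p.2 := by
    intro p hp
    rw [Finset.mem_product] at hp
    exact ⟨((Nat.floor_lt (by linarith)).mp (Finset.mem_Ioc.mp hp.1).1).le,
      ((Nat.floor_lt (by linarith)).mp (Finset.mem_Ioc.mp hp.2).1).le⟩
  have hlow2 : ∀ p ∈ Ioc ⌊X1⌋₊ ⌊2 * X1⌋₊ ×ˢ Ioc ⌊X2⌋₊ ⌊2 * X2⌋₊, X1 * X2 ≤ ((p.1 * p.2 : ℕ) : ℝ) := by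
    intro p hp
    obtain ⟨h1, h2⟩ := hlow p hp
    push_cast
    exact mul_le_mul h1 h2 (by linarith) (by linarith)
  have hM := MSB.of_genDP T (Ioc ⌊X1⌋₊ ⌊2 * X1⌋₊ ×ˢ Ioc ⌊X2⌋₊ ⌊2 * X2⌋₊)
    (fun χ p => ((w1 p.1 : ℂ) * w2 p.2) * χ ((p.1 * p.2 : ℕ) : ZMod d)) (fun p => p.1 * p.2)
    (fun p hp => by have := hlow2 p hp; exact_mod_cast hP1.trans this) (X1 * X2) _ (by linarith)
    hlow2 hB (fun χ t => dpw w1 X1 χ t * dpw w2 X2 χ t) (fun χ _ t => by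
      unfold dpw genDP
      rw [Finset.sum_mul_sum, ← Finset.sum_product']
      refine Finset.sum_congr rfl fun p _ => ?_
      beta_reduce
      have e1 : χ ((p.1 * p.2 : ℕ) : ZMod d) = χ (p.1 : ZMod d) * χ (p.2 : ZMod d) := by
        rw [Nat.cast_mul, map_mul]
      rw [e1, Nat.cast_mul, Complex.natCast_mul_natCast_cpow]
      ring)
  refine hM.mono ?_
  set Q := ((2 ^ L * d + √d * X1) * (2 ^ L * d + √d * X2) + (X1 * X2 / 2 ^ L + 1 + d) * (X1 * X2 / 2 ^ L + 1)) with hQ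
  have hQ0 : 0 ≤ Q := by positivity
  calc 2 * π * (C * (d:ℝ) ^ η * (X1 * X2) ^ η * (L + 1 : ℝ) ^ 2 * (E ^ 2 * E ^ 2) * Q / (X1 * X2))
      = 2 * π * C * ((d:ℝ) ^ η * (X1 * X2) ^ η * (L + 1 : ℝ) ^ 2 * (E ^ 2 * E ^ 2)) * (Q / (X1 * X2)) := by ring
    _ ≤ 2 * π * C * (4 * E ^ 160) * (Q / (X1 * X2)) := by
      refine mul_le_mul_of_nonneg_right (mul_le_mul_of_nonneg_left ?_ (by positivity)) (by positivity)
      calc (d:ℝ) ^ η * (X1 * X2) ^ η * (L + 1 : ℝ) ^ 2 * (E ^ 2 * E ^ 2) ≤ E * E * (2 * E) ^ 2 * (E ^ 2 * E ^ 2) := by gcongr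
        _ = 4 * E ^ 8 := by ring
        _ ≤ 4 * E ^ 160 := by gcongr; norm_num
    _ = _ := by rw [hNδ]; ring

lemma bil_num (d s X1 X2 : ℝ) (hd : 2 ≤ d) (hs : 1 ≤ s) (hX1 : 1 ≤ X1) (h12 : X1 ≤ X2)
    (h21 : X2 ≤ 2 ^ 8 * s ^ 3 * X1) (hP : d * s < X1 * X2) :
    ∃ L : ℕ, (2:ℝ) ^ L ≤ X1 * X2 ∧ ((2 ^ L * d + √d * X1) * (2 ^ L * d + √d * X2) +
      (X1 * X2 / 2 ^ L + 1 + d) * (X1 * X2 / 2 ^ L + 1)) / (X1 * X2) ≤ 42 * (d * s) := by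
  have hds : 2 ≤ d * s := by nlinarith
  have hds0 : 0 < d * s := by linarith
  obtain ⟨P, hPd⟩ : ∃ P, P = X1 * X2 := ⟨_, rfl⟩
  have hP0 : 1 ≤ P := by rw [hPd]; linarith
  have hy1 : 1 ≤ P / (d * s) := by rw [le_div_iff₀ hds0, hPd]; linarith
  obtain ⟨L, hL1, hL2⟩ := exists_nat_pow_near (x := √(P / (d * s))) (y := 2)
    (by rw [Real.one_le_sqrt]; exact hy1) (by norm_num)
  obtain ⟨D, hD⟩ : ∃ D : ℝ, D = 2 ^ L := ⟨_, rfl⟩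
  have hD1 : 1 ≤ D := by rw [hD]; exact one_le_pow₀ (by norm_num)
  rw [← hD] at hL1
  have hL2' : √(P / (d * s)) ≤ 2 * D := by rw [hD]; rw [pow_succ] at hL2; linarith
  have hsq : √(P / (d * s)) ^ 2 = P / (d * s) := Real.sq_sqrt (by linarith)
  have hb1 : D ^ 2 * (d * s) ≤ P := by
    rw [← le_div_iff₀ hds0, ← hsq]; gcongr
  have hb2 : P ≤ 4 * D ^ 2 * (d * s) := by
    rw [← div_le_iff₀ hds0, ← hsq]
    calc _ ≤ (2 * D) ^ 2 := by gcongr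
      _ = _ := by ring
  refine ⟨L, ?_, ?_⟩
  · rw [← hD, ← hPd]; nlinarith
  rw [← hPd, ← hD, div_le_iff₀ (by linarith)]
  obtain ⟨r, hr⟩ : ∃ r : ℝ, r = √d := ⟨_, rfl⟩
  have hr2 : r ^ 2 = d := by rw [hr]; exact Real.sq_sqrt (by linarith)
  have hr0 : 0 ≤ r := by rw [hr]; positivity
  rw [← hr]
  have hd0 : 0 < d := by linarith
  have hdP : d * P ≤ d * s * P := by
    have : 0 ≤ d * P := by positivity
    nlinarith
  have t1 : D ^ 2 * d ^ 2 ≤ d * s * P := by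
    have h1 : D ^ 2 * d ≤ D ^ 2 * (d * s) := by
      have : 0 ≤ D ^ 2 * d := by positivity
      nlinarith
    have h2 : d * (D ^ 2 * d) ≤ d * P := by gcongr; linarith
    linarith
  have t2 : D * r * X2 ≤ 16 * s * P := by
    have h1 : (D * r * X2) ^ 2 * s ≤ (16 * s * P) ^ 2 * s := by
      calc (D * r * X2) ^ 2 * s = (D ^ 2 * (d * s)) * X2 ^ 2 := by rw [← hr2]; ring
        _ ≤ P * X2 ^ 2 := by gcongr
        _ = P * (X2 * X2) := by ring
        _ ≤ P * (X2 * (2 ^ 8 * s ^ 3 * X1)) := by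
          have : 0 ≤ X2 := by linarith
          gcongr
        _ = (16 * s * P) ^ 2 * s := by rw [hPd]; ring
    have h2 := le_of_mul_le_mul_right h1 (by linarith)
    exact (abs_le_of_sq_le_sq' h2 (by positivity)).2
  have t3 : D * d * r * (X1 + X2) ≤ 32 * (d * s * P) := by
    calc D * d * r * (X1 + X2) ≤ D * d * r * (X2 + X2) := by gcongr
      _ = 2 * d * (D * r * X2) := by ring
      _ ≤ 2 * d * (16 * s * P) := by gcongr
      _ = _ := by ring
  have hPD : P / D ≤ P := div_le_self (by linarith) hD1
  have hPD0 : 0 ≤ P / D := by positivity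
  have t4 : (P / D) ^ 2 ≤ 4 * (d * s * P) := by
    rw [div_pow, div_le_iff₀ (by positivity)]
    calc P ^ 2 = P * P := by ring
      _ ≤ P * (4 * D ^ 2 * (d * s)) := by gcongr
      _ = _ := by ring
  have t5 : P / D * (2 + d) ≤ 2 * (d * s * P) := by
    calc P / D * (2 + d) ≤ P * (2 * d) := by
          apply mul_le_mul hPD (by linarith) (by linarith) (by linarith)
      _ ≤ _ := by linarith
  have t6 : 1 + d ≤ 2 * (d * s * P) := by
    have : d ≤ d * P := by nlinarith
    linarith
  have e : (D * d + r * X1) * (D * d + r * X2) + (P / D + 1 + d) * (P / D + 1) =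
      D ^ 2 * d ^ 2 + D * d * r * (X1 + X2) + d * P + ((P / D) ^ 2 + P / D * (2 + d) + (1 + d)) := by
    have : r ^ 2 * (X1 * X2) = d * P := by rw [hr2, hPd]
    linear_combination this
  rw [e]
  linarith

lemma pow_pack (α ε : ℝ) (hα : 3 / 8 ≤ α) (hα2 : α < 2 / 5) (hε : 0 < ε) (hε1 : ε ≤ 1 / 100) (N : ℝ) (hN : 2 ≤ N) :
    ∃ Λ s D B : ℝ, D = N ^ (2 * (ε / 100)) ∧ B = N ^ (3 * α - 1) ∧ 1 ≤ Λ ∧ 1 ≤ s ∧ 1 ≤ D ∧ D ≤ B ∧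
      D * Λ ^ 3 ≤ 2 ^ 24 * N * B ∧ D * Λ ^ 5 ≤ 2 ^ 40 * N ^ 2 * B ∧ Λ ^ 2 ≤ 2 ^ 16 * N ∧ Λ ≤ 2 ^ 8 * s ^ 3 ∧
      N ≤ s * Λ ^ 3 ∧ D * s = B ∧ N ^ (1 / 10 : ℝ) ≤ Λ ∧ 2 ^ 40 * N ^ (5 * α - ε) = Λ ^ 5 ∧ Λ ^ 5 ≤ 2 ^ 40 * N ^ 2 := by
  have hN0 : 0 < N := by linarith
  have hN1 : 1 ≤ N := by linarith
  have pw : ∀ (x : ℝ) (m : ℕ), (N ^ x) ^ m = N ^ (x * m) := fun x m => by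
    rw [← Real.rpow_natCast, ← Real.rpow_mul hN0.le]
  have le : ∀ x y : ℝ, x ≤ y → N ^ x ≤ N ^ y := fun x y h => Real.rpow_le_rpow_of_exponent_le hN1 h
  have one : ∀ x : ℝ, 0 ≤ x → 1 ≤ N ^ x := fun x h => Real.one_le_rpow hN1 h
  have mul : ∀ x y : ℝ, N ^ x * N ^ y = N ^ (x + y) := fun x y => (Real.rpow_add hN0 x y).symm
  have r1 : N ^ (1 : ℝ) = N := Real.rpow_one N
  have r2 : N ^ (2 : ℝ) = N ^ 2 := by rw [← Real.rpow_natCast]; norm_num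
  have hL : ∀ m : ℕ, (2 ^ 8 * N ^ (α - ε / 5)) ^ m = (2 ^ 8) ^ m * N ^ ((α - ε / 5) * m) := fun m => by
    rw [mul_pow, pw]
  have hΛ1 := one (α - ε / 5) (by linarith)
  refine ⟨2 ^ 8 * N ^ (α - ε / 5), N ^ (3 * α - 1 - 2 * (ε / 100)), _, _, rfl, rfl, by linarith,
    one _ (by linarith), one _ (by linarith), le _ _ (by linarith), ?_, ?_, ?_, ?_, ?_, ?_, ?_, ?_, ?_⟩
  · rw [hL]
    have h1 := le (2 * (ε / 100) + (α - ε / 5) * (3 : ℕ)) (1 + (3 * α - 1)) (by push_cast; linarith)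
    rw [← mul, ← mul 1, r1] at h1
    linarith
  · rw [hL]
    have h1 := le (2 * (ε / 100) + (α - ε / 5) * (5 : ℕ)) (2 + (3 * α - 1)) (by push_cast; linarith)
    rw [← mul, ← mul 2, r2] at h1
    linarith
  · rw [hL]
    have h1 := le ((α - ε / 5) * (2 : ℕ)) 1 (by push_cast; linarith)
    rw [r1] at h1
    linarith
  · rw [pw]
    have h1 := le (α - ε / 5) ((3 * α - 1 - 2 * (ε / 100)) * (3 : ℕ)) (by push_cast; linarith)
    linarith
  · rw [hL]
    have h1 := le 1 ((3 * α - 1 - 2 * (ε / 100)) + (α - ε / 5) * (3 : ℕ)) (by push_cast; linarith)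
    rw [← mul, r1] at h1
    have h2 : 0 ≤ N ^ (3 * α - 1 - 2 * (ε / 100)) * N ^ ((α - ε / 5) * (3 : ℕ)) := by positivity
    linarith
  · rw [mul]; congr 1; ring
  · have h1 := le (1 / 10) (α - ε / 5) (by linarith)
    linarith
  · rw [hL]
    have : (α - ε / 5) * (5 : ℕ) = 5 * α - ε := by push_cast; ring
    rw [this]; norm_num
  · rw [hL]
    have h1 := le ((α - ε / 5) * (5 : ℕ)) 2 (by push_cast; linarith)
    rw [r2] at h1
    linarith

lemma final_step {κ : Type*} (T : Finset κ) (F G : κ → ℝ → ℂ) (K N d β δ A1 A2 : ℝ) (hK : 1 ≤ K) (hN : 2 ≤ N)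
    (hd : 0 < d) (hA1 : 0 < A1) (hA2 : 0 < A2)
    (hF : MSB T F (K * N ^ δ * A1)) (hG : MSB T G (K * N ^ δ * A2))
    (h : N ^ (2 * δ) * (A1 * A2) ≤ 2 ^ 60 * (N + d) ^ 2 * N ^ β) :
    ∫ t : ℝ, (∑ χ ∈ T, ‖F χ t * G χ t‖) / (t ^ 2 + 1) ≤ 2 ^ 30 * K * ((N + d) * N ^ (β / 2)) := by
  have hN0 : 0 < N := by linarith
  refine (MSB.cauchy T F G _ _ (by positivity) (by positivity) hF hG).trans ?_
  rw [Real.sqrt_le_left (by positivity)]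
  have e1 : N ^ (2 * δ) = N ^ δ * N ^ δ := by rw [← Real.rpow_add hN0]; congr 1; ring
  have e2 : N ^ β = N ^ (β / 2) * N ^ (β / 2) := by rw [← Real.rpow_add hN0]; congr 1; ring
  rw [e1, e2] at h
  calc _ = K ^ 2 * (N ^ δ * N ^ δ * (A1 * A2)) := by ring
    _ ≤ K ^ 2 * (2 ^ 60 * (N + d) ^ 2 * (N ^ (β / 2) * N ^ (β / 2))) := by gcongr
    _ = _ := by ring

lemma MSB.congr {κ : Type*} {T : Finset κ} {F G : κ → ℝ → ℂ} {q : ℝ} (h : MSB T F q) (e : ∀ χ t, G χ t = F χ t) :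
    MSB T G q := by
  have : G = F := by funext χ t; exact e χ t
  rw [this]; exact h

set_option maxHeartbeats 1000000 in
lemma core_abs (α ε : ℝ) (hα : 3 / 8 ≤ α) (hα2 : α < 2 / 5) (hε : 0 < ε) (hε1 : ε ≤ 1 / 100) :
    ∃ C, 0 < C ∧ ∀ d : ℕ, 2 ≤ d → ∀ N : ℝ, 2 ≤ N → ∀ T : Finset (DirichletCharacter ℂ d),
    (∀ χ ∈ T, χ.IsPrimitive) → ∀ Z : Fin 40 → ℝ, (∀ j, 1 ≤ Z j) →
    ∏ j, Z j ≤ 2 ^ 40 * N ^ (5 * α - ε) →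
    ∀ F : Fin 40 → DirichletCharacter ℂ d → ℝ → ℂ,
    (∀ j, DPoly d (F j) (Z j) (2 * Z j) (1 + Real.log (2 * Z j))) →
    (∀ j, 1 < Z j → N ^ (1 / 10 : ℝ) < Z j → ∃ w : ℕ → ℝ, Monotone w ∧ 0 ≤ w 0 ∧ w ⌊2 * Z j⌋₊ ≤ 1 + Real.log (2 * Z j) ∧
      F j = dpw w (Z j)) →
    ∫ t : ℝ, (∑ χ ∈ T, ‖∏ j, F j χ t‖) / (t ^ 2 + 1) ≤ C * ((N + d) * N ^ ((3 * α - 1) / 2)) := by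
  obtain ⟨δ, hδd⟩ : ∃ δ, δ = ε / 100 := ⟨_, rfl⟩
  have hδ : 0 < δ := by rw [hδd]; positivity
  have hδ1 : δ ≤ 1 := by rw [hδd]; linarith
  obtain ⟨K1, hK1, hgen⟩ := gen_msb δ hδ hδ1
  obtain ⟨K2, hK2, hsing⟩ := sing_msb δ hδ hδ1
  obtain ⟨K3, hK3, hbil⟩ := bil_msb δ hδ hδ1
  obtain ⟨K, hKd⟩ : ∃ K, K = K1 + K2 + K3 := ⟨_, rfl⟩
  have hK : 1 ≤ K := by linarith
  refine ⟨2 ^ 30 * K, by positivity, ?_⟩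
  intro d hd N hN T hT Z hZ hprod F hF hsm
  obtain ⟨Λ, s, D, B, hD, hB, hΛ1, hs1, hD1, hDB, h3, h5, hL2, hLs, hNs, hDs, hN10, hLam5, hLam5'⟩ :=
    pow_pack α ε hα hα2 hε hε1 N hN
  rw [← hδd] at hD
  have hN0 : 0 < N := by linarith
  have hdR : (2:ℝ) ≤ d := by exact_mod_cast hd
  have hNδ : 0 < N ^ δ := by positivity
  have hB1 : 1 ≤ B := by linarith
  rw [hLam5] at hprod
  have hpos : ∀ J : Finset (Fin 40), 1 ≤ ∏ j ∈ J, Z j := fun J =>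
    Finset.prod_induction _ (fun x : ℝ => 1 ≤ x) (fun a b ha hb => by nlinarith) le_rfl (fun j _ => hZ j)
  have hsplit : ∀ J : Finset (Fin 40), (∏ j ∈ J, Z j) * ∏ j ∈ Jᶜ, Z j ≤ Λ ^ 5 := fun J => by
    rw [Finset.prod_mul_prod_compl]; exact hprod
  have hg : ∀ J : Finset (Fin 40), MSB T (fun χ t => ∏ j ∈ J, F j χ t) (K * N ^ δ * (d + ∏ j ∈ J, Z j)) := fun J => by
    refine (hgen d hd N hN T Z hZ (hprod.trans hLam5') F hF J).mono ?_
    have := hpos J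
    gcongr
    linarith
  have hfinal : ∀ (J : Finset (Fin 40)) (A1 A2 : ℝ), 0 < A1 → 0 < A2 →
      MSB T (fun χ t => ∏ j ∈ J, F j χ t) (K * N ^ δ * A1) →
      MSB T (fun χ t => ∏ j ∈ Jᶜ, F j χ t) (K * N ^ δ * A2) →
      D * (A1 * A2) ≤ 2 ^ 60 * (N + d) ^ 2 * B →
      ∫ t : ℝ, (∑ χ ∈ T, ‖∏ j, F j χ t‖) / (t ^ 2 + 1) ≤ 2 ^ 30 * K * ((N + d) * N ^ ((3 * α - 1) / 2)) := by
    intro J A1 A2 hA1 hA2 hM1 hM2 hle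
    rw [hD, hB] at hle
    have := final_step T _ _ K N d (3 * α - 1) δ A1 A2 hK hN (by linarith) hA1 hA2 hM1 hM2 hle
    simpa only [Finset.prod_mul_prod_compl] using this
  have hA2pos : ∀ J : Finset (Fin 40), 0 < (d : ℝ) + ∏ j ∈ J, Z j := fun J => by linarith [hpos J]
  -- the situation where a good bound for a factor is available
  have hgood : ∀ (J : Finset (Fin 40)) (A1 : ℝ), 0 < A1 → MSB T (fun χ t => ∏ j ∈ J, F j χ t) (K * N ^ δ * A1) →
      A1 ≤ 2 ^ 10 * (d * s) → Λ ^ 3 ≤ ∏ j ∈ J, Z j →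
      ∫ t : ℝ, (∑ χ ∈ T, ‖∏ j, F j χ t‖) / (t ^ 2 + 1) ≤ 2 ^ 30 * K * ((N + d) * N ^ ((3 * α - 1) / 2)) := by
    intro J A1 hA1 hM1 hA1s hJ
    refine hfinal J A1 _ hA1 (hA2pos Jᶜ) hM1 (hg Jᶜ) ?_
    have hr : ∏ j ∈ Jᶜ, Z j ≤ Λ ^ 2 := by
      have h1 := hsplit J
      have h2 : Λ ^ 3 * ∏ j ∈ Jᶜ, Z j ≤ Λ ^ 3 * Λ ^ 2 := by
        calc _ ≤ (∏ j ∈ J, Z j) * ∏ j ∈ Jᶜ, Z j := by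
              refine mul_le_mul_of_nonneg_right hJ (by linarith [hpos Jᶜ])
          _ ≤ Λ ^ 5 := h1
          _ = _ := by ring
      exact le_of_mul_le_mul_left h2 (by positivity)
    have hA2 : (d : ℝ) + ∏ j ∈ Jᶜ, Z j ≤ 2 ^ 16 * (N + d) := by linarith
    calc D * (A1 * ((d : ℝ) + ∏ j ∈ Jᶜ, Z j)) ≤ D * ((2 ^ 10 * (d * s)) * (2 ^ 16 * (N + d))) := by
          have := hA2pos Jᶜ
          gcongr
      _ = 2 ^ 26 * (d * (N + d)) * (D * s) := by ring
      _ = 2 ^ 26 * (d * (N + d)) * B := by rw [hDs]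
      _ ≤ 2 ^ 60 * (N + d) ^ 2 * B := by
        have : d * (N + d) ≤ (N + d) ^ 2 := by nlinarith
        have h0 : 0 ≤ (N + d) ^ 2 := by positivity
        refine mul_le_mul_of_nonneg_right ?_ (by linarith)
        linarith
  rcases le_or_gt ((d : ℝ)) (N ^ 2) with hdN | hdN
  swap
  · -- large modulus
    refine hfinal Finset.univ _ _ (hA2pos _) (hA2pos _) (hg _) (hg _) ?_
    have e : ∏ j ∈ (Finset.univ : Finset (Fin 40))ᶜ, Z j = 1 := by simp
    rw [e]
    have h1 : (d : ℝ) + ∏ j, Z j ≤ 2 ^ 41 * d := by linarith [hprod.trans hLam5']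
    have h0 := hA2pos Finset.univ
    calc D * (((d : ℝ) + ∏ j, Z j) * (d + 1)) ≤ B * ((2 ^ 41 * d) * (2 * d)) := by
          gcongr
          linarith
      _ = 2 ^ 42 * d ^ 2 * B := by ring
      _ ≤ _ := by
        have : (d:ℝ) ^ 2 ≤ (N + d) ^ 2 := by gcongr; linarith
        have h0 : 0 ≤ (N + d) ^ 2 := by positivity
        refine mul_le_mul_of_nonneg_right ?_ (by linarith)
        linarith
  rcases trichotomy Z hZ Λ hΛ1 hprod with ⟨J, hJ1, hJ2⟩ | ⟨j1, hj1⟩ | ⟨j1, j2, hne, ha, hb, ha2, hb2, hab, hle⟩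
  · refine hfinal J _ _ (hA2pos J) (hA2pos Jᶜ) (hg J) (hg Jᶜ) ?_
    have h4 := hsplit J
    have hd0 : (0:ℝ) ≤ d := by linarith
    have hd2 : (0:ℝ) ≤ (d:ℝ) ^ 2 := by positivity
    calc D * (((d : ℝ) + ∏ j ∈ J, Z j) * (d + ∏ j ∈ Jᶜ, Z j))
        = D * d ^ 2 + d * (D * ∏ j ∈ J, Z j) + d * (D * ∏ j ∈ Jᶜ, Z j) + D * ((∏ j ∈ J, Z j) * ∏ j ∈ Jᶜ, Z j) := by ring
      _ ≤ B * d ^ 2 + d * (D * Λ ^ 3) + d * (D * Λ ^ 3) + D * Λ ^ 5 := by gcongr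
      _ ≤ B * d ^ 2 + d * (2 ^ 24 * N * B) + d * (2 ^ 24 * N * B) + 2 ^ 40 * N ^ 2 * B := by gcongr
      _ = (d ^ 2 + 2 ^ 25 * (d * N) + 2 ^ 40 * N ^ 2) * B := by ring
      _ ≤ _ := by
        refine mul_le_mul_of_nonneg_right ?_ (by linarith)
        have e : (N + d) ^ 2 = N ^ 2 + 2 * (d * N) + (d:ℝ) ^ 2 := by ring
        have h6 : 0 ≤ (d:ℝ) * N := by positivity
        have h7 : 0 ≤ N ^ 2 := by positivity
        rw [e]; linarith
  · have hL3 : Λ ≤ Λ ^ 3 := le_self_pow₀ hΛ1 (by norm_num)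
    obtain ⟨w, hw, hw0, hwZ, hFw⟩ := hsm j1 (by linarith) (by linarith)
    have hz := hZ j1
    have hzle : Z j1 ≤ 2 ^ 40 * N ^ 2 := by
      have h1 := hsplit {j1}
      have h2 := hpos ({j1} : Finset (Fin 40))ᶜ
      rw [Finset.prod_singleton] at h1
      have : Z j1 ≤ Z j1 * ∏ j ∈ ({j1} : Finset (Fin 40))ᶜ, Z j := le_mul_of_one_le_right (by linarith) h2
      linarith
    have hM := hsing d hd N hN hdN T hT w hw hw0 (Z j1) hz hzle hwZ
    refine hgood {j1} (((d : ℝ) * √d + d * Z j1) / Z j1) (by positivity) ?_ ?_ (by simpa using hj1.le)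
    · refine (hM.mono ?_).congr (fun χ t => by rw [Finset.prod_singleton, hFw])
      gcongr
      linarith
    · rw [div_le_iff₀ (by linarith)]
      have h1 : √(d:ℝ) ≤ N := by
        rw [Real.sqrt_le_left (by linarith)]; exact hdN
      have h2 : √(d:ℝ) ≤ s * Z j1 := by
        calc _ ≤ s * Λ ^ 3 := h1.trans hNs
          _ ≤ _ := by gcongr
      have h3 : (d:ℝ) * √d ≤ d * (s * Z j1) := by gcongr
      have h4 : (d:ℝ) * Z j1 ≤ d * (s * Z j1) := by
        gcongr
        exact le_mul_of_one_le_left (by linarith) hs1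
      have h5 : 0 ≤ (d:ℝ) * (s * Z j1) := by positivity
      calc _ ≤ 2 * (d * (s * Z j1)) := by linarith
        _ ≤ 2 ^ 10 * (d * (s * Z j1)) := by linarith
        _ = _ := by ring
  · have hprodpair : ∏ j ∈ ({j1, j2} : Finset (Fin 40)), Z j = Z j1 * Z j2 := Finset.prod_pair hne
    have hJ3 : Λ ^ 3 ≤ ∏ j ∈ ({j1, j2} : Finset (Fin 40)), Z j := by rw [hprodpair]; exact hab.le
    have hz1 := hZ j1
    have hz2 := hZ j2
    rcases le_or_gt (Z j1 * Z j2) (d * s) with hc | hc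
    · refine hgood {j1, j2} _ (hA2pos _) (hg _) ?_ hJ3
      rw [hprodpair]
      have : (d:ℝ) ≤ d * s := le_mul_of_one_le_right (by linarith) hs1
      linarith
    · obtain ⟨w1, hw1, hw10, hwZ1, hFw1⟩ := hsm j1 (by linarith) (by linarith)
      obtain ⟨w2, hw2, hw20, hwZ2, hFw2⟩ := hsm j2 (by linarith) (by linarith)
      have hzle : Z j1 * Z j2 ≤ 2 ^ 40 * N ^ 2 := by
        have h1 := hsplit {j1, j2}
        have h2 := hpos ({j1, j2} : Finset (Fin 40))ᶜ
        rw [hprodpair] at h1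
        have : Z j1 * Z j2 ≤ Z j1 * Z j2 * ∏ j ∈ ({j1, j2} : Finset (Fin 40))ᶜ, Z j :=
          le_mul_of_one_le_right (by positivity) h2
        linarith
      have h21 : Z j2 ≤ 2 ^ 8 * s ^ 3 * Z j1 := by
        calc Z j2 ≤ Λ ^ 2 := hb2.le
          _ = Λ * Λ := by ring
          _ ≤ (2 ^ 8 * s ^ 3) * Z j1 := by gcongr
      obtain ⟨L, hLP, hQ⟩ := bil_num d s (Z j1) (Z j2) hdR hs1 hz1 hle h21 hc
      have hM := hbil d hd N hN hdN T hT w1 w2 hw1 hw2 hw10 hw20 (Z j1) (Z j2) hz1 hz2 hzle hwZ1 hwZ2 L hLP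
      refine hgood {j1, j2} (42 * (d * s)) (by positivity) ?_ (by
        have : 0 ≤ (d:ℝ) * s := by positivity
        linarith) hJ3
      refine (hM.mono ?_).congr (fun χ t => by rw [Finset.prod_pair hne, hFw1, hFw2])
      have hK3' : K3 ≤ K := by linarith
      exact mul_le_mul (mul_le_mul_of_nonneg_right hK3' hNδ.le) hQ (by positivity) (by positivity)

lemma rhs_bound (k : ℕ) (hk : 2 ≤ k) (d N : ℝ) (hd : 2 ≤ d) (hN : 2 ≤ N) (α : ℝ) (hα : α = (2 * (k:ℝ) - 1) / (5 * k - 2)) :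
    (N + d) * N ^ ((3 * α - 1) / 2) ≤
      ((N + d) ^ k * N ^ (1 - ((k : ℝ) - 1) * (2 - 1 / (5 * (k : ℝ) - 2)) / 2) / d) * Real.log (d * N) ^ (1 : ℝ) := by
  have hN0 : 0 < N := by linarith
  have hkR : (2:ℝ) ≤ k := by exact_mod_cast hk
  have hden : 0 < 5 * (k:ℝ) - 2 := by linarith
  obtain ⟨m, rfl⟩ : ∃ m, k = m + 2 := ⟨k - 2, by omega⟩
  have hexp : (3 * α - 1) / 2 = (m : ℝ) + (1 - (((m + 2 : ℕ) : ℝ) - 1) * (2 - 1 / (5 * ((m + 2 : ℕ) : ℝ) - 2)) / 2) := by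
    rw [hα]
    push_cast at hden ⊢
    obtain ⟨q, hq⟩ : ∃ q : ℝ, q = 5 * ((m:ℝ) + 2) - 2 := ⟨_, rfl⟩
    rw [← hq] at hden ⊢
    have hm : (m:ℝ) = (q - 8) / 5 := by linarith
    have : q ≠ 0 := hden.ne'
    rw [hm]
    field_simp
    ring
  have hlog : 1 ≤ Real.log (d * N) := by
    have h4 : Real.log 4 ≤ Real.log (d * N) := Real.log_le_log (by norm_num) (by nlinarith)
    have : Real.log 4 = 2 * Real.log 2 := by
      rw [show (4:ℝ) = 2 ^ 2 by norm_num, Real.log_pow]; norm_num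
    have := Real.log_two_gt_d9
    linarith
  rw [Real.rpow_one, hexp, Real.rpow_add hN0, Real.rpow_natCast]
  set Y := N ^ (1 - (((m + 2 : ℕ) : ℝ) - 1) * (2 - 1 / (5 * ((m + 2 : ℕ) : ℝ) - 2)) / 2) with hY
  have hY0 : 0 < Y := by positivity
  have h1 : (N + d) * (N ^ m * Y) ≤ (N + d) ^ (m + 2) * Y / d := by
    rw [le_div_iff₀ (by linarith)]
    calc (N + d) * (N ^ m * Y) * d = N ^ m * ((N + d) * d) * Y := by ring
      _ ≤ (N + d) ^ m * ((N + d) * (N + d)) * Y := by gcongr <;> linarith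
      _ = _ := by ring
  have h2 : 0 ≤ (N + d) ^ (m + 2) * Y / d := by positivity
  exact h1.trans (le_mul_of_one_le_right h2 hlog)

lemma coeff_bound (a : ℕ → ℂ) (h : a = (fun _ => (1 : ℂ)) ∨
    a = (fun n => ((ArithmeticFunction.moebius n : ℤ) : ℂ)) ∨ a = (fun n : ℕ => (Real.log n : ℂ)))
    (n : ℕ) (hn : 1 ≤ n) (x : ℝ) (hx : (n:ℝ) ≤ x) : ‖a n‖ ≤ 1 + Real.log x := by
  have hn1 : (1:ℝ) ≤ n := by exact_mod_cast hn
  have hl : Real.log n ≤ Real.log x := Real.log_le_log (by linarith) hx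
  have hl0 : 0 ≤ Real.log n := Real.log_nonneg hn1
  rcases h with h | h | h
  · rw [h]; simp only [norm_one]; linarith
  · rw [h]
    have h1 : ‖((ArithmeticFunction.moebius n : ℤ) : ℂ)‖ ≤ 1 := by
      rw [Complex.norm_intCast]
      exact_mod_cast ArithmeticFunction.abs_moebius_le_one
    linarith
  · rw [h]
    simp only [Complex.norm_real, Real.norm_eq_abs]
    rw [abs_of_nonneg hl0]; linarith

/-- Mean value bound for products of 40 Dirichlet polynomials with total length at most
`N^{Θ_k-ε}` where `Θ_k = 2 - 1/(5k-2)`, with coefficients `1`, `μ(n)` or `log n` (Möbius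
coefficients only allowed for short polynomials): the first moment over primitive characters
mod `d` and `t`-average is `≪ ((N+d)^k N^{1-(k-1)Θ_k/2} / d) (log dN)^{O(1)}`. -/
theorem dirichlet_polynomial_decomposition_bound_general (ε : ℝ) (hε : 0 < ε)
    (k : ℕ) (hk2 : 2 ≤ k) (hkeven : Even k) :
    ∃ C > (0 : ℝ), ∃ B > (0 : ℝ), ∀ d : ℕ, 2 ≤ d → ∀ N : ℝ, 2 ≤ N →
      ∀ Nf : Fin 40 → ℝ, (∀ j, 1 / 2 ≤ Nf j) →
      (∏ j, Nf j) ≤ N ^ ((2 - 1 / (5 * (k : ℝ) - 2)) - ε) →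
      ∀ a : Fin 40 → ℕ → ℂ,
      (∀ j, a j = (fun _ => (1 : ℂ)) ∨
            a j = (fun n => ((ArithmeticFunction.moebius n : ℤ) : ℂ)) ∨
            a j = (fun n : ℕ => (Real.log n : ℂ))) →
      (∀ j, N ^ (1 / 10 : ℝ) < Nf j →
            a j = (fun _ => (1 : ℂ)) ∨ a j = (fun n : ℕ => (Real.log n : ℂ))) →
      (∫ t : ℝ, sumPrimitive d (fun χ =>
          ‖∏ j : Fin 40, ∑ n ∈ Finset.Ioc ⌊Nf j⌋₊ ⌊2 * Nf j⌋₊,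
              a j n * χ (n : ZMod d) * (n : ℂ) ^ (-(1 / 2 : ℂ) - Complex.I * t)‖) / (t ^ 2 + 1))
        ≤ C * ((N + d) ^ k * N ^ (1 - ((k : ℝ) - 1) * (2 - 1 / (5 * (k : ℝ) - 2)) / 2) / d) *
            Real.log (d * N) ^ (B : ℝ) := by
  have hkR : (2:ℝ) ≤ k := by exact_mod_cast hk2
  have hden : 0 < 5 * (k:ℝ) - 2 := by linarith
  obtain ⟨α, hαd⟩ : ∃ α, α = (2 * (k:ℝ) - 1) / (5 * k - 2) := ⟨_, rfl⟩
  have hα1 : 3 / 8 ≤ α := by rw [hαd, div_le_div_iff₀ (by norm_num) hden]; linarith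
  have hα2 : α < 2 / 5 := by rw [hαd, div_lt_div_iff₀ hden (by norm_num)]; linarith
  have hΘ : 2 - 1 / (5 * (k:ℝ) - 2) = 5 * α := by
    rw [hαd]
    have : 5 * (k:ℝ) - 2 ≠ 0 := hden.ne'
    field_simp
    ring
  obtain ⟨e, hed⟩ : ∃ e, e = min ε (1 / 100) := ⟨_, rfl⟩
  have he0 : 0 < e := by rw [hed]; exact lt_min hε (by norm_num)
  have he1 : e ≤ 1 / 100 := by rw [hed]; exact min_le_right _ _
  have he2 : e ≤ ε := by rw [hed]; exact min_le_left _ _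
  obtain ⟨C, hC0, hC⟩ := core_abs α e hα1 hα2 he0 he1
  refine ⟨C, hC0, 1, one_pos, ?_⟩
  intro d hd N hN Nf hNf hprod a ha hsm
  have : NeZero d := ⟨by omega⟩
  have hdR : (2:ℝ) ≤ d := by exact_mod_cast hd
  have hfin : ({χ : DirichletCharacter ℂ d | χ.IsPrimitive}).Finite := Set.toFinite _
  have hZ2 : ∀ j, max (Nf j) 1 ≤ 2 * Nf j := fun j => max_le (by linarith [hNf j]) (by linarith [hNf j])
  have hmain := hC d hd N hN hfin.toFinset (fun χ hχ => by simpa using hχ) (fun j => max (Nf j) 1)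
    (fun j => le_max_right _ _) ?_
    (fun j χ t => ∑ n ∈ Finset.Ioc ⌊Nf j⌋₊ ⌊2 * Nf j⌋₊,
              a j n * χ (n : ZMod d) * (n : ℂ) ^ (-(1 / 2 : ℂ) - Complex.I * t)) ?_ ?_
  · have hconv : ∀ f : DirichletCharacter ℂ d → ℝ, sumPrimitive d f = ∑ χ ∈ hfin.toFinset, f χ := fun f =>
      finsum_mem_eq_finite_toFinset_sum f hfin
    simp only [hconv]
    refine hmain.trans ?_
    rw [mul_assoc]
    exact mul_le_mul_of_nonneg_left (rhs_bound k hk2 d N hdR hN α hαd) hC0.le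
  · calc ∏ j, max (Nf j) 1 ≤ ∏ j, (2 * Nf j) :=
          Finset.prod_le_prod (fun j _ => by positivity) (fun j _ => hZ2 j)
      _ = 2 ^ 40 * ∏ j, Nf j := by rw [Finset.prod_mul_distrib]; simp
      _ ≤ 2 ^ 40 * N ^ (5 * α - e) := by
        refine mul_le_mul_of_nonneg_left (hprod.trans ?_) (by positivity)
        rw [hΘ]
        exact Real.rpow_le_rpow_of_exponent_le (by linarith) (by linarith)
  · intro j
    have h0 := hNf j
    have hb : ∀ n ∈ Finset.Ioc ⌊Nf j⌋₊ ⌊2 * Nf j⌋₊, 1 ≤ n ∧ max (Nf j) 1 ≤ n ∧ (n:ℝ) ≤ 2 * max (Nf j) 1 := by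
      intro n hn
      rw [Finset.mem_Ioc] at hn
      have h1 : 1 ≤ n := by omega
      have h2 : Nf j < n := (Nat.floor_lt (by linarith)).mp hn.1
      have h3 : (n:ℝ) ≤ 2 * Nf j := (Nat.le_floor_iff (by linarith)).mp hn.2
      have h4 := le_max_left (Nf j) 1
      exact ⟨h1, max_le h2.le (by exact_mod_cast h1), by linarith⟩
    exact ⟨_, a j, hb, fun n hn => coeff_bound (a j) (ha j) n (hb n hn).1 _ (hb n hn).2.2, fun χ t => rfl⟩
  · intro j hj1 hj2
    have hmax : max (Nf j) 1 = Nf j := by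
      rcases le_total (Nf j) 1 with h | h
      · rw [max_eq_right h] at hj1; exact absurd hj1 (lt_irrefl _)
      · exact max_eq_left h
    simp only [hmax] at hj1 hj2 ⊢
    have hlog : 0 ≤ Real.log (2 * Nf j) := Real.log_nonneg (by linarith)
    rcases hsm j hj2 with h | h
    · refine ⟨fun _ => 1, fun _ _ _ => le_rfl, zero_le_one, by simpa using hlog, ?_⟩
      funext χ t
      unfold dpw
      simp only [h, Complex.ofReal_one]
    · refine ⟨fun n => Real.log n, ?_, by simp, ?_, ?_⟩
      · intro x y hxy
        rcases Nat.eq_zero_or_pos x with hx | hx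
        · simp only [hx, Nat.cast_zero, Real.log_zero]
          exact Real.log_natCast_nonneg y
        · exact Real.log_le_log (by exact_mod_cast hx) (by exact_mod_cast hxy)
      · have h1 : (1:ℝ) ≤ ⌊2 * Nf j⌋₊ := by
          exact_mod_cast Nat.le_floor (by push_cast; linarith)
        have h2 := Real.log_le_log (by linarith) (Nat.floor_le (by linarith : 0 ≤ 2 * Nf j))
        linarith
      · funext χ t
        unfold dpw
        simp only [h]
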